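/- arXiv:0812.4105 — 3 statements merged into one kernel-verified Lean document; each statement's English description precedes it below -/
import Mathlib

section
/- Let X = A R U be an elliptical random vector in ℝ^d, d ≥ 2, with A a d×d real matrix and R ~ F a positive random variable independent of U. If F(0) = 0, the upper endpoint x_F of F is 1 or ∞, and F ∈ MDA(Λ, w) for some positive scaling function w, then P(‖X‖ > u √λ_(m)) = (1+o(1)) C_* (Γ(d/2)/Γ(m/2)) (2/(u w(u)))^{(d−m)/2} (1 − F(u)) as u ↑ x_F; that is, the ratio of the two sides tends to 1. -/
open MeasureTheory Filter Topology Matrix ProbabilityTheory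

noncomputable section

/-- The Euclidean norm of a vector in `ℝ^d`. -/
def eNorm {d : ℕ} (x : Fin d → ℝ) : ℝ := Real.sqrt (∑ i, x i ^ 2)

/-- `U` is uniformly distributed on the unit sphere of `ℝ^d`: it takes values in the unit
sphere and its distribution is invariant under orthogonal transformations. -/
def IsUniformOnSphere {Ω : Type*} [MeasurableSpace Ω] (P : Measure Ω) {d : ℕ}
    (U : Ω → Fin d → ℝ) : Prop :=
  Measurable U ∧ (∀ ω, eNorm (U ω) = 1) ∧
    ∀ D : Matrix (Fin d) (Fin d) ℝ, D * Dᵀ = 1 →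
      P.map (fun ω => D.mulVec (U ω)) = P.map U

/-- The density of the Beta distribution with parameters `a, b`. -/
def betaPDF (a b x : ℝ) : ℝ :=
  if 0 < x ∧ x < 1 then
    x ^ (a - 1) * (1 - x) ^ (b - 1) * (Real.Gamma (a + b) / (Real.Gamma a * Real.Gamma b))
  else 0



/-- working data: tail function, domain, filter -/
structure TailData (l : Filter ℝ) (D : Set ℝ) (T w : ℝ → ℝ) : Prop where
  anti : Antitone T
  nonneg : ∀ u, 0 ≤ T u
  one : ∀ u, u ≤ 0 → T u = 1
  wpos : ∀ u, 0 < w u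
  ev : ∀ p : ℝ → Prop, (∀ᶠ u in l, p u) ↔ ∃ a ∈ D, ∀ u ∈ D, a ≤ u → p u
  pos : ∀ u ∈ D, 0 < T u
  mem : ∀ v v', v < v' → 0 < T v' → v ∈ D
  mda : ∀ x : ℝ, Tendsto (fun u => T (u + x / w u) / T u) l (𝓝 (Real.exp (-x)))
  neBot : l.NeBot
  cg : l.IsCountablyGenerated
  evpos : ∀ᶠ u in l, 0 < u

namespace TailData
variable {l : Filter ℝ} {D : Set ℝ} {T w : ℝ → ℝ}

lemma evD (h : TailData l D T w) : ∀ᶠ u in l, u ∈ D := by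
  have h1 : ∀ᶠ u in l, True := by simp
  obtain ⟨a, ha, -⟩ := (h.ev _).1 h1
  exact (h.ev _).2 ⟨a, ha, fun u hu _ => hu⟩

lemma evnext (h : TailData l D T w) (x : ℝ) : ∀ᶠ u in l, u + x / w u ∈ D := by
  have h1 := (h.mda (x+1)).eventually (lt_mem_nhds (Real.exp_pos _))
  filter_upwards [h1, h.evD] with u hu hD
  have hT := h.pos u hD
  have : 0 < T (u + (x+1) / w u) := by
    by_contra hc
    have := div_nonpos_of_nonpos_of_nonneg (not_lt.1 hc) hT.le
    linarith
  refine h.mem _ _ ?_ this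
  have := h.wpos u
  gcongr
  linarith

lemma tend_next (h : TailData l D T w) : Tendsto (fun u => u + 1 / w u) l l := by
  intro s hs
  change ∀ᶠ u in l, u + 1 / w u ∈ s
  obtain ⟨a, ha, hs⟩ := (h.ev (· ∈ s)).1 hs
  have h2 : ∀ᶠ u in l, a ≤ u := (h.ev _).2 ⟨a, ha, fun u _ h => h⟩
  filter_upwards [h.evnext 1, h2] with u hu hau
  refine hs _ hu (hau.trans ?_)
  have := h.wpos u
  have : 0 < 1 / w u := by positivity
  linarith

lemma neglect (h : TailData l D T w) {r : ℝ} (hr : 1 < r) :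
    ∀ᶠ u in l, w u ≤ r * w (u + 1 / w u) := by
  have h1 := ((h.mda 1).comp h.tend_next).mul (h.mda 1)
  have h2 := h.mda (1 + r)
  have h3 : Real.exp (-(1+r)) < Real.exp (-1) * Real.exp (-1) := by
    rw [← Real.exp_add]; apply Real.exp_lt_exp.2; linarith
  filter_upwards [h2.eventually_lt h1 h3, h.evD, h.evnext 1] with u hu hD hD'
  have hT := h.pos _ hD
  have hT' := h.pos _ hD'
  simp only [Function.comp] at hu
  set v := u + 1 / w u with hv
  rw [div_mul_div_cancel₀ hT'.ne', div_lt_div_iff_of_pos_right hT] at hu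
  have h4 := h.anti.reflect_lt hu
  have wu := h.wpos u
  have wv := h.wpos v
  have h5 : 1 / w v < r / w u := by
    have : (1 + r) / w u = 1 / w u + r / w u := by ring
    rw [this] at h4; linarith
  rw [div_lt_div_iff₀ wv wu] at h5
  linarith

lemma ratio (h : TailData l D T w) {q : ℝ} (hq : Real.exp (-1) < q) :
    ∀ᶠ u in l, T (u + 1 / w u) ≤ q * T u := by
  filter_upwards [(h.mda 1).eventually (gt_mem_nhds hq), h.evD] with u hu hD
  have hT := h.pos _ hD
  rw [div_lt_iff₀ hT] at hu
  exact hu.le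

lemma decay (h : TailData l D T w) {p : ℝ} (hp : 0 < p) :
    ∃ C b : ℝ, 0 < C ∧ 0 < b ∧ ∀ᶠ u in l, ∀ t, 0 ≤ t →
      T (u + t / w u) ≤ C * (1 + b * t) ^ (-p) * T u := by
  obtain ⟨r, hr1, hrp⟩ : ∃ r : ℝ, 1 < r ∧ r ^ (-p) = Real.exp (-(1/2)) := by
    refine ⟨Real.exp (1 / (2 * p)), by rw [Real.one_lt_exp_iff]; positivity, ?_⟩
    rw [← Real.exp_mul]; congr 1; field_simp
  have hr0 : 0 < r := by linarith
  have hq : Real.exp (-1) < r ^ (-p) := by rw [hrp]; apply Real.exp_lt_exp.2; norm_num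
  obtain ⟨a, haD, ha⟩ := (h.ev _).1 ((h.neglect hr1).and ((h.ratio hq).and (h.evnext 1)))
  refine ⟨r ^ p, r - 1, by positivity, by linarith, (h.ev _).2 ⟨a, haD, ?_⟩⟩
  have key : ∀ n : ℕ, ∀ u ∈ D, a ≤ u → ∀ t : ℝ, 0 ≤ t → t ≤ n + 1 →
      T (u + t / w u) ≤ r ^ p * (1 + (r - 1) * t) ^ (-p) * T u := by
    have base : ∀ u ∈ D, ∀ t, 0 ≤ t → t ≤ 1 →
      T (u + t / w u) ≤ r ^ p * (1 + (r - 1) * t) ^ (-p) * T u := by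
      intro u hu t ht ht1
      have wu := h.wpos u
      have h1 : T (u + t / w u) ≤ T u := h.anti (by have : 0 ≤ t / w u := by positivity
                                                    linarith)
      have h2 : 1 ≤ r ^ p * (1 + (r - 1) * t) ^ (-p) := by
        have h3 : r ^ (-p) ≤ (1 + (r - 1) * t) ^ (-p) := by
          apply Real.rpow_le_rpow_of_nonpos
          · nlinarith
          · nlinarith
          · linarith
        calc 1 = r ^ p * r ^ (-p) := by rw [← Real.rpow_add hr0]; simp
          _ ≤ _ := by gcongr
      have := h.pos u hu
      nlinarith
    intro n
    induction n with
    | zero => intro u hu _ t ht ht1; exact base u hu t ht (by simpa using ht1)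
    | succ n ih =>
      intro u hu hau t ht htn
      rcases le_or_gt t 1 with ht1 | ht1
      · exact base u hu t ht ht1
      obtain ⟨n1, n2, n3⟩ := ha u hu hau
      have wu := h.wpos u
      set v := u + 1 / w u with hv
      have wv := h.wpos v
      have hav : a ≤ v := by
        have : 0 < 1 / w u := by positivity
        linarith
      set s := (t - 1) / r with hs
      have hs0 : 0 ≤ s := div_nonneg (by linarith) hr0.le
      have hts : t = 1 + r * s := by rw [hs]; field_simp; ring
      have hsn : s ≤ n + 1 := by
        have : s ≤ r * s := by nlinarith
        push_cast at htn
        linarith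
      have h1 := ih v n3 hav s hs0 hsn
      have h2 : T (u + t / w u) ≤ T (v + s / w v) := by
        apply h.anti
        have : s / w v ≤ r * s / w u := by
          rw [div_le_div_iff₀ wv wu]
          nlinarith
        have h5 : t / w u = 1 / w u + r * s / w u := by rw [hts]; ring
        rw [h5, hv]; linarith
      have hb : 0 < 1 + (r - 1) * s := by nlinarith
      have h6 : (1 + (r-1) * s) ^ (-p) * r ^ (-p) ≤ (1 + (r - 1) * t) ^ (-p) := by
        rw [← Real.mul_rpow hb.le hr0.le]
        apply Real.rpow_le_rpow_of_nonpos
        · nlinarith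
        · rw [hts]; nlinarith
        · linarith
      calc T (u + t / w u) ≤ _ := h2
        _ ≤ _ := h1
        _ ≤ r ^ p * (1 + (r - 1) * s) ^ (-p) * (r ^ (-p) * T u) := by gcongr
        _ = r ^ p * ((1 + (r - 1) * s) ^ (-p) * r ^ (-p)) * T u := by ring
        _ ≤ _ := by
          have := h.pos u hu
          gcongr
  intro u hu hau t ht
  obtain ⟨n, hn⟩ := exists_nat_ge t
  exact key n u hu hau t ht (by linarith)

lemma tail_zero (h : TailData l D T w) : Tendsto T l (𝓝 0) := by
  set q : ℝ := Real.exp (-(1/2)) with hq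
  have hq1 : Real.exp (-1) < q := by apply Real.exp_lt_exp.2; norm_num
  obtain ⟨a, haD, ha⟩ := (h.ev _).1 ((h.ratio hq1).and (h.evnext 1))
  have key : ∀ n : ℕ, ∃ u ∈ D, a ≤ u ∧ T u ≤ q ^ n * T a := by
    intro n
    induction n with
    | zero => exact ⟨a, haD, le_rfl, by simp⟩
    | succ n ih =>
      obtain ⟨u, hu, hau, hT⟩ := ih
      obtain ⟨h1, h2⟩ := ha u hu hau
      refine ⟨_, h2, ?_, h1.trans ?_⟩
      · have := h.wpos u
        have : 0 < 1 / w u := by positivity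
        linarith
      · have : 0 < q := Real.exp_pos _
        rw [pow_succ']; nlinarith
  have hlim : Tendsto (fun n : ℕ => q ^ n * T a) atTop (𝓝 (0 * T a)) := by
    apply Tendsto.mul_const
    apply tendsto_pow_atTop_nhds_zero_of_lt_one (Real.exp_pos _).le
    rw [Real.exp_lt_one_iff]; norm_num
  rw [zero_mul] at hlim
  rw [Metric.tendsto_nhds]
  intro e he
  obtain ⟨n, hn⟩ := (hlim.eventually (gt_mem_nhds he)).exists
  obtain ⟨u, hu, hau, hT⟩ := key n
  refine (h.ev _).2 ⟨u, hu, fun v _ huv => ?_⟩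
  rw [Real.dist_eq, sub_zero, abs_of_nonneg (h.nonneg v)]
  exact (h.anti huv).trans_lt (hT.trans_lt hn)

lemma uw_top (h : TailData l D T w) : Tendsto (fun u => u * w u) l atTop := by
  rw [tendsto_atTop]
  intro M
  have h1 := (h.mda (-M)).eventually (gt_mem_nhds (lt_add_one _))
  set B := Real.exp (- -M) + 1 with hB
  have hBp : 0 < B := by positivity
  have h2 := h.tail_zero.eventually (gt_mem_nhds (by positivity : (0:ℝ) < 1 / B))
  filter_upwards [h1, h2, h.evD] with u h1 h2 h3
  by_contra hc
  push Not at hc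
  have wu := h.wpos u
  have h4 : u + -M / w u ≤ 0 := by
    have : u + -M / w u = (u * w u - M) / w u := by field_simp; ring
    rw [this]
    exact div_nonpos_of_nonpos_of_nonneg (by linarith) wu.le
  rw [h.one _ h4] at h1
  have hT := h.pos u h3
  rw [div_lt_iff₀ hT] at h1
  rw [lt_div_iff₀ hBp] at h2
  linarith

lemma eps_zero (h : TailData l D T w) : Tendsto (fun u => 2 / (u * w u)) l (𝓝 0) :=
  h.uw_top.const_div_atTop 2

end TailData


namespace TailData
variable {l : Filter ℝ} {D : Set ℝ} {T w : ℝ → ℝ}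

lemma integrable_bound {p b : ℝ} (hp : 0 < p) (hb : 0 < b) :
    IntegrableOn (fun t : ℝ => t ^ (p - 1) * (1 + b * t) ^ (-(p + 1))) (Set.Ioi 0) := by
  have hmeas : Measurable (fun t : ℝ => t ^ (p - 1) * (1 + b * t) ^ (-(p + 1))) := by fun_prop
  rw [← Set.Ioc_union_Ioi_eq_Ioi (zero_le_one (α := ℝ))]
  apply IntegrableOn.union
  · have h1 : IntegrableOn (fun t : ℝ => t ^ (p - 1)) (Set.Ioc 0 1) := by
      rw [← intervalIntegrable_iff_integrableOn_Ioc_of_le zero_le_one]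
      exact intervalIntegral.intervalIntegrable_rpow' (by linarith)
    refine h1.mono' hmeas.aestronglyMeasurable ?_
    refine (ae_restrict_iff' measurableSet_Ioc).2 (ae_of_all _ fun t ht => ?_)
    have ht0 := ht.1
    rw [Real.norm_of_nonneg (by positivity)]
    have : (1 + b * t) ^ (-(p + 1)) ≤ 1 :=
      Real.rpow_le_one_of_one_le_of_nonpos (by nlinarith) (by linarith)
    have h3 : 0 ≤ t ^ (p - 1) := by positivity
    nlinarith
  · have h1 : IntegrableOn (fun t : ℝ => b ^ (-(p+1)) * t ^ (-2 : ℝ)) (Set.Ioi 1) :=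
      (integrableOn_Ioi_rpow_of_lt (by norm_num) zero_lt_one).const_mul _
    refine h1.mono' hmeas.aestronglyMeasurable ?_
    refine (ae_restrict_iff' measurableSet_Ioi).2 (ae_of_all _ fun t ht => ?_)
    have ht0 : 0 < t := zero_lt_one.trans ht
    rw [Real.norm_of_nonneg (by positivity)]
    have h2 : (1 + b * t) ^ (-(p + 1)) ≤ b ^ (-(p+1)) * t ^ (-(p+1)) := by
      rw [← Real.mul_rpow hb.le ht0.le]
      exact Real.rpow_le_rpow_of_nonpos (by positivity) (by linarith) (by linarith)
    calc t ^ (p - 1) * (1 + b * t) ^ (-(p + 1)) ≤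
        t ^ (p - 1) * (b ^ (-(p+1)) * t ^ (-(p+1))) := by gcongr
      _ = b ^ (-(p+1)) * (t ^ (p-1) * t ^ (-(p+1))) := by ring
      _ = _ := by rw [← Real.rpow_add ht0]; ring_nf

variable {Ω : Type*} [MeasurableSpace Ω] {P : Measure Ω} [IsProbabilityMeasure P] {R : Ω → ℝ}

lemma moment (h : TailData l D T w) (hR : Measurable R) (hRpos : ∀ ω, 0 < R ω)
    (hT : ∀ u, T u = P.real {ω | u < R ω}) {p : ℝ} (hp : 0 < p) :
    Tendsto (fun u => (∫ ω, (max (1 - u ^ 2 / R ω ^ 2) 0) ^ p ∂P) /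
      ((2 / (u * w u)) ^ p * T u)) l (𝓝 (Real.Gamma (p + 1))) := by
  have := h.cg
  -- the normalised tail
  set τ : ℝ → ℝ → ℝ := fun u t => P.real {ω | t < max (1 - u ^ 2 / R ω ^ 2) 0 / (2 / (u * w u))}
    with hτ
  have τanti : ∀ u, Antitone (τ u) := by
    intro u s t hst
    exact measureReal_mono (fun ω hω => lt_of_le_of_lt hst hω)
  have fmeas : ∀ u, Measurable (fun ω => max (1 - u ^ 2 / R ω ^ 2) 0 / (2 / (u * w u))) := by
    intro u; fun_prop
  -- upper bound
  have hup : ∀ u, 0 < u → ∀ t, 0 ≤ t → τ u t ≤ T (u + t / w u) := by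
    intro u hu t ht
    rw [hT]
    apply measureReal_mono _ (measure_ne_top _ _)
    intro ω hω
    have wu := h.wpos u
    have Rp := hRpos ω
    simp only [Set.mem_ofPred_eq] at hω ⊢
    rw [lt_div_iff₀ (by positivity)] at hω
    have h0 : 0 ≤ t * (2 / (u * w u)) := by positivity
    have h1 : t * (2 / (u * w u)) < 1 - u ^ 2 / R ω ^ 2 := by
      rcases lt_max_iff.1 hω with h | h
      · exact h
      · linarith
    have h2 : u < R ω := by
      have : u ^ 2 / R ω ^ 2 < 1 := by linarith
      rw [div_lt_one (by positivity)] at this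
      exact lt_of_pow_lt_pow_left₀ 2 Rp.le this
    have h3 : 1 - u ^ 2 / R ω ^ 2 ≤ 2 * (R ω - u) / u := by
      have : 2 * (R ω - u) / u - (1 - u ^ 2 / R ω ^ 2) =
        (R ω - u) * (2 * R ω ^ 2 - u * R ω - u ^ 2) / (u * R ω ^ 2) := by
          field_simp; ring
      have h4 : 0 ≤ (R ω - u) * (2 * R ω ^ 2 - u * R ω - u ^ 2) / (u * R ω ^ 2) := by
        apply div_nonneg _ (by positivity)
        apply mul_nonneg (by linarith); nlinarith
      linarith
    have h5 : t * (2 / (u * w u)) = 2 * (t / w u) / u := by field_simp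
    rw [h5] at h1
    have h6 := h1.trans_le h3
    rw [div_lt_div_iff_of_pos_right hu] at h6
    linarith
  -- lower bound
  have hlow : ∀ t, 0 < t → ∀ δ, 0 < δ → ∀ᶠ u in l, T (u + t * (1 + δ) / w u) ≤ τ u t := by
    intro t ht δ hδ
    have e1 : Tendsto (fun u => t * (2 / (u * w u))) l (𝓝 (t * 0)) := h.eps_zero.const_mul t
    rw [mul_zero] at e1
    have e2 := e1.eventually (gt_mem_nhds (by positivity : (0:ℝ) < δ / (1 + δ)))
    filter_upwards [e2, h.evpos] with u e2 hu
    rw [hT]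
    apply measureReal_mono _ (measure_ne_top _ _)
    intro ω hω
    have wu := h.wpos u
    have Rp := hRpos ω
    simp only [Set.mem_ofPred_eq] at hω ⊢
    rw [lt_div_iff₀ (by positivity)]
    apply lt_max_of_lt_left
    have hx0 : 0 < t * (2 / (u * w u)) := by positivity
    have h5 : t * (1 + δ) / w u = u * (t * (2 / (u * w u)) / 2 * (1 + δ)) := by field_simp
    rw [h5] at hω
    set x := t * (2 / (u * w u)) with hx
    rw [lt_div_iff₀ (by positivity)] at e2
    have h6 : u ^ 2 / R ω ^ 2 < 1 - x := by
      rw [div_lt_iff₀ (by positivity)]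
      have hx1 : 0 < 1 - x := by nlinarith
      have h7 : (u * (1 + x / 2 * (1 + δ))) ^ 2 < R ω ^ 2 := by
        apply pow_lt_pow_left₀ _ (by positivity) two_ne_zero
        linarith
      have h8 : 1 ≤ (1 - x) * (1 + x / 2 * (1 + δ)) ^ 2 := by
        have : 1 + x * (1 + δ) ≤ (1 + x / 2 * (1 + δ)) ^ 2 := by
          nlinarith [sq_nonneg (x / 2 * (1 + δ))]
        have h9 : 1 ≤ (1 - x) * (1 + x * (1 + δ)) := by nlinarith
        nlinarith
      calc u ^ 2 = u ^ 2 * 1 := by ring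
        _ ≤ u ^ 2 * ((1 - x) * (1 + x / 2 * (1 + δ)) ^ 2) := by gcongr
        _ = (1 - x) * (u * (1 + x / 2 * (1 + δ))) ^ 2 := by ring
        _ < _ := by gcongr
    linarith
  -- pointwise limit
  have hlim : ∀ t, 0 < t → Tendsto (fun u => τ u t / T u) l (𝓝 (Real.exp (-t))) := by
    intro t ht
    rw [tendsto_order]
    constructor
    · intro a ha
      obtain ⟨δ, hδ, hδa⟩ : ∃ δ, 0 < δ ∧ a < Real.exp (-(t * (1 + δ))) := by
        have hc : Tendsto (fun δ : ℝ => Real.exp (-(t * (1 + δ)))) (𝓝[>] 0) (𝓝 (Real.exp (-(t * (1 + 0))))) := by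
          apply Tendsto.mono_left _ nhdsWithin_le_nhds
          apply Continuous.tendsto
          fun_prop
        simp only [add_zero, mul_one] at hc
        obtain ⟨δ, h1, h2⟩ := ((hc.eventually (lt_mem_nhds ha)).and self_mem_nhdsWithin).exists
        exact ⟨δ, h2, h1⟩
      filter_upwards [(h.mda (t * (1 + δ))).eventually (lt_mem_nhds hδa), hlow t ht δ hδ, h.evD]
        with u h1 h2 h3
      have := h.pos u h3
      exact h1.trans_le (by gcongr)
    · intro a ha
      filter_upwards [(h.mda t).eventually (gt_mem_nhds ha), h.evpos, h.evD] with u h1 h2 h3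
      have := h.pos u h3
      refine lt_of_le_of_lt ?_ h1
      have := hup u h2 t ht.le
      gcongr
  -- dominated convergence
  obtain ⟨C, b, hC, hb, hdec⟩ := h.decay (p := p + 1) (by linarith)
  have hDCT : Tendsto (fun u => ∫ t in Set.Ioi (0:ℝ), τ u t / T u * t ^ (p - 1)) l
      (𝓝 (∫ t in Set.Ioi (0:ℝ), Real.exp (-t) * t ^ (p - 1))) := by
    apply tendsto_integral_filter_of_dominated_convergence
      (fun t => C * (t ^ (p - 1) * (1 + b * t) ^ (-(p + 1))))
    · refine Eventually.of_forall fun u => ?_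
      have := (τanti u).measurable
      exact Measurable.aestronglyMeasurable (by fun_prop)
    · filter_upwards [hdec, h.evpos, h.evD] with u h1 h2 h3
      refine (ae_restrict_iff' measurableSet_Ioi).2 (ae_of_all _ fun t ht => ?_)
      have ht0 : 0 < t := ht
      have Tp := h.pos u h3
      have τ0 : 0 ≤ τ u t := measureReal_nonneg
      rw [Real.norm_of_nonneg (by positivity)]
      have h4 : τ u t / T u ≤ C * (1 + b * t) ^ (-(p+1)) := by
        rw [div_le_iff₀ Tp]
        exact (hup u h2 t ht0.le).trans (h1 t ht0.le)
      calc τ u t / T u * t ^ (p - 1) ≤ C * (1 + b * t) ^ (-(p+1)) * t ^ (p - 1) := by gcongr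
        _ = _ := by ring
    · exact (integrable_bound hp hb).const_mul C
    · refine (ae_restrict_iff' measurableSet_Ioi).2 (ae_of_all _ fun t ht => ?_)
      exact (hlim t ht).mul_const _
  rw [← Real.Gamma_eq_integral hp] at hDCT
  have hfin := hDCT.const_mul p
  rw [← Real.Gamma_add_one hp.ne'] at hfin
  refine hfin.congr' ?_
  filter_upwards [h.evpos, h.evD] with u hu hD
  have wu := h.wpos u
  have Tp := h.pos u hD
  have hε : 0 < 2 / (u * w u) := by positivity
  have hlc := lintegral_rpow_eq_lintegral_meas_lt_mul P
    (f := fun ω => max (1 - u ^ 2 / R ω ^ 2) 0 / (2 / (u * w u)))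
    (ae_of_all _ fun ω => by positivity) (fmeas u).aemeasurable hp
  have e1 : ∫ ω, (max (1 - u ^ 2 / R ω ^ 2) 0 / (2 / (u * w u))) ^ p ∂P =
      p * ∫ t in Set.Ioi (0:ℝ), τ u t * t ^ (p - 1) := by
    rw [integral_eq_lintegral_of_nonneg_ae (ae_of_all _ fun ω => by positivity)
      (Measurable.aestronglyMeasurable (by fun_prop)), hlc, ENNReal.toReal_mul,
      ENNReal.toReal_ofReal hp.le]
    congr 1
    rw [integral_eq_lintegral_of_nonneg_ae]
    · congr 1
      refine setLIntegral_congr_fun measurableSet_Ioi fun t ht => ?_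
      simp only [hτ]
      rw [ENNReal.ofReal_mul measureReal_nonneg, ofReal_measureReal]
    · refine (ae_restrict_iff' measurableSet_Ioi).2 (ae_of_all _ fun t ht => ?_)
      have ht0 : 0 < t := ht
      have τ0 : 0 ≤ τ u t := measureReal_nonneg
      simp only [Pi.zero_apply]
      positivity
    · have := (τanti u).measurable
      exact Measurable.aestronglyMeasurable (by fun_prop)
  have e2 : ∫ ω, (max (1 - u ^ 2 / R ω ^ 2) 0 / (2 / (u * w u))) ^ p ∂P =
      (∫ ω, (max (1 - u ^ 2 / R ω ^ 2) 0) ^ p ∂P) / (2 / (u * w u)) ^ p := by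
    rw [← integral_div]
    congr 1; ext ω
    rw [Real.div_rpow (le_max_right _ _) hε.le]
  rw [← div_div, ← e2, e1, mul_div_assoc, ← integral_div]
  congr 2; ext t; ring

/-- General Abelian statement. -/
lemma abelian (h : TailData l D T w) (hR : Measurable R) (hRpos : ∀ ω, 0 < R ω)
    (hT : ∀ u, T u = P.real {ω | u < R ω}) {p K : ℝ} (hp : 0 < p) (hK : 0 ≤ K)
    (G : ℝ → ℝ) (Gmono : Monotone G) (G0 : ∀ x, 0 ≤ G x) (G1 : ∀ x, G x ≤ 1)
    (Gz : ∀ x, x ≤ 0 → G x = 0)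
    (hG : Tendsto (fun q => G q / q ^ p) (𝓝[>] 0) (𝓝 K)) :
    Tendsto (fun u => (∫ ω, G (1 - u ^ 2 / R ω ^ 2) ∂P) /
      ((2 / (u * w u)) ^ p * T u)) l (𝓝 (K * Real.Gamma (p + 1))) := by
  have Mp := h.moment hR hRpos hT hp
  have Mp1 := h.moment hR hRpos hT (p := p + 1) (by linarith)
  rw [Metric.tendsto_nhds]
  intro e he
  set Γ := Real.Gamma (p + 1) with hΓ
  have Γpos : 0 < Γ := Real.Gamma_pos_of_pos (by linarith)
  set Γ' := Real.Gamma (p + 1 + 1) with hΓ'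
  have Γ'pos : 0 < Γ' := Real.Gamma_pos_of_pos (by linarith)
  -- η bound
  set η := e / (4 * (Γ + 1)) with hη
  have ηpos : 0 < η := by positivity
  obtain ⟨C, hC, hGC⟩ : ∃ C : ℝ, 0 < C ∧ ∀ x, x ≤ 1 →
      |G x - K * (max x 0) ^ p| ≤ η * (max x 0) ^ p + C * (max x 0) ^ (p + 1) := by
    obtain ⟨q0, hq0, hq⟩ : ∃ q0 : ℝ, 0 < q0 ∧ ∀ q, 0 < q → q < q0 → |G q / q ^ p - K| < η := by
      have := Metric.tendsto_nhds.1 hG η ηpos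
      obtain ⟨q0, h1, h2⟩ := (mem_nhdsGT_iff_exists_Ioo_subset).1 this
      exact ⟨q0, h1, fun q a b => h2 ⟨a, b⟩⟩
    refine ⟨(1 + K) / q0 ^ (p + 1), by positivity, fun x hx => ?_⟩
    rcases le_or_gt x 0 with hx0 | hx0
    · rw [max_eq_right hx0, Gz x hx0, Real.zero_rpow hp.ne', Real.zero_rpow (by linarith)]
      simp
    rw [max_eq_left hx0.le]
    have xp : 0 < x ^ p := by positivity
    rcases lt_or_ge x q0 with hxq | hxq
    · have h1 := hq x hx0 hxq
      have h2 : G x - K * x ^ p = (G x / x ^ p - K) * x ^ p := by field_simp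
      rw [h2, abs_mul, abs_of_pos xp]
      have : 0 ≤ (1 + K) / q0 ^ (p + 1) * x ^ (p + 1) := by positivity
      nlinarith
    · have h1 : |G x - K * x ^ p| ≤ 1 + K := by
        have : x ^ p ≤ 1 := Real.rpow_le_one hx0.le hx hp.le
        rw [abs_le]
        constructor <;> nlinarith [G0 x, G1 x]
      have h2 : 1 + K ≤ (1 + K) / q0 ^ (p + 1) * x ^ (p + 1) := by
        rw [div_mul_eq_mul_div, le_div_iff₀ (by positivity)]
        gcongr
      have : 0 ≤ η * x ^ p := by positivity
      linarith
  have ev1 := Metric.tendsto_nhds.1 (Mp.const_mul K) (e / 4) (by positivity)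
  have ev2 := Mp.eventually (gt_mem_nhds (lt_add_one Γ))
  have ev3 : Tendsto (fun u => C * (2 / (u * w u)) * ((∫ ω, (max (1 - u ^ 2 / R ω ^ 2) 0) ^ (p+1) ∂P) /
      ((2 / (u * w u)) ^ (p+1) * T u))) l (𝓝 (C * 0 * Γ')) := (h.eps_zero.const_mul C).mul Mp1
  rw [mul_zero, zero_mul] at ev3
  have ev3 := ev3.eventually (gt_mem_nhds (by positivity : 0 < e / 4))
  filter_upwards [ev1, ev2, ev3, h.evpos, h.evD] with u h1 h2 h3 hu hD
  have wu := h.wpos u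
  have Tp := h.pos u hD
  have hε : 0 < 2 / (u * w u) := by positivity
  set ε := 2 / (u * w u) with hεd
  have bnd : ∀ ω, max (1 - u ^ 2 / R ω ^ 2) 0 ≤ 1 := fun ω => by
    apply max_le _ zero_le_one
    have : 0 ≤ u ^ 2 / R ω ^ 2 := by positivity
    linarith
  have intp : ∀ s : ℝ, 0 < s → Integrable (fun ω => (max (1 - u ^ 2 / R ω ^ 2) 0) ^ s) P := by
    intro s hs
    refine Integrable.of_bound (Measurable.aestronglyMeasurable (by fun_prop)) 1
      (ae_of_all _ fun ω => ?_)
    rw [Real.norm_of_nonneg (by positivity)]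
    exact Real.rpow_le_one (le_max_right _ _) (bnd ω) hs.le
  have intG : Integrable (fun ω => G (1 - u ^ 2 / R ω ^ 2)) P := by
    refine Integrable.of_bound (Measurable.aestronglyMeasurable
      (Gmono.measurable.comp (by fun_prop))) 1 (ae_of_all _ fun ω => ?_)
    rw [Real.norm_of_nonneg (G0 _)]
    exact G1 _
  have main : |(∫ ω, G (1 - u ^ 2 / R ω ^ 2) ∂P) - K * ∫ ω, (max (1 - u ^ 2 / R ω ^ 2) 0) ^ p ∂P| ≤
      η * (∫ ω, (max (1 - u ^ 2 / R ω ^ 2) 0) ^ p ∂P) +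
      C * ∫ ω, (max (1 - u ^ 2 / R ω ^ 2) 0) ^ (p + 1) ∂P := by
    rw [← integral_const_mul, ← integral_const_mul, ← integral_const_mul,
      ← integral_sub intG ((intp p hp).const_mul K), ← integral_add ((intp p hp).const_mul η)
        ((intp (p+1) (by linarith)).const_mul C)]
    refine (abs_integral_le_integral_abs).trans ?_
    apply integral_mono_of_nonneg
    · exact ae_of_all _ fun ω => abs_nonneg _
    · exact ((intp p hp).const_mul η).add ((intp (p+1) (by linarith)).const_mul C)
    · refine ae_of_all _ fun ω => hGC _ ?_
      exact (le_max_left _ _).trans (bnd ω)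
  set I0 := ∫ ω, G (1 - u ^ 2 / R ω ^ 2) ∂P
  set I1 := ∫ ω, (max (1 - u ^ 2 / R ω ^ 2) 0) ^ p ∂P
  set I2 := ∫ ω, (max (1 - u ^ 2 / R ω ^ 2) 0) ^ (p + 1) ∂P
  have hd : 0 < ε ^ p * T u := by positivity
  have main2 : |I0 / (ε ^ p * T u) - K * (I1 / (ε ^ p * T u))| ≤
      η * (I1 / (ε ^ p * T u)) + C * ε * (I2 / (ε ^ (p + 1) * T u)) := by
    have e1 : I0 / (ε ^ p * T u) - K * (I1 / (ε ^ p * T u)) = (I0 - K * I1) / (ε ^ p * T u) := by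
      ring
    have e2 : η * (I1 / (ε ^ p * T u)) + C * ε * (I2 / (ε ^ (p + 1) * T u)) =
        (η * I1 + C * I2) / (ε ^ p * T u) := by
      rw [Real.rpow_add hε, Real.rpow_one]
      field_simp
    rw [e1, e2, abs_div, abs_of_pos hd]
    gcongr
  have h4 : η * (I1 / (ε ^ p * T u)) ≤ e / 4 := by
    calc η * (I1 / (ε ^ p * T u)) ≤ η * (Γ + 1) := by gcongr
      _ = e / 4 := by rw [hη]; field_simp
  rw [Real.dist_eq] at h1 ⊢
  rw [abs_lt] at h1 ⊢
  rw [abs_le] at main2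
  constructor <;> linarith [h1.1, h1.2, main2.1, main2.2]

end TailData


namespace EllGauss

lemma gauss_integrable {ι : Type*} [Fintype ι] {b : ℝ} (hb : 0 < b) :
    Integrable (fun z : ι → ℝ => Real.exp (-b * ∑ i, z i ^ 2)) := by
  have h := Integrable.fintype_prod (ι := ι) (μ := fun _ => (volume : Measure ℝ))
    (f := fun _ (x : ℝ) => Real.exp (-b * x ^ 2)) (fun i => integrable_exp_neg_mul_sq hb)
  refine h.congr (ae_of_all _ fun z => ?_)
  simp only
  rw [← Real.exp_sum, Finset.mul_sum]

lemma ball_vol {J : Type*} [Fintype J] [Nonempty J] {r : ℝ} (hr : 0 ≤ r) :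
    (volume : Measure (J → ℝ)).real {y | ∑ j, y j ^ 2 ≤ r ^ 2} =
      r ^ Fintype.card J * (√Real.pi ^ Fintype.card J / Real.Gamma ((Fintype.card J : ℝ) / 2 + 1)) := by
  have h1 := EuclideanSpace.volume_closedBall J 0 r
  have h2 := (PiLp.volume_preserving_toLp J).measure_preimage
    (s := Metric.closedBall (0 : EuclideanSpace ℝ J) r) measurableSet_closedBall.nullMeasurableSet
  have h3 : (WithLp.toLp 2) ⁻¹' (Metric.closedBall (0 : EuclideanSpace ℝ J) r) =
      {y : J → ℝ | ∑ j, y j ^ 2 ≤ r ^ 2} := by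
    ext y
    simp only [Set.mem_preimage, mem_closedBall_zero_iff, Set.mem_ofPred_eq]
    rw [← EuclideanSpace.real_norm_sq_eq (WithLp.toLp 2 y), pow_le_pow_iff_left₀ (norm_nonneg _) hr two_ne_zero]
  rw [← h3, measureReal_def, h2, h1, ENNReal.toReal_mul, ENNReal.toReal_pow, ENNReal.toReal_ofReal hr,
    ENNReal.toReal_ofReal]
  have : 0 < Real.Gamma ((Fintype.card J : ℝ) / 2 + 1) := Real.Gamma_pos_of_pos (by positivity)
  positivity

lemma radial {I : Type*} [Fintype I] [Nonempty I] (k : ℕ) :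
    ∫ x : I → ℝ, Real.exp (-∑ i, x i ^ 2) * (√(∑ i, x i ^ 2)) ^ k =
      √Real.pi ^ Fintype.card I * Real.Gamma (((Fintype.card I : ℝ) + k) / 2) /
        Real.Gamma ((Fintype.card I : ℝ) / 2) := by
  set m := Fintype.card I with hm
  have mpos : 0 < m := Fintype.card_pos
  have h1 := (PiLp.volume_preserving_toLp I).integral_comp
    (MeasurableEquiv.toLp 2 (I → ℝ)).measurableEmbedding
    (fun x : EuclideanSpace ℝ I => Real.exp (-‖x‖ ^ 2) * ‖x‖ ^ k)
  have h2 : ∫ x : I → ℝ, Real.exp (-∑ i, x i ^ 2) * (√(∑ i, x i ^ 2)) ^ k =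
      ∫ x : EuclideanSpace ℝ I, Real.exp (-‖x‖ ^ 2) * ‖x‖ ^ k := by
    rw [← h1]
    congr 1; ext x
    rw [EuclideanSpace.real_norm_sq_eq, EuclideanSpace.norm_eq]
    simp
  have h3 := integral_fun_norm_addHaar (volume : Measure (EuclideanSpace ℝ I))
    (fun y : ℝ => Real.exp (-y ^ 2) * y ^ k)
  have h4 : ∫ y in Set.Ioi (0:ℝ), y ^ (m - 1) • (Real.exp (-y ^ 2) * y ^ k) =
      1 / 2 * Real.Gamma (((m : ℝ) + k) / 2) := by
    have h5 := integral_rpow_mul_exp_neg_rpow (p := 2) (q := (m : ℝ) - 1 + k) (by norm_num) (by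
      have : (0:ℝ) < m := by exact_mod_cast mpos
      have : (0:ℝ) ≤ k := by positivity
      linarith)
    have h6 : (m:ℝ) - 1 + k + 1 = m + k := by ring
    rw [h6] at h5
    rw [← h5]
    refine setIntegral_congr_fun measurableSet_Ioi fun y hy => ?_
    have hy0 : 0 < y := hy
    simp only [smul_eq_mul]
    rw [Real.rpow_add hy0, Real.rpow_natCast, show (m:ℝ) - 1 = ((m - 1 : ℕ) : ℝ) by
      rw [Nat.cast_sub mpos]; simp, Real.rpow_natCast, Real.rpow_two]
    ring
  have h7 : (volume : Measure (EuclideanSpace ℝ I)).real (Metric.ball 0 1) =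
      √Real.pi ^ m / Real.Gamma ((m : ℝ) / 2 + 1) := by
    rw [measureReal_def, EuclideanSpace.volume_ball]
    have : 0 < Real.Gamma ((m : ℝ) / 2 + 1) := Real.Gamma_pos_of_pos (by positivity)
    simp only [ENNReal.ofReal_one, one_pow, one_mul]
    rw [ENNReal.toReal_ofReal]
    positivity
  rw [h2, h3, h7, finrank_euclideanSpace, ← hm, h4]
  have mp : (0:ℝ) < m := by exact_mod_cast mpos
  rw [Real.Gamma_add_one (by positivity)]
  have := Real.Gamma_pos_of_pos (half_pos mp)
  simp only [nsmul_eq_mul, smul_eq_mul]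
  field_simp

variable {ι : Type*} [Fintype ι] (p : ι → Prop) [DecidablePred p]

/-- sum of squares over the coordinates satisfying the predicate -/
def sq (z : ι → ℝ) : ℝ := ∑ i, if p i then z i ^ 2 else 0

lemma sq_nonneg' (z : ι → ℝ) : 0 ≤ sq p z :=
  Finset.sum_nonneg fun i _ => by split_ifs <;> positivity

lemma sq_add (z : ι → ℝ) : sq p z + sq (fun i => ¬ p i) z = ∑ i, z i ^ 2 := by
  unfold sq
  rw [← Finset.sum_add_distrib]
  refine Finset.sum_congr rfl fun i _ => ?_
  by_cases h : p i <;> simp [h]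

lemma sq_sub (z : ι → ℝ) : sq p z = ∑ i : {i // p i}, z i ^ 2 := by
  unfold sq
  rw [← Finset.sum_filter]
  exact Finset.sum_subtype _ (by simp) _

@[fun_prop]
lemma sq_cont : Continuous (sq p) := by
  unfold sq
  refine continuous_finsetSum _ fun i _ => ?_
  split_ifs <;> fun_prop

/-- the limiting integrand -/
lemma cone_integral [Nonempty {i // p i}] [Nonempty {i // ¬ p i}] :
    ∫ z : ι → ℝ, (if sq (fun i => ¬ p i) z ≤ sq p z then Real.exp (-sq p z) else 0) =
      √Real.pi ^ Fintype.card ι * Real.Gamma ((Fintype.card ι : ℝ) / 2) /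
        (Real.Gamma ((Fintype.card {i // p i} : ℝ) / 2) *
         Real.Gamma ((Fintype.card {i // ¬ p i} : ℝ) / 2 + 1)) := by
  set f : ({i // p i} → ℝ) × ({i // ¬ p i} → ℝ) → ℝ := fun xy =>
    if ∑ j, xy.2 j ^ 2 ≤ ∑ i, xy.1 i ^ 2 then Real.exp (-∑ i, xy.1 i ^ 2) else 0 with hf
  have mp := volume_preserving_piEquivPiSubtypeProd (fun _ : ι => ℝ) p
  have e1 : ∫ z : ι → ℝ, (if sq (fun i => ¬ p i) z ≤ sq p z then Real.exp (-sq p z) else 0) =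
      ∫ xy, f xy := by
    rw [← mp.integral_comp' f]
    congr 1; ext z
    rw [sq_sub, sq_sub]
    rfl
  have hset : MeasurableSet {xy : ({i // p i} → ℝ) × ({i // ¬ p i} → ℝ) |
      ∑ j, xy.2 j ^ 2 ≤ ∑ i, xy.1 i ^ 2} :=
    measurableSet_le (by fun_prop) (by fun_prop)
  have fmeas : Measurable f := by
    apply Measurable.ite hset (by fun_prop) (by fun_prop)
  have fint : Integrable f (volume.prod volume) := by
    have g := (gauss_integrable (ι := {i // p i}) (b := 1/2) (by norm_num)).mul_prod
      (gauss_integrable (ι := {i // ¬ p i}) (b := 1/2) (by norm_num))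
    refine g.mono' fmeas.aestronglyMeasurable (ae_of_all _ fun xy => ?_)
    simp only [hf]
    split_ifs with h
    · rw [Real.norm_of_nonneg (Real.exp_pos _).le, ← Real.exp_add]
      apply Real.exp_le_exp.2; linarith
    · rw [norm_zero]; positivity
  rw [e1, Measure.volume_eq_prod, integral_prod f fint]
  have inner : ∀ x : {i // p i} → ℝ, ∫ y : {i // ¬ p i} → ℝ, f (x, y) =
      Real.exp (-∑ i, x i ^ 2) * (√(∑ i, x i ^ 2)) ^ (Fintype.card {i // ¬ p i}) *
      (√Real.pi ^ Fintype.card {i // ¬ p i} / Real.Gamma ((Fintype.card {i // ¬ p i} : ℝ) / 2 + 1)) := by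
    intro x
    have hS : MeasurableSet {y : {i // ¬ p i} → ℝ | ∑ j, y j ^ 2 ≤ (√(∑ i, x i ^ 2)) ^ 2} :=
      measurableSet_le (by fun_prop) (by fun_prop)
    have : ∀ y, f (x, y) = Set.indicator {y : {i // ¬ p i} → ℝ | ∑ j, y j ^ 2 ≤ (√(∑ i, x i ^ 2)) ^ 2}
        (fun _ => Real.exp (-∑ i, x i ^ 2)) y := by
      intro y
      simp only [hf, Set.indicator, Set.mem_ofPred_eq]
      rw [Real.sq_sqrt (by positivity)]
    simp_rw [this]
    rw [integral_indicator_const _ hS, ball_vol (Real.sqrt_nonneg _), smul_eq_mul]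
    ring
  simp_rw [inner]
  rw [integral_mul_const, radial]
  have hc : Fintype.card ι = Fintype.card {i // p i} + Fintype.card {i // ¬ p i} := by
    rw [Fintype.card_subtype_compl]
    have := Fintype.card_subtype_le p
    omega
  rw [hc]
  push_cast
  rw [pow_add]
  field_simp

end EllGauss


namespace EllGauss

variable {ι : Type*} [Fintype ι]

/-- Gaussian measure (unnormalised) of the cone. -/
def coneH (c : ι → ℝ) (q : ℝ) : ℝ :=
  ∫ z : ι → ℝ, if ∑ i, c i * z i ^ 2 < q * ∑ i, z i ^ 2 then Real.exp (-∑ i, z i ^ 2) else 0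

lemma scale [DecidableEq ι] (s : ι → ℝ) (hs : ∀ i, 0 < s i) (f : (ι → ℝ) → ℝ) (hf : Measurable f) :
    ∫ z, f z = (∏ i, s i) * ∫ z : ι → ℝ, f (fun i => s i * z i) := by
  have hdet : (Matrix.diagonal s).det = ∏ i, s i := Matrix.det_diagonal
  have hpos : 0 < ∏ i, s i := Finset.prod_pos fun i _ => hs i
  have h := Real.smul_map_diagonal_volume_pi (D := s) (by rw [hdet]; exact hpos.ne')
  have hm : Measurable (Matrix.toLin' (Matrix.diagonal s)) :=
    (LinearMap.continuous_of_finiteDimensional _).measurable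
  conv_lhs => rw [← h]
  rw [integral_smul_measure, hdet, abs_of_pos hpos, ENNReal.toReal_ofReal hpos.le, smul_eq_mul,
    integral_map hm.aemeasurable hf.aestronglyMeasurable]
  congr 2; ext z
  congr 1; ext i
  simp [Matrix.mulVec_diagonal]

lemma cone_tendsto [DecidableEq ι] [Nonempty ι] (c : ι → ℝ) (hc : ∀ i, 0 ≤ c i)
    [DecidablePred fun i => c i = 0] :
    Tendsto (fun q => coneH c q / q ^ ((Fintype.card {i // ¬ c i = 0} : ℝ) / 2)) (𝓝[>] 0)
      (𝓝 ((∏ i ∈ Finset.univ.filter (fun i => ¬ c i = 0), c i ^ (-(1/2 : ℝ))) *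
      ∫ z : ι → ℝ, (if sq (fun i => ¬ c i = 0) z ≤ sq (fun i => c i = 0) z
        then Real.exp (-sq (fun i => c i = 0) z) else 0))) := by
  set W : (ι → ℝ) → ℝ := fun z => ∑ i, z i ^ 2 / c i with hW
  set a : (ι → ℝ) → ℝ := sq (fun i => c i = 0) with ha
  set b : (ι → ℝ) → ℝ := sq (fun i => ¬ c i = 0) with hb
  have a0 : ∀ z, 0 ≤ a z := sq_nonneg' _
  have b0 : ∀ z, 0 ≤ b z := sq_nonneg' _
  have acont : Continuous a := sq_cont _
  have bcont : Continuous b := sq_cont _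
  have Wcont : Continuous W := by simp only [hW]; fun_prop
  have W0 : ∀ z, 0 ≤ W z := fun z => Finset.sum_nonneg fun i _ => by have := hc i; positivity
  set Bd := ∑ i, (c i)⁻¹ with hBd
  have Bd0 : 0 ≤ Bd := Finset.sum_nonneg fun i _ => inv_nonneg.2 (hc i)
  have WB : ∀ z, W z ≤ Bd * b z := by
    intro z
    simp only [hW, hb, sq]
    rw [Finset.mul_sum]
    refine Finset.sum_le_sum fun i _ => ?_
    by_cases h : c i = 0
    · simp [h]
    · simp only [h, not_false_eq_true, if_true]
      rw [div_eq_inv_mul]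
      have : (c i)⁻¹ ≤ Bd := Finset.single_le_sum (f := fun i => (c i)⁻¹)
        (fun i _ => inv_nonneg.2 (hc i)) (Finset.mem_univ i)
      gcongr
  have hDCT : Tendsto (fun q : ℝ => ∫ z : ι → ℝ,
      if b z < a z + q * W z then Real.exp (-(a z + q * W z)) else 0) (𝓝[>] 0)
      (𝓝 (∫ z : ι → ℝ, if b z ≤ a z then Real.exp (-a z) else 0)) := by
    apply tendsto_integral_filter_of_dominated_convergence
      (fun z => Real.exp (-(1/4) * ∑ i, z i ^ 2))
    · refine Eventually.of_forall fun q => ?_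
      apply Measurable.aestronglyMeasurable
      exact Measurable.ite (measurableSet_lt (by fun_prop) (by fun_prop)) (by fun_prop) (by fun_prop)
    · have hq : ∀ᶠ q in 𝓝[>] (0:ℝ), q * Bd < 1/2 := by
        have : Tendsto (fun q : ℝ => q * Bd) (𝓝[>] 0) (𝓝 (0 * Bd)) :=
          (tendsto_id.mono_left nhdsWithin_le_nhds).mul_const _
        rw [zero_mul] at this
        exact this.eventually (gt_mem_nhds (by norm_num))
      filter_upwards [hq, self_mem_nhdsWithin] with q hq hq0
      have hq0 : 0 < q := hq0
      refine ae_of_all _ fun z => ?_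
      split_ifs with h
      · rw [Real.norm_of_nonneg (Real.exp_pos _).le]
        apply Real.exp_le_exp.2
        rw [← sq_add (fun i => c i = 0) z]
        change _ ≤ -(1/4) * (a z + b z)
        have h1 : q * W z ≤ 1/2 * b z := by
          calc q * W z ≤ q * (Bd * b z) := by gcongr; exact WB z
            _ = (q * Bd) * b z := by ring
            _ ≤ _ := by have := b0 z; gcongr
        have h2 : 0 ≤ q * W z := mul_nonneg hq0.le (W0 z)
        have := a0 z
        linarith
      · rw [norm_zero]; positivity
    · exact gauss_integrable (by norm_num)
    · have hne : ∀ᵐ z : ι → ℝ, z ≠ 0 := by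
        exact Measure.ae_ne volume 0
      filter_upwards [hne] with z hz
      have t1 : Tendsto (fun q : ℝ => a z + q * W z) (𝓝[>] 0) (𝓝 (a z)) := by
        have : Tendsto (fun q : ℝ => a z + q * W z) (𝓝 0) (𝓝 (a z + 0 * W z)) := by
          apply Continuous.tendsto; fun_prop
        rw [zero_mul, add_zero] at this
        exact this.mono_left nhdsWithin_le_nhds
      by_cases h : b z ≤ a z
      · rw [if_pos h]
        have t2 : Tendsto (fun q : ℝ => Real.exp (-(a z + q * W z))) (𝓝[>] 0) (𝓝 (Real.exp (-a z))) :=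
          (Real.continuous_exp.tendsto _).comp t1.neg
        refine t2.congr' ?_
        rcases h.lt_or_eq with h' | h'
        · filter_upwards [self_mem_nhdsWithin] with q hq
          have : 0 ≤ q * W z := mul_nonneg (le_of_lt hq) (W0 z)
          rw [if_pos (by linarith)]
        · have Wp : 0 < W z := by
            by_contra hWz
            have hWz : W z = 0 := le_antisymm (not_lt.1 hWz) (W0 z)
            have hz2 : ∀ i, z i ^ 2 / c i = 0 := by
              intro i
              exact (Finset.sum_eq_zero_iff_of_nonneg
                (fun i _ => by have := hc i; positivity)).1 hWz i (Finset.mem_univ i)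
            have bz : b z = 0 := by
              simp only [hb, sq]
              refine Finset.sum_eq_zero fun i _ => ?_
              by_cases hci : c i = 0
              · simp [hci]
              · have := hz2 i
                simp only [div_eq_zero_iff, hci, or_false] at this
                simp [this]
            have sm := sq_add (fun i => c i = 0) z
            change a z + b z = _ at sm
            rw [← h', bz, add_zero] at sm
            apply hz
            ext i
            have := (Finset.sum_eq_zero_iff_of_nonneg (fun i _ => by positivity)).1 sm.symm i (Finset.mem_univ i)
            simpa using this
          filter_upwards [self_mem_nhdsWithin] with q hq
          have : 0 < q * W z := mul_pos hq Wp
          rw [if_pos (by linarith)]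
      · rw [if_neg h]
        refine tendsto_const_nhds.congr' ?_
        filter_upwards [t1.eventually (gt_mem_nhds (not_le.1 h))] with q hq
        rw [if_neg (not_lt.2 hq.le)]
  refine (hDCT.const_mul _).congr' ?_
  filter_upwards [self_mem_nhdsWithin] with q hq
  have hq0 : 0 < q := hq
  set s : ι → ℝ := fun i => if c i = 0 then 1 else √(q / c i) with hs
  have spos : ∀ i, 0 < s i := by
    intro i
    simp only [hs]
    split_ifs with h
    · norm_num
    · have := lt_of_le_of_ne (hc i) (Ne.symm h)
      positivity
  have s2 : ∀ i, ¬ c i = 0 → s i ^ 2 = q / c i := by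
    intro i hi
    have := hc i
    simp only [hs, hi, if_false]
    rw [Real.sq_sqrt (by positivity)]
  have s1 : ∀ i, c i = 0 → s i = 1 := by intro i hi; simp [hs, hi]
  have e0 : coneH c q = (∏ i, s i) * ∫ z : ι → ℝ,
      if b z < a z + q * W z then Real.exp (-(a z + q * W z)) else 0 := by
    unfold coneH
    rw [scale s spos]
    · congr 2; ext z
      have e1 : ∑ i, c i * (s i * z i) ^ 2 = q * b z := by
        simp only [hb, sq]
        rw [Finset.mul_sum]
        refine Finset.sum_congr rfl fun i _ => ?_
        by_cases hi : c i = 0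
        · simp [hi]
        · simp only [hi, not_false_eq_true, if_true, mul_pow, s2 i hi]
          field_simp
      have e2 : ∑ i, (s i * z i) ^ 2 = a z + q * W z := by
        simp only [ha, hW, sq]
        rw [Finset.mul_sum, ← Finset.sum_add_distrib]
        refine Finset.sum_congr rfl fun i _ => ?_
        by_cases hi : c i = 0
        · simp [hi, s1 i hi]
        · simp only [hi, if_false, mul_pow, s2 i hi]
          ring
      rw [e1, e2]
      simp only [mul_lt_mul_iff_right₀ hq0]
    · exact Measurable.ite (measurableSet_lt (by fun_prop) (by fun_prop)) (by fun_prop) (by fun_prop)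
  have e3 : ∏ i, s i = q ^ ((Fintype.card {i // ¬ c i = 0} : ℝ) / 2) *
      ∏ i ∈ Finset.univ.filter (fun i => ¬ c i = 0), c i ^ (-(1/2 : ℝ)) := by
    have : ∏ i, s i = ∏ i ∈ Finset.univ.filter (fun i => ¬ c i = 0), √(q / c i) := by
      rw [Finset.prod_filter]
      refine Finset.prod_congr rfl fun i _ => ?_
      by_cases hi : c i = 0 <;> simp [hs, hi]
    rw [this, Fintype.card_subtype]
    generalize Finset.univ.filter (fun i => ¬ c i = 0) = S
    have hp : q ^ ((S.card : ℝ) / 2) = (q ^ (1 / 2 : ℝ)) ^ S.card := by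
      rw [← Real.rpow_natCast, ← Real.rpow_mul hq0.le]; congr 1; ring
    rw [hp, ← Finset.prod_const, ← Finset.prod_mul_distrib]
    refine Finset.prod_congr rfl fun i _ => ?_
    have := hc i
    rw [Real.sqrt_eq_rpow, Real.div_rpow hq0.le this, Real.rpow_neg this]
    rfl
  rw [e0, e3]
  field_simp

end EllGauss


namespace EllGauss

section uniq
variable {E : Type*} [NormedAddCommGroup E] [InnerProductSpace ℝ E] [FiniteDimensional ℝ E]
  [MeasurableSpace E] [BorelSpace E]

/-- rotation invariant probability law carried by the unit sphere -/
structure IsSph (μ : Measure E) : Prop where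
  prob : IsProbabilityMeasure μ
  inv : ∀ L : E ≃ₗᵢ[ℝ] E, μ.map L = μ
  sph : ∀ᵐ x ∂μ, ‖x‖ = 1

lemma IsSph.charFun_eq {μ : Measure E} (h : IsSph μ) {s t : E} (hst : ‖s‖ = ‖t‖) :
    charFun μ s = charFun μ t := by
  set L := (ℝ ∙ (s - t))ᗮ.reflection with hL
  have hLs : L s = t := Submodule.reflection_sub hst
  have h1 : charFun μ t = charFun (μ.map L) t := by rw [h.inv L]
  rw [h1, charFun_apply, charFun_apply, integral_map L.continuous.measurable.aemeasurable
    (Continuous.aestronglyMeasurable (by fun_prop))]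
  congr 1; ext x
  rw [← hLs, L.inner_map_map]

lemma IsSph.unique {μ ν : Measure E} (hμ : IsSph μ) (hν : IsSph ν) : μ = ν := by
  have := hμ.prob
  have := hν.prob
  apply Measure.ext_of_charFun
  ext t
  have key : ∀ {μ ν : Measure E}, IsSph μ → IsSph ν →
      charFun μ t = ∫ v, ∫ u, Complex.exp ((‖t‖ * inner ℝ u v : ℝ) * Complex.I) ∂μ ∂ν := by
    intro μ ν hμ hν
    have := hν.prob
    have h1 : ∀ᵐ v ∂ν, ∫ u, Complex.exp ((‖t‖ * inner ℝ u v : ℝ) * Complex.I) ∂μ = charFun μ t := by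
      filter_upwards [hν.sph] with v hv
      rw [hμ.charFun_eq (s := t) (t := ‖t‖ • v) (by rw [norm_smul, hv]; simp), charFun_apply]
      congr 1; ext u
      rw [inner_smul_right]
    rw [integral_congr_ae h1]
    simp
  rw [key hμ hν, key hν hμ, integral_integral_swap]
  · congr 1; ext u; congr 1; ext v
    rw [real_inner_comm]
  · refine Integrable.of_bound (Continuous.aestronglyMeasurable ?_) 1 (ae_of_all _ fun x => ?_)
    · simp only [Function.uncurry_def]
      fun_prop
    · simp only [Function.uncurry_def]
      rw [Complex.norm_exp_ofReal_mul_I]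

/-- The standard (variance 1/2) Gaussian law. -/
def gam (E : Type*) [NormedAddCommGroup E] [InnerProductSpace ℝ E] [FiniteDimensional ℝ E]
    [MeasurableSpace E] [BorelSpace E] : Measure E :=
  volume.withDensity fun x => ENNReal.ofReal
    (Real.exp (-‖x‖ ^ 2) / Real.pi ^ ((Module.finrank ℝ E : ℝ) / 2))

lemma int_gam : ∫ x : E, Real.exp (-‖x‖ ^ 2) = Real.pi ^ ((Module.finrank ℝ E : ℝ) / 2) := by
  have := GaussianFourier.integral_rexp_neg_mul_sq_norm (V := E) (b := 1) one_pos
  simpa using this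

lemma integrable_gam : Integrable (fun x : E => Real.exp (-‖x‖ ^ 2)) := by
  apply not_imp_comm.1 integral_undef
  rw [int_gam]
  positivity

lemma gam_real {S : Set E} (hS : MeasurableSet S) :
    (gam E).real S = (∫ x in S, Real.exp (-‖x‖ ^ 2)) / Real.pi ^ ((Module.finrank ℝ E : ℝ) / 2) := by
  rw [measureReal_def, gam, withDensity_apply _ hS, ← integral_div,
    integral_eq_lintegral_of_nonneg_ae (ae_of_all _ fun x => by positivity)
    (Continuous.aestronglyMeasurable (by fun_prop))]

lemma gam_prob : IsProbabilityMeasure (gam E) := by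
  have h := gam_real (E := E) MeasurableSet.univ
  rw [setIntegral_univ, int_gam, div_self (by positivity)] at h
  constructor
  rw [measureReal_def] at h
  exact (ENNReal.toReal_eq_one_iff _).1 h

lemma gam_inv (L : E ≃ₗᵢ[ℝ] E) : (gam E).map L = gam E := by
  ext S hS
  rw [Measure.map_apply L.continuous.measurable hS, gam, withDensity_apply _ hS,
    withDensity_apply _ (L.continuous.measurable hS)]
  rw [← L.measurePreserving.setLIntegral_comp_preimage hS (by fun_prop)]
  simp

lemma gam_sph [Nontrivial E] : IsSph ((gam E).map (fun x => ‖x‖⁻¹ • x)) := by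
  have := gam_prob (E := E)
  have hm : Measurable (fun x : E => ‖x‖⁻¹ • x) := by fun_prop
  refine ⟨Measure.isProbabilityMeasure_map hm.aemeasurable, fun L => ?_, ?_⟩
  · rw [Measure.map_map L.continuous.measurable hm]
    conv_rhs => rw [← gam_inv L, Measure.map_map hm L.continuous.measurable]
    congr 1
    ext x
    simp
  · rw [ae_map_iff hm.aemeasurable (measurableSet_eq_fun (by fun_prop) (by fun_prop))]
    have h0 : ∀ᵐ x ∂(gam E), x ≠ 0 :=
      (withDensity_absolutelyContinuous _ _).ae_le (Measure.ae_ne volume 0)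
    filter_upwards [h0] with x hx
    rw [norm_smul, norm_inv, norm_norm, inv_mul_cancel₀ (norm_ne_zero_iff.2 hx)]

end uniq

variable {d : ℕ}

lemma sph_cone [NeZero d] {μ : Measure (EuclideanSpace ℝ (Fin d))} (hμ : IsSph μ) (c : Fin d → ℝ) (q : ℝ) :
    μ.real {x | ∑ i, c i * x i ^ 2 < q} = coneH c q / √Real.pi ^ d := by
  have hd : 0 < d := Nat.pos_of_ne_zero (NeZero.ne d)
  have : Nonempty (Fin d) := ⟨⟨0, hd⟩⟩
  have hm : Measurable (fun x : EuclideanSpace ℝ (Fin d) => ‖x‖⁻¹ • x) := by fun_prop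
  have hS : MeasurableSet {x : EuclideanSpace ℝ (Fin d) | ∑ i, c i * x i ^ 2 < q} :=
    measurableSet_lt (by fun_prop) (by fun_prop)
  have hS2 : MeasurableSet {x : EuclideanSpace ℝ (Fin d) | ∑ i, c i * x i ^ 2 < q * ‖x‖ ^ 2} :=
    measurableSet_lt (by fun_prop) (by fun_prop)
  rw [hμ.unique gam_sph, map_measureReal_apply hm hS]
  have h0 : ∀ᵐ x ∂(gam (EuclideanSpace ℝ (Fin d))), x ≠ 0 :=
      (withDensity_absolutelyContinuous _ _).ae_le (Measure.ae_ne volume 0)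
  have e1 : (gam (EuclideanSpace ℝ (Fin d))).real ((fun x => ‖x‖⁻¹ • x) ⁻¹' {x | ∑ i, c i * x i ^ 2 < q})
      = (gam (EuclideanSpace ℝ (Fin d))).real {x | ∑ i, c i * x i ^ 2 < q * ‖x‖ ^ 2} := by
    apply measureReal_congr
    filter_upwards [h0] with x hx
    have nx : 0 < ‖x‖ := norm_pos_iff.2 hx
    apply propext
    change (∑ i, c i * (‖x‖⁻¹ * x i) ^ 2 < q) ↔ (∑ i, c i * x i ^ 2 < q * ‖x‖ ^ 2)
    have : ∑ i, c i * (‖x‖⁻¹ * x i) ^ 2 = (∑ i, c i * x i ^ 2) / ‖x‖ ^ 2 := by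
      rw [Finset.sum_div]
      refine Finset.sum_congr rfl fun i _ => ?_
      field_simp
    rw [this, div_lt_iff₀ (by positivity)]
  rw [e1, gam_real hS2, finrank_euclideanSpace_fin]
  congr 1
  · rw [← integral_indicator hS2]
    unfold coneH
    rw [← (PiLp.volume_preserving_toLp (Fin d)).integral_comp
      (MeasurableEquiv.toLp 2 (Fin d → ℝ)).measurableEmbedding]
    congr 1; ext z
    simp only [Set.indicator, Set.mem_ofPred_eq]
    rw [EuclideanSpace.real_norm_sq_eq]
  · rw [Real.sqrt_eq_rpow, ← Real.rpow_natCast, ← Real.rpow_mul Real.pi_pos.le]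
    congr 1; ring

/-- Diagonalisation. -/
lemma diag (A : Matrix (Fin d) (Fin d) ℝ) (lam : Fin d → ℝ)
    (hlam : ∃ (hH : (A * Aᵀ).IsHermitian) (σ : Equiv.Perm (Fin d)),
      ∀ i, lam i = hH.eigenvalues (σ i)) :
    (∀ i, 0 ≤ lam i) ∧ ∃ L : EuclideanSpace ℝ (Fin d) ≃ₗᵢ[ℝ] EuclideanSpace ℝ (Fin d),
      ∀ x : EuclideanSpace ℝ (Fin d), ∑ i, (A.mulVec x.ofLp i) ^ 2 = ∑ i, lam i * (L x i) ^ 2 := by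
  obtain ⟨hH, σ, hl⟩ := hlam
  constructor
  · intro i
    rw [hl]
    have : (A * Aᵀ).PosSemidef := by
      have := Matrix.posSemidef_self_mul_conjTranspose A
      rwa [Matrix.conjTranspose_eq_transpose_of_trivial] at this
    exact this.eigenvalues_nonneg _
  have hB : (Aᵀ * A).IsHermitian := by
    have := Matrix.isHermitian_conjTranspose_mul_self A
    rwa [Matrix.conjTranspose_eq_transpose_of_trivial] at this
  have heq : hH.eigenvalues = hB.eigenvalues :=
    (hH.eigenvalues_eq_eigenvalues_iff hB).2 (Matrix.charpoly_mul_comm _ _)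
  set bs := hB.eigenvectorBasis.reindex σ.symm with hbs
  refine ⟨bs.repr, fun x => ?_⟩
  have hev : ∀ i, (Aᵀ * A).mulVec (bs i).ofLp = lam i • (bs i).ofLp := by
    intro i
    rw [hl i, heq]
    have := hB.mulVec_eigenvectorBasis (σ i)
    simpa [hbs] using this
  have h1 : ∑ i, (A.mulVec x.ofLp i) ^ 2 = x.ofLp ⬝ᵥ ((Aᵀ * A).mulVec x.ofLp) := by
    rw [← Matrix.mulVec_mulVec, Matrix.dotProduct_mulVec, Matrix.vecMul_transpose]
    simp [dotProduct, pow_two]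
  have h2 : (Aᵀ * A).mulVec x.ofLp = ∑ i, (bs.repr x i) • (lam i • (bs i).ofLp) := by
    conv_lhs => rw [← bs.sum_repr x]
    rw [WithLp.ofLp_sum, Matrix.mulVec_sum]
    refine Finset.sum_congr rfl fun i _ => ?_
    rw [WithLp.ofLp_smul, Matrix.mulVec_smul, hev]
  rw [h1, h2, dotProduct_sum]
  refine Finset.sum_congr rfl fun i _ => ?_
  rw [dotProduct_smul, dotProduct_smul]
  have h3 : x.ofLp ⬝ᵥ (bs i).ofLp = bs.repr x i := by
    rw [bs.repr_apply_apply, EuclideanSpace.inner_eq_star_dotProduct]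
    simp
  rw [h3, smul_eq_mul, smul_eq_mul]
  ring

/-- isometries are given by orthogonal matrices -/
lemma exists_matrix (L : EuclideanSpace ℝ (Fin d) ≃ₗᵢ[ℝ] EuclideanSpace ℝ (Fin d)) :
    ∃ M : Matrix (Fin d) (Fin d) ℝ, M * Mᵀ = 1 ∧
      ∀ x : EuclideanSpace ℝ (Fin d), M.mulVec x.ofLp = (L x).ofLp := by
  set e := EuclideanSpace.basisFun (Fin d) ℝ
  set M := LinearMap.toMatrix e.toBasis e.toBasis L.toLinearEquiv.toLinearMap with hM
  refine ⟨M, ?_, fun x => ?_⟩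
  · have h := LinearIsometryEquiv.toMatrix_mem_unitaryGroup L e e
    have := (Matrix.mem_unitaryGroup_iff).1 h
    rwa [Matrix.star_eq_conjTranspose, Matrix.conjTranspose_eq_transpose_of_trivial] at this
  · have := LinearMap.toMatrix_mulVec_repr e.toBasis e.toBasis L.toLinearEquiv.toLinearMap x
    have hr : ∀ y : EuclideanSpace ℝ (Fin d), ⇑(e.toBasis.repr y) = y.ofLp := by
      intro y; ext i; simp [e]
    rw [hr, hr] at this
    exact this
end EllGauss


namespace EllGauss

lemma isSph_law {Ω : Type*} [MeasurableSpace Ω] {P : Measure Ω} [IsProbabilityMeasure P]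
    {d : ℕ} {U : Ω → Fin d → ℝ} (hU : IsUniformOnSphere P U) :
    IsSph (P.map (fun ω => (WithLp.toLp 2 (U ω) : EuclideanSpace ℝ (Fin d)))) := by
  obtain ⟨hUm, hU1, hUi⟩ := hU
  have ht : Measurable (fun x : Fin d → ℝ => (WithLp.toLp 2 x : EuclideanSpace ℝ (Fin d))) :=
    (PiLp.continuous_toLp 2 _).measurable
  have hm : Measurable (fun ω => (WithLp.toLp 2 (U ω) : EuclideanSpace ℝ (Fin d))) :=
    ht.comp hUm
  refine ⟨Measure.isProbabilityMeasure_map hm.aemeasurable, fun L => ?_, ?_⟩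
  · obtain ⟨M, hM, hML⟩ := exists_matrix L
    have h := congrArg (fun ν => Measure.map (fun x : Fin d → ℝ => (WithLp.toLp 2 x : EuclideanSpace ℝ (Fin d))) ν) (hUi M hM)
    have hMm : Measurable (fun ω => M.mulVec (U ω)) := by
      have : Measurable (fun x : Fin d → ℝ => M.mulVec x) :=
        (Continuous.matrix_mulVec continuous_const continuous_id).measurable
      exact this.comp hUm
    simp only at h
    rw [Measure.map_map ht hMm, Measure.map_map ht hUm] at h
    rw [Measure.map_map L.continuous.measurable hm]
    refine Eq.trans ?_ h
    congr 1
    ext ω : 1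
    have := hML (WithLp.toLp 2 (U ω))
    simp only [Function.comp]
    rw [this]
  · rw [ae_map_iff hm.aemeasurable (measurableSet_eq_fun (by fun_prop) measurable_const)]
    refine ae_of_all _ fun ω => ?_
    rw [EuclideanSpace.norm_eq, ← hU1 ω]
    simp [eNorm]

lemma tailData {Ω : Type*} [MeasurableSpace Ω] {P : Measure Ω} [IsProbabilityMeasure P]
    {R : Ω → ℝ} (hRmeas : Measurable R) (hRpos : ∀ ω, 0 < R ω)
    {F : ℝ → ℝ} (hF : ∀ u, F u = (P {ω | R ω ≤ u}).toReal) {l : Filter ℝ}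
    (hxF : (l = atTop ∧ ∀ u, F u < 1) ∨ (l = 𝓝[<] (1 : ℝ) ∧ IsLUB {u | F u < 1} 1))
    {w : ℝ → ℝ} (hw : ∀ u, 0 < w u)
    (hMDA : ∀ x : ℝ,
      Tendsto (fun u => (1 - F (u + x / w u)) / (1 - F u)) l (𝓝 (Real.exp (-x)))) :
    ∃ D, TailData l D (fun u => 1 - F u) w := by
  have hFm : Monotone F := by
    intro a b hab
    rw [hF, hF]
    exact measureReal_mono (fun ω h => le_trans h hab)
  have hF1 : ∀ u, F u ≤ 1 := by
    intro u; rw [hF]; exact measureReal_le_one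
  have hF00 : ∀ u, u ≤ 0 → F u = 0 := by
    intro u hu
    rw [hF]
    have : {ω | R ω ≤ u} = ∅ := by
      ext ω; simp; linarith [hRpos ω]
    simp [this]
  have a1 : Antitone (fun u => 1 - F u) := fun a b hab => sub_le_sub_left (hFm hab) 1
  have a2 : ∀ u, 0 ≤ 1 - F u := fun u => by linarith [hF1 u]
  have a3 : ∀ u, u ≤ 0 → 1 - F u = 1 := fun u hu => by rw [hF00 u hu]; ring
  rcases hxF with ⟨rfl, h⟩ | ⟨rfl, h⟩
  · refine ⟨Set.univ, a1, a2, a3, hw, fun p => ?_, fun u _ => by linarith [h u], fun _ _ _ _ => trivial,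
      hMDA, inferInstance, inferInstance, eventually_gt_atTop 0⟩
    rw [eventually_atTop]; simp
  · have hlt : ∀ u, u < 1 → F u < 1 := by
      intro u hu
      obtain ⟨v, hv, huv⟩ := (lt_isLUB_iff h).1 hu
      exact lt_of_le_of_lt (hFm huv.le) hv
    refine ⟨Set.Iio 1, a1, a2, a3, hw, fun p => ?_, fun u hu => by linarith [hlt u hu], fun v v' hv h' => ?_,
      hMDA, inferInstance, inferInstance, ?_⟩
    · constructor
      · intro hp
        obtain ⟨a, ha, hap⟩ := (mem_nhdsLT_iff_exists_Ioo_subset).1 hp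
        refine ⟨(a+1)/2, ?_, fun u hu hau => hap ⟨?_, hu⟩⟩
        · have : a < 1 := ha
          simp only [Set.mem_Iio]; linarith
        · have : a < 1 := ha
          linarith
      · rintro ⟨a, ha, hap⟩
        filter_upwards [Ioo_mem_nhdsLT ha] with u hu
        exact hap u hu.2 hu.1.le
    · have : v' ≤ 1 := h.1 (by simp only [Set.mem_ofPred_eq]; linarith)
      exact lt_of_lt_of_le hv this
    · filter_upwards [Ioo_mem_nhdsLT (zero_lt_one (α := ℝ))] with u hu using hu.1

lemma prob_eq {Ω : Type*} [MeasurableSpace Ω] {P : Measure Ω} [IsProbabilityMeasure P]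
    {β : Type*} [MeasurableSpace β]
    {R : Ω → ℝ} (hR : Measurable R) {V : Ω → β} (hV : Measurable V) (hI : IndepFun R V P)
    {Q : β → ℝ} (hQ : Measurable Q) {g : ℝ → ℝ} (hg : Measurable g) :
    P.real {ω | Q (V ω) < g (R ω)} = ∫ ω, P.real {ω' | Q (V ω') < g (R ω)} ∂P := by
  have h1 := (indepFun_iff_map_prod_eq_prod_map_map hR.aemeasurable hV.aemeasurable).1 hI
  have hS : MeasurableSet {z : ℝ × β | Q z.2 < g z.1} :=
    measurableSet_lt (hQ.comp measurable_snd) (hg.comp measurable_fst)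
  have h2 : P {ω | Q (V ω) < g (R ω)} = ∫⁻ ω, P {ω' | Q (V ω') < g (R ω)} ∂P := by
    have h3 : P {ω | Q (V ω) < g (R ω)} = (P.map (fun ω => (R ω, V ω))) {z : ℝ × β | Q z.2 < g z.1} := by
      rw [Measure.map_apply (hR.prodMk hV) hS]; rfl
    have : IsProbabilityMeasure (P.map V) := Measure.isProbabilityMeasure_map hV.aemeasurable
    rw [h3, h1, Measure.prod_apply hS, lintegral_map (measurable_measure_prodMk_left hS) hR]
    refine lintegral_congr fun ω => ?_
    rw [Measure.map_apply hV (measurable_prodMk_left hS)]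
    rfl
  have hmeas : Measurable (fun r : ℝ => P {ω' | Q (V ω') < r}) := by
    apply Monotone.measurable
    intro a b hab
    exact measure_mono fun ω h => lt_of_lt_of_le h hab
  rw [measureReal_def, h2]
  simp only [measureReal_def]
  rw [integral_toReal]
  · exact (hmeas.comp (hg.comp hR)).aemeasurable
  · exact ae_of_all _ fun ω => measure_lt_top _ _

end EllGauss


namespace EllGauss

/-- distribution function of the quadratic form -/
lemma quad_law {Ω : Type*} [MeasurableSpace Ω] {P : Measure Ω} [IsProbabilityMeasure P]
    {d : ℕ} [NeZero d] {U : Ω → Fin d → ℝ} (hU : IsUniformOnSphere P U)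
    {A : Matrix (Fin d) (Fin d) ℝ} {lam : Fin d → ℝ}
    (hlam : ∃ (hH : (A * Aᵀ).IsHermitian) (σ : Equiv.Perm (Fin d)),
      ∀ i, lam i = hH.eigenvalues (σ i)) (hlam0 : 0 < lam 0) (q : ℝ) :
    P.real {ω | 1 - (∑ i, (A.mulVec (U ω) i) ^ 2) / lam 0 < q} =
      coneH (fun i => 1 - lam i / lam 0) q / √Real.pi ^ d := by
  obtain ⟨-, L, hL⟩ := diag A lam hlam
  have hsph := isSph_law hU
  rw [← sph_cone hsph, ← hsph.inv L]
  have ht : Measurable (fun x : Fin d → ℝ => (WithLp.toLp 2 x : EuclideanSpace ℝ (Fin d))) :=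
    (PiLp.continuous_toLp 2 _).measurable
  have hm : Measurable (fun ω => (WithLp.toLp 2 (U ω) : EuclideanSpace ℝ (Fin d))) :=
    ht.comp hU.1
  have hS : MeasurableSet {x : EuclideanSpace ℝ (Fin d) | ∑ i, (1 - lam i / lam 0) * x i ^ 2 < q} :=
    measurableSet_lt (by fun_prop) measurable_const
  rw [Measure.map_map L.continuous.measurable hm, measureReal_def, measureReal_def,
    Measure.map_apply (L.continuous.measurable.comp hm) hS]
  congr 2
  ext ω
  have e1 := hL (WithLp.toLp 2 (U ω))
  simp only at e1
  have e2 : ∑ i, (L (WithLp.toLp 2 (U ω)) i) ^ 2 = 1 := by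
    have h1 : ‖L (WithLp.toLp 2 (U ω))‖ = 1 := by
      rw [L.norm_map, EuclideanSpace.norm_eq, ← hU.2.1 ω]
      simp [eNorm]
    have h2 := EuclideanSpace.norm_sq_eq (L (WithLp.toLp 2 (U ω)))
    rw [h1] at h2
    simpa using h2.symm
  have e3 : 1 - (∑ i, (A.mulVec (U ω) i) ^ 2) / lam 0 =
      ∑ i, (1 - lam i / lam 0) * (L (WithLp.toLp 2 (U ω)) i) ^ 2 := by
    rw [e1]
    simp only [sub_mul, one_mul, Finset.sum_sub_distrib, e2, Finset.sum_div]
    congr 1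
    refine Finset.sum_congr rfl fun i _ => ?_
    ring
  simp only [Set.mem_ofPred_eq, Set.mem_preimage, Function.comp]
  rw [e3]

/-- the event -/
lemma event_iff {d : ℕ} {A : Matrix (Fin d) (Fin d) ℝ} {U : Fin d → ℝ} {r u L : ℝ} (hr : 0 < r)
    (hu : 0 < u) (hL : 0 < L) :
    eNorm (A.mulVec (r • U)) > u * √L ↔ 1 - (∑ i, (A.mulVec U i) ^ 2) / L < 1 - u ^ 2 / r ^ 2 := by
  have e : ∑ i, (A.mulVec (r • U) i) ^ 2 = r ^ 2 * ∑ i, (A.mulVec U i) ^ 2 := by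
    rw [Matrix.mulVec_smul, Finset.mul_sum]
    refine Finset.sum_congr rfl fun i _ => ?_
    simp [mul_pow]
  unfold eNorm
  rw [e, gt_iff_lt, Real.lt_sqrt (by positivity), mul_pow, Real.sq_sqrt hL.le]
  rw [sub_lt_sub_iff_left, div_lt_div_iff₀ (by positivity) hL, mul_comm (r^2)]

lemma G_lim {d : ℕ} [NeZero d] {lam : Fin d → ℝ} (hmono : Antitone lam)
    (hlam0 : 0 < lam 0)
    (m : ℕ) (hm : m = (Finset.univ.filter fun j => lam j = lam 0).card) (hmd : m < d)
    (Cstar : ℝ)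
    (hC : Cstar = ∏ j ∈ Finset.univ.filter (fun j => lam j ≠ lam 0),
      ((1 : ℝ) - lam j / lam 0) ^ (-(1 / 2 : ℝ))) :
    Tendsto (fun q => coneH (fun i => 1 - lam i / lam 0) q / √Real.pi ^ d /
      q ^ (((d : ℝ) - (m : ℝ)) / 2)) (𝓝[>] 0)
      (𝓝 (Cstar * (Real.Gamma ((d : ℝ) / 2) /
        (Real.Gamma ((m : ℝ) / 2) * Real.Gamma (((d : ℝ) - (m : ℝ)) / 2 + 1))))) := by
  classical
  set c : Fin d → ℝ := fun i => 1 - lam i / lam 0 with hc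
  have hc0 : ∀ i, c i = 0 ↔ lam i = lam 0 := by
    intro i
    simp only [hc]
    rw [sub_eq_zero, eq_comm, div_eq_one_iff_eq hlam0.ne']
  have hcn : ∀ i, 0 ≤ c i := by
    intro i
    simp only [hc]
    rw [sub_nonneg, div_le_one hlam0]
    exact hmono (Fin.zero_le i)
  have k1 : Fintype.card {i // c i = 0} = m := by
    rw [Fintype.card_subtype, hm]
    congr 1
    ext i; simp [hc0]
  have k2 : (Fintype.card {i // ¬ c i = 0} : ℝ) = (d : ℝ) - m := by
    have := Fintype.card_subtype_compl (fun i => c i = 0)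
    rw [this, k1, Fintype.card_fin, Nat.cast_sub hmd.le]
  have n1 : Nonempty {i // c i = 0} := ⟨⟨0, (hc0 0).2 rfl⟩⟩
  have n2 : Nonempty {i // ¬ c i = 0} := by
    rw [← Fintype.card_pos_iff]
    have : (0:ℝ) < (Fintype.card {i // ¬ c i = 0} : ℝ) := by
      rw [k2, sub_pos]; exact_mod_cast hmd
    exact_mod_cast this
  have h := cone_tendsto c hcn
  have hI := cone_integral (ι := Fin d) (fun i => c i = 0)
  rw [hI, k1, k2, Fintype.card_fin] at h
  have hpi : (√Real.pi ^ d) ≠ 0 := by have := Real.pi_pos; positivity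
  have h2 := h.div_const (√Real.pi ^ d)
  refine Tendsto.congr (fun q => ?_) (h2.trans_eq ?_)
  · rw [div_right_comm]
  · rw [hC]
    congr 1
    have : Finset.univ.filter (fun i => ¬ c i = 0) = Finset.univ.filter (fun j => lam j ≠ lam 0) := by
      ext i; simp [hc0]
    rw [this]
    change (∏ j ∈ Finset.univ.filter (fun j => lam j ≠ lam 0), c j ^ (-(1 / 2 : ℝ))) * _ / _ =
      (∏ j ∈ Finset.univ.filter (fun j => lam j ≠ lam 0), c j ^ (-(1 / 2 : ℝ))) * _
    rw [mul_div_assoc]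
    congr 1
    field_simp

end EllGauss

open EllGauss

/-- Theorem 1 (Gumbel case): tail asymptotics of the norm of an elliptical random vector. -/
theorem norm_elliptical_tail_gumbel
    {Ω : Type*} [MeasurableSpace Ω] (P : Measure Ω) [IsProbabilityMeasure P]
    (d : ℕ) [NeZero d] (hd : 2 ≤ d)
    (A : Matrix (Fin d) (Fin d) ℝ)
    (R : Ω → ℝ) (U : Ω → Fin d → ℝ)
    (hRmeas : Measurable R) (hRpos : ∀ ω, 0 < R ω)
    (hU : IsUniformOnSphere P U)
    (hInd : IndepFun R U P)
    (X : Ω → Fin d → ℝ) (hX : ∀ ω, X ω = A.mulVec (R ω • U ω))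
    -- `F` is the distribution function of `R`
    (F : ℝ → ℝ) (hF : ∀ u, F u = (P {ω | R ω ≤ u}).toReal) (hF0 : F 0 = 0)
    -- `lam` enumerates the eigenvalues of `Σ = A Aᵀ` in decreasing order
    (lam : Fin d → ℝ) (hmono : Antitone lam)
    (hlam : ∃ (hH : (A * Aᵀ).IsHermitian) (σ : Equiv.Perm (Fin d)),
      ∀ i, lam i = hH.eigenvalues (σ i))
    (hlam0 : 0 < lam 0)
    -- `m` is the multiplicity of the largest eigenvalue `lam 0 = λ_(m)`
    (m : ℕ) (hm : m = (Finset.univ.filter fun j => lam j = lam 0).card)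
    (Cstar : ℝ)
    (hC : Cstar = ∏ j ∈ Finset.univ.filter (fun j => lam j ≠ lam 0),
      ((1 : ℝ) - lam j / lam 0) ^ (-(1 / 2 : ℝ)))
    -- `l` is the filter `u ↑ x_F`, where the upper endpoint `x_F` of `F` is `∞` or `1`
    (l : Filter ℝ)
    (hxF : (l = atTop ∧ ∀ u, F u < 1) ∨ (l = 𝓝[<] (1 : ℝ) ∧ IsLUB {u | F u < 1} 1))
    -- `F ∈ MDA(Λ, w)` with positive scaling function `w`
    (w : ℝ → ℝ) (hw : ∀ u, 0 < w u)
    (hMDA : ∀ x : ℝ,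
      Tendsto (fun u => (1 - F (u + x / w u)) / (1 - F u)) l (𝓝 (Real.exp (-x))))
 :
    Tendsto (fun u =>
        (P {ω | eNorm (X ω) > u * Real.sqrt (lam 0)}).toReal /
          (Cstar * (Real.Gamma ((d : ℝ) / 2) / Real.Gamma ((m : ℝ) / 2)) *
            (2 / (u * w u)) ^ (((d : ℝ) - (m : ℝ)) / 2) * (1 - F u)))
      l (𝓝 1) := by
  obtain ⟨D, hT⟩ := tailData hRmeas hRpos hF hxF hw hMDA
  have hTR : ∀ u, 1 - F u = P.real {ω | u < R ω} := by
    intro u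
    have h1 : {ω | u < R ω} = {ω | R ω ≤ u}ᶜ := by ext ω; simp
    rw [h1, probReal_compl_eq_one_sub (measurableSet_le hRmeas measurable_const), hF]
    rfl
  have hm0 : 0 < m := by
    rw [hm, Finset.card_pos]; exact ⟨0, by simp⟩
  have hmd : m ≤ d := by
    rw [hm]; exact (Finset.card_le_univ _).trans (by simp)
  have hGm : 0 < Real.Gamma ((m : ℝ) / 2) := Real.Gamma_pos_of_pos (by positivity)
  have hGd : 0 < Real.Gamma ((d : ℝ) / 2) :=
    Real.Gamma_pos_of_pos (by have : 0 < d := by omega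
                              positivity)
  have hCpos : 0 < Cstar := by
    rw [hC]
    refine Finset.prod_pos fun j hj => Real.rpow_pos_of_pos ?_ _
    rw [sub_pos, div_lt_one hlam0]
    exact lt_of_le_of_ne (hmono (Fin.zero_le j)) (by simpa using hj)
  set G : ℝ → ℝ := fun q => P.real {ω | 1 - (∑ i, (A.mulVec (U ω) i) ^ 2) / lam 0 < q} with hG
  have hQm : Measurable (fun x : Fin d → ℝ => 1 - (∑ i, (A.mulVec x i) ^ 2) / lam 0) := by
    have : Continuous (fun x : Fin d → ℝ => A.mulVec x) :=
      Continuous.matrix_mulVec continuous_const continuous_id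
    have : Continuous (fun x : Fin d → ℝ => 1 - (∑ i, (A.mulVec x i) ^ 2) / lam 0) := by fun_prop
    exact this.measurable
  have hprob : ∀ u, 0 < u → (P {ω | eNorm (X ω) > u * Real.sqrt (lam 0)}).toReal =
      ∫ ω, G (1 - u ^ 2 / R ω ^ 2) ∂P := by
    intro u hu
    have h1 : {ω | eNorm (X ω) > u * Real.sqrt (lam 0)} =
        {ω | 1 - (∑ i, (A.mulVec (U ω) i) ^ 2) / lam 0 < 1 - u ^ 2 / R ω ^ 2} := by
      ext ω
      simp only [Set.mem_ofPred_eq]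
      rw [hX, event_iff (hRpos ω) hu hlam0]
    rw [h1]
    exact prob_eq hRmeas hU.1 hInd hQm (g := fun r => 1 - u ^ 2 / r ^ 2) (by fun_prop)
  have hGc : ∀ q, G q = coneH (fun i => 1 - lam i / lam 0) q / √Real.pi ^ d :=
    fun q => quad_law hU hlam hlam0 q
  have hcn : ∀ i, 0 ≤ 1 - lam i / lam 0 := by
    intro i
    rw [sub_nonneg, div_le_one hlam0]
    exact hmono (Fin.zero_le i)
  have Gz : ∀ x, x ≤ 0 → G x = 0 := by
    intro x hx
    rw [hGc]
    have : ∀ z : Fin d → ℝ, ¬ (∑ i, (1 - lam i / lam 0) * z i ^ 2 < x * ∑ i, z i ^ 2) := by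
      intro z
      rw [not_lt]
      refine le_trans (mul_nonpos_of_nonpos_of_nonneg hx ?_) ?_
      · positivity
      · exact Finset.sum_nonneg fun i _ => mul_nonneg (hcn i) (by positivity)
    simp [coneH, this]
  rcases hmd.lt_or_eq with hlt | heq
  · set p : ℝ := ((d : ℝ) - (m : ℝ)) / 2 with hp
    have hp0 : 0 < p := by
      have : (m : ℝ) < d := by exact_mod_cast hlt
      rw [hp]; linarith
    have hGp : 0 < Real.Gamma (p + 1) := Real.Gamma_pos_of_pos (by linarith)
    have hlim := G_lim hmono hlam0 m hm hlt Cstar hC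
    have hab := hT.abelian (P := P) hRmeas hRpos hTR hp0
      (K := Cstar * (Real.Gamma ((d : ℝ) / 2) / (Real.Gamma ((m : ℝ) / 2) * Real.Gamma (p + 1))))
      (by positivity) G
      (fun a b hab => measureReal_mono fun ω h => lt_of_lt_of_le h hab)
      (fun x => measureReal_nonneg) (fun x => measureReal_le_one) Gz
      (by simpa only [hGc] using hlim)
    set κ := Cstar * (Real.Gamma ((d : ℝ) / 2) / Real.Gamma ((m : ℝ) / 2)) with hκ
    have hκ0 : 0 < κ := by positivity
    have h3 := hab.div_const κ
    have e : Cstar * (Real.Gamma ((d : ℝ) / 2) / (Real.Gamma ((m : ℝ) / 2) * Real.Gamma (p + 1))) *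
        Real.Gamma (p + 1) / κ = 1 := by
      rw [div_eq_one_iff_eq hκ0.ne', hκ]
      field_simp
    rw [e] at h3
    refine h3.congr' ?_
    filter_upwards [hT.evpos] with u hu
    rw [hprob u hu, div_div]
    congr 1
    ring
  · have hall : ∀ j, lam j = lam 0 := by
      have : (Finset.univ.filter fun j => lam j = lam 0) = Finset.univ := by
        apply Finset.eq_univ_of_card
        rw [← hm, heq, Fintype.card_fin]
      intro j
      have hj := Finset.mem_univ j
      rw [← this] at hj
      simpa using hj
    have hC1 : Cstar = 1 := by
      rw [hC, Finset.prod_eq_one]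
      intro j hj
      exact absurd (hall j) (by simpa using hj)
    obtain ⟨-, L, hL⟩ := diag A lam hlam
    have hQ : ∀ ω, ∑ i, (A.mulVec (U ω) i) ^ 2 = lam 0 := by
      intro ω
      have e1 := hL (WithLp.toLp 2 (U ω))
      simp only at e1
      have h1 : ‖L (WithLp.toLp 2 (U ω))‖ = 1 := by
        rw [L.norm_map, EuclideanSpace.norm_eq, ← hU.2.1 ω]
        simp [eNorm]
      have h2 := EuclideanSpace.norm_sq_eq (L (WithLp.toLp 2 (U ω)))
      rw [h1] at h2
      have e2 : ∑ i, (L (WithLp.toLp 2 (U ω)) i) ^ 2 = 1 := by simpa using h2.symm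
      rw [e1]
      simp_rw [hall]
      rw [← Finset.mul_sum, e2, mul_one]
    refine tendsto_const_nhds.congr' ?_
    filter_upwards [hT.evpos, hT.evD] with u hu huD
    have hpos := hT.pos u huD
    have h1 : {ω | eNorm (X ω) > u * Real.sqrt (lam 0)} = {ω | u < R ω} := by
      ext ω
      have hr := hRpos ω
      simp only [Set.mem_ofPred_eq]
      rw [hX, event_iff hr hu hlam0, hQ, div_self hlam0.ne', sub_lt_sub_iff_left,
        div_lt_one (by positivity), sq_lt_sq₀ hu.le hr.le]
    rw [h1, ← measureReal_def, ← hTR, hC1, heq]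
    simp only [sub_self, zero_div, Real.rpow_zero]
    rw [div_self hGd.ne']
    field_simp
end
end

section
/- Let X = A R U be an elliptical random vector in ℝ^d, d ≥ 2, with F(0) = 0 and upper endpoint x_F = 1, and suppose F is in the max-domain of attraction of the Weibull law Ψ_γ for some γ ∈ (0, ∞). Then, as u ↓ 0, P(‖X‖ > (1−u)√λ_(m)) = (1+o(1)) C_* · (Γ(γ+1)/Γ(γ + (d−m+2)/2)) · (Γ(d/2)/Γ(m/2)) · (2u)^{(d−m)/2} · (1 − F(1−u)). -/
open MeasureTheory Filter Topology Matrix ProbabilityTheory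

noncomputable section

/-- Sum of squares. -/
def ssq {ι : Type*} [Fintype ι] (x : ι → ℝ) : ℝ := ∑ i, x i ^ 2

lemma ssq_nonneg {ι : Type*} [Fintype ι] (x : ι → ℝ) : 0 ≤ ssq x :=
  Finset.sum_nonneg fun _ _ => sq_nonneg _

lemma ssq_cont {ι : Type*} [Fintype ι] : Continuous (ssq : (ι → ℝ) → ℝ) := by
  unfold ssq; fun_prop

lemma ssq_smul {ι : Type*} [Fintype ι] (c : ℝ) (x : ι → ℝ) : ssq (c • x) = c ^ 2 * ssq x := by
  simp [ssq, mul_pow, Finset.mul_sum]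

lemma ssq_eq_zero {ι : Type*} [Fintype ι] {x : ι → ℝ} (h : ssq x = 0) : x = 0 := by
  unfold ssq at h
  rw [Finset.sum_eq_zero_iff_of_nonneg (fun _ _ => sq_nonneg _)] at h
  ext i
  simpa using h i (Finset.mem_univ i)

lemma gauss_int {ι : Type*} [Fintype ι] {c : ℝ} (hc : 0 < c) :
    Integrable (fun x : ι → ℝ => Real.exp (-(c * ssq x))) := by
  have h := Integrable.fintype_prod (ι := ι) (f := fun _ x => Real.exp (-c * x ^ 2))
    (μ := fun _ => volume) (fun _ => integrable_exp_neg_mul_sq hc)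
  have e : (fun x : ι → ℝ => Real.exp (-(c * ssq x))) =
      fun x : ι → ℝ => ∏ i, Real.exp (-c * x i ^ 2) := by
    ext x
    rw [← Real.exp_sum]
    simp [ssq, Finset.mul_sum]
  rw [e]
  exact h

lemma gauss_val {ι : Type*} [Fintype ι] :
    ∫ x : ι → ℝ, Real.exp (-(ssq x)) = Real.pi ^ ((Fintype.card ι : ℝ) / 2) := by
  have h := integral_fintype_prod_volume_eq_prod (ι := ι) (𝕜 := ℝ) (E := fun _ => ℝ)
    (f := fun _ x => Real.exp (-1 * x ^ 2))
  simp only [integral_gaussian, div_one, Finset.prod_const, Finset.card_univ] at h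
  rw [Real.sqrt_eq_rpow, ← Real.rpow_natCast, ← Real.rpow_mul Real.pi_pos.le] at h
  rw [show ((Fintype.card ι : ℝ) / 2) = 1 / 2 * (Fintype.card ι : ℝ) by ring, ← h]
  congr 1
  ext x
  rw [← Real.exp_sum]
  simp [ssq]

lemma zmom {ι : Type*} [Fintype ι] [Nonempty ι] (k : ℕ) :
    ∫ z : ι → ℝ, (Real.sqrt (ssq z)) ^ k * Real.exp (-(ssq z)) =
      Real.pi ^ ((Fintype.card ι : ℝ) / 2) * Real.Gamma (((Fintype.card ι : ℝ) + k) / 2) /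
        Real.Gamma ((Fintype.card ι : ℝ) / 2) := by
  have e1 : ∫ z : ι → ℝ, (Real.sqrt (ssq z)) ^ k * Real.exp (-(ssq z)) =
      ∫ z : EuclideanSpace ℝ ι, ‖z‖ ^ k * Real.exp (-(‖z‖ ^ 2)) := by
    rw [← (PiLp.volume_preserving_ofLp ι).integral_comp
      (MeasurableEquiv.toLp 2 (ι → ℝ)).symm.measurableEmbedding]
    congr 1
    ext z
    have : ssq (WithLp.ofLp z) = ‖z‖ ^ 2 := by
      simp [ssq, EuclideanSpace.norm_sq_eq]
    rw [this, Real.sqrt_sq (norm_nonneg _)]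
  set m := Fintype.card ι with hm
  have hm0 : 0 < m := Fintype.card_pos
  rw [e1, integral_fun_norm_addHaar (volume : Measure (EuclideanSpace ℝ ι))
    (fun r => r ^ k * Real.exp (-(r ^ 2)))]
  have e2 : ∫ y in Set.Ioi (0 : ℝ), y ^ (Module.finrank ℝ (EuclideanSpace ℝ ι) - 1) •
      (y ^ k * Real.exp (-(y ^ 2))) = 1 / 2 * Real.Gamma (((m : ℝ) + k) / 2) := by
    have := integral_rpow_mul_exp_neg_rpow (p := 2) (q := (m : ℝ) + k - 1) (by norm_num)
      (by have : (0 : ℝ) < m := by exact_mod_cast hm0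
          have : (0 : ℝ) ≤ k := by positivity
          linarith)
    rw [show (m : ℝ) + k - 1 + 1 = m + k by ring] at this
    rw [← this]
    refine setIntegral_congr_fun measurableSet_Ioi fun y hy => ?_
    have hy : (0 : ℝ) < y := hy
    have : (m : ℝ) + k - 1 = ((m - 1 + k : ℕ) : ℝ) := by
      push_cast [Nat.cast_sub hm0]; ring
    simp only [this, Real.rpow_natCast, smul_eq_mul, finrank_euclideanSpace, ← hm, pow_add]
    norm_num
    ring
  rw [e2, Measure.real, EuclideanSpace.volume_ball]
  have hg : Real.Gamma ((m : ℝ) / 2 + 1) = (m : ℝ) / 2 * Real.Gamma ((m : ℝ) / 2) :=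
    Real.Gamma_add_one (by positivity)
  have hgp : 0 < Real.Gamma ((m : ℝ) / 2) := Real.Gamma_pos_of_pos (by positivity)
  rw [← hm, hg]
  simp only [ENNReal.ofReal_one, one_pow, one_mul, finrank_euclideanSpace, ← hm]
  rw [ENNReal.toReal_ofReal (by positivity)]
  rw [Real.sqrt_eq_rpow, ← Real.rpow_natCast, ← Real.rpow_mul Real.pi_pos.le,
    show 1 / 2 * (m : ℝ) = (m : ℝ) / 2 by ring]
  simp only [smul_eq_mul, nsmul_eq_mul]
  field_simp

lemma mx_meas {γ : ℝ} (hγ : 0 < γ) : Continuous (fun t : ℝ => (max t 0) ^ γ) :=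
  Continuous.rpow_const (by fun_prop) fun x => Or.inr hγ.le

lemma igam {ι : Type*} [Fintype ι] {γ : ℝ} (hγ : 0 < γ) :
    (∫ y : ι → ℝ, (max (1 - ssq y) 0) ^ γ) * Real.Gamma (γ + 1 + (Fintype.card ι : ℝ) / 2) =
      Real.Gamma (γ + 1) * Real.pi ^ ((Fintype.card ι : ℝ) / 2) := by
  set k := Fintype.card ι with hk
  let f : ℝ → (ι → ℝ) → ℝ := fun s y => Real.exp (-s) * (max (s - ssq y) 0) ^ γ
  have hfc : Continuous (Function.uncurry f) := by
    have := mx_meas hγ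
    have h2 := ssq_cont (ι := ι)
    simp only [f, Function.uncurry_def]
    exact (by fun_prop : Continuous fun p : ℝ × (ι → ℝ) => Real.exp (-p.1)).mul
      (this.comp (by fun_prop : Continuous fun p : ℝ × (ι → ℝ) => p.1 - ssq p.2))
  have hfint : Integrable (Function.uncurry f)
      ((volume.restrict (Set.Ioi (0 : ℝ))).prod (volume : Measure (ι → ℝ))) := by
    have h1 : Integrable (fun s : ℝ => Real.exp (-(s / 2)) * s ^ γ)
        (volume.restrict (Set.Ioi (0 : ℝ))) := by
      have := integrableOn_rpow_mul_exp_neg_mul_rpow (s := γ) (p := 1) (b := 1 / 2)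
        (by linarith) (by norm_num) (by norm_num)
      refine this.congr_fun (fun s _ => ?_) measurableSet_Ioi
      simp only [Real.rpow_one]
      rw [mul_comm]; congr 2; ring
    have h2 := h1.mul_prod (gauss_int (ι := ι) (c := 1 / 2) (by norm_num))
    refine h2.mono' hfc.aestronglyMeasurable ?_
    have : ∀ᵐ p : ℝ × (ι → ℝ) ∂((volume.restrict (Set.Ioi (0 : ℝ))).prod volume), 0 < p.1 := by
      have h : ∀ᵐ s : ℝ ∂(volume.restrict (Set.Ioi (0 : ℝ))), 0 < s :=
        ae_restrict_mem measurableSet_Ioi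
      exact Measure.quasiMeasurePreserving_fst.ae h
    filter_upwards [this] with p hp
    have hn := ssq_nonneg p.2
    simp only [Function.uncurry, f]
    rw [Real.norm_of_nonneg (by positivity)]
    rcases le_or_gt (ssq p.2) p.1 with h | h
    · calc Real.exp (-p.1) * (max (p.1 - ssq p.2) 0) ^ γ
          ≤ Real.exp (-(p.1 / 2) + -(1 / 2 * ssq p.2)) * p.1 ^ γ := by
            gcongr
            · linarith
            · exact max_le (by linarith) hp.le
        _ = _ := by rw [Real.exp_add]; ring
    · rw [max_eq_right (by linarith), Real.zero_rpow hγ.ne', mul_zero]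
      positivity
  have hsw := integral_integral_swap hfint
  have hL : ∫ s in Set.Ioi (0 : ℝ), ∫ y, f s y =
      (∫ y : ι → ℝ, (max (1 - ssq y) 0) ^ γ) * Real.Gamma (γ + 1 + (k : ℝ) / 2) := by
    rw [Real.Gamma_eq_integral (by positivity), ← integral_const_mul]
    refine setIntegral_congr_fun measurableSet_Ioi fun s hs => ?_
    have hs : (0 : ℝ) < s := hs
    have := Measure.integral_comp_smul (volume : Measure (ι → ℝ)) (f s) (Real.sqrt s)
    simp only [Module.finrank_fintype_fun_eq_card, ← hk, smul_eq_mul] at this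
    have h3 : ∀ y, f s (Real.sqrt s • y) = Real.exp (-s) * s ^ γ * (max (1 - ssq y) 0) ^ γ := by
      intro y
      simp only [f, ssq_smul, Real.sq_sqrt hs.le]
      rw [mul_assoc, ← Real.mul_rpow hs.le (le_max_right _ _), mul_max_of_nonneg _ _ hs.le]
      congr 3 <;> ring
    simp only [h3, integral_const_mul] at this
    have h4 : (Real.sqrt s) ^ k = s ^ ((k : ℝ) / 2) := by
      rw [Real.sqrt_eq_rpow, ← Real.rpow_natCast, ← Real.rpow_mul hs.le]; congr 1; ring
    rw [h4, abs_of_pos (by positivity)] at this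
    have h5 : s ^ (γ + 1 + (k : ℝ) / 2 - 1) = s ^ γ * s ^ ((k : ℝ) / 2) := by
      rw [← Real.rpow_add hs]; congr 1; ring
    have h6 : 0 < s ^ ((k : ℝ) / 2) := by positivity
    rw [h5]
    field_simp at this
    linear_combination -this
  have hR : ∫ y, ∫ s in Set.Ioi (0 : ℝ), f s y =
      Real.Gamma (γ + 1) * Real.pi ^ ((k : ℝ) / 2) := by
    rw [hk, ← gauss_val, ← integral_const_mul]
    congr 1
    ext y
    have hn := ssq_nonneg y
    have g1 : ∫ s in Set.Ioi (0 : ℝ), f s y = ∫ s in Set.Ioi (ssq y), f s y := by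
      refine setIntegral_eq_of_subset_of_forall_sdiff_eq_zero measurableSet_Ioi
        (Set.Ioi_subset_Ioi hn) (fun s hs => ?_) |>.symm |> Eq.symm
      simp only [Set.mem_sdiff, Set.mem_Ioi, not_lt] at hs
      simp only [f]
      rw [max_eq_right (by linarith [hs.2]), Real.zero_rpow hγ.ne', mul_zero]
    have g2 : ∫ s in Set.Ioi (ssq y), f s y = ∫ s in Set.Ioi (0 : ℝ), f (s + ssq y) y := by
      have h := (measurePreserving_add_right volume (ssq y)).setIntegral_preimage_emb
        (measurableEmbedding_addRight (ssq y)) (fun s => f s y) (Set.Ioi (ssq y))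
      rw [← h]
      simp
    rw [g1, g2, Real.Gamma_eq_integral (by positivity), ← integral_mul_const]
    refine setIntegral_congr_fun measurableSet_Ioi fun s hs => ?_
    have hs : (0 : ℝ) < s := hs
    simp only [f, add_sub_cancel_right]
    rw [max_eq_left hs.le, neg_add, Real.exp_add]
    ring
  rw [← hL, ← hR, hsw]

/-- Sum of squares over the indices satisfying `p`. -/
def zf {ι : Type*} [Fintype ι] (p : ι → Prop) [DecidablePred p] (x : ι → ℝ) : ℝ :=
  ∑ i, if p i then x i ^ 2 else 0

/-- Sum of squares over the indices not satisfying `p`. -/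
def yf {ι : Type*} [Fintype ι] (p : ι → Prop) [DecidablePred p] (x : ι → ℝ) : ℝ :=
  ∑ i, if p i then 0 else x i ^ 2

lemma zf_nonneg {ι : Type*} [Fintype ι] (p : ι → Prop) [DecidablePred p] (x : ι → ℝ) :
    0 ≤ zf p x := Finset.sum_nonneg fun i _ => by split_ifs <;> positivity

lemma yf_nonneg {ι : Type*} [Fintype ι] (p : ι → Prop) [DecidablePred p] (x : ι → ℝ) :
    0 ≤ yf p x := Finset.sum_nonneg fun i _ => by split_ifs <;> positivity

lemma zf_cont {ι : Type*} [Fintype ι] (p : ι → Prop) [DecidablePred p] :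
    Continuous (zf p) := by
  unfold zf
  refine continuous_finsetSum _ fun i _ => ?_
  split_ifs <;> fun_prop

lemma yf_cont {ι : Type*} [Fintype ι] (p : ι → Prop) [DecidablePred p] :
    Continuous (yf p) := by
  unfold yf
  refine continuous_finsetSum _ fun i _ => ?_
  split_ifs <;> fun_prop

lemma zf_add_yf {ι : Type*} [Fintype ι] (p : ι → Prop) [DecidablePred p] (x : ι → ℝ) :
    zf p x + yf p x = ssq x := by
  unfold zf yf ssq
  rw [← Finset.sum_add_distrib]
  refine Finset.sum_congr rfl fun i _ => ?_
  split_ifs <;> simp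

lemma zf_eq {ι : Type*} [Fintype ι] (p : ι → Prop) [DecidablePred p] (x : ι → ℝ) :
    zf p x = ssq (fun i : {i // p i} => x i) := by
  unfold zf ssq
  rw [← Finset.sum_filter]
  exact Finset.sum_subtype _ (by simp) _

lemma yf_eq {ι : Type*} [Fintype ι] (p : ι → Prop) [DecidablePred p] (x : ι → ℝ) :
    yf p x = ssq (fun i : {i // ¬ p i} => x i) := by
  unfold yf ssq
  have : ∀ i, (if p i then 0 else x i ^ 2) = if ¬ p i then x i ^ 2 else 0 := by
    intro i; split_ifs <;> simp_all
  simp only [this]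
  rw [← Finset.sum_filter]
  exact Finset.sum_subtype _ (by simp) _

lemma ae_ne_zero_pi {ι : Type*} [Fintype ι] [Nonempty ι] : ∀ᵐ z : ι → ℝ, z ≠ 0 := by
  rw [ae_iff]
  simp

lemma zf_pos_ae {ι : Type*} [Fintype ι] (p : ι → Prop) [DecidablePred p]
    [Nonempty {i // p i}] : ∀ᵐ x : ι → ℝ, 0 < zf p x := by
  obtain ⟨i, hi⟩ := ‹Nonempty {i // p i}›
  have h : ∀ᵐ x : ι → ℝ, x i ≠ 0 := by
    have h0 : ∀ᵐ t : ℝ, t ≠ 0 := by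
      rw [ae_iff]
      simp
    exact (Measure.quasiMeasurePreserving_eval (fun _ : ι => (volume : Measure ℝ)) i).ae h0
  filter_upwards [h] with x hx
  rw [zf_eq]
  refine lt_of_le_of_ne (ssq_nonneg _) fun h0 => hx ?_
  exact congrFun (ssq_eq_zero h0.symm) ⟨i, hi⟩

lemma limit_int {ι : Type*} [Fintype ι] (p : ι → Prop) [DecidablePred p]
    [Nonempty {i // p i}] {γ : ℝ} (hγ : 0 < γ) :
    ∫ x : ι → ℝ, (max (1 - yf p x / zf p x) 0) ^ γ * Real.exp (-(zf p x)) =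
      Real.pi ^ ((Fintype.card {i // p i} : ℝ) / 2) *
        Real.Gamma (((Fintype.card {i // p i} : ℝ) + (Fintype.card {i // ¬ p i} : ℕ)) / 2) /
        Real.Gamma ((Fintype.card {i // p i} : ℝ) / 2) *
      (Real.Gamma (γ + 1) * Real.pi ^ ((Fintype.card {i // ¬ p i} : ℝ) / 2) /
        Real.Gamma (γ + 1 + (Fintype.card {i // ¬ p i} : ℝ) / 2)) := by
  have hΓ : 0 < Real.Gamma (γ + 1 + (Fintype.card {i // ¬ p i} : ℝ) / 2) :=
    Real.Gamma_pos_of_pos (by positivity)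
  rw [← igam (ι := {i // ¬ p i}) hγ, mul_div_cancel_right₀ _ hΓ.ne']
  let g : ({i // p i} → ℝ) × ({i // ¬ p i} → ℝ) → ℝ := fun q =>
    (max (1 - ssq q.2 / ssq q.1) 0) ^ γ * Real.exp (-(ssq q.1))
  have h1 : ∫ x : ι → ℝ, (max (1 - yf p x / zf p x) 0) ^ γ * Real.exp (-(zf p x)) =
      ∫ q, g q := by
    rw [← (volume_preserving_piEquivPiSubtypeProd (fun _ : ι => ℝ) p).integral_comp
      (MeasurableEquiv.measurableEmbedding _)]
    congr 1
    ext x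
    simp only [g, zf_eq, yf_eq]
    rfl
  have hgm : Measurable g := by
    have a1 : Measurable fun q : ({i // p i} → ℝ) × ({i // ¬ p i} → ℝ) => ssq q.1 :=
      ssq_cont.measurable.comp measurable_fst
    have a2 : Measurable fun q : ({i // p i} → ℝ) × ({i // ¬ p i} → ℝ) => ssq q.2 :=
      ssq_cont.measurable.comp measurable_snd
    exact ((mx_meas hγ).measurable.comp (measurable_const.sub (a2.div a1))).mul
      (Real.measurable_exp.comp a1.neg)
  have hgi : Integrable g (volume.prod volume) := by
    refine ((gauss_int (ι := {i // p i}) (c := 1 / 2) (by norm_num)).mul_prod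
      (gauss_int (ι := {i // ¬ p i}) (c := 1 / 2) (by norm_num))).mono'
      hgm.aestronglyMeasurable ?_
    have : ∀ᵐ q : ({i // p i} → ℝ) × ({i // ¬ p i} → ℝ) ∂(volume.prod volume), q.1 ≠ 0 :=
      Measure.quasiMeasurePreserving_fst.ae ae_ne_zero_pi
    filter_upwards [this] with q hq
    have hz : 0 < ssq q.1 := lt_of_le_of_ne (ssq_nonneg _) fun h => hq (ssq_eq_zero h.symm)
    have hy := ssq_nonneg q.2
    simp only [g]
    rw [Real.norm_of_nonneg (by positivity), ← Real.exp_add]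
    rcases le_or_gt (ssq q.2) (ssq q.1) with h | h
    · have : (max (1 - ssq q.2 / ssq q.1) 0) ^ γ ≤ 1 := by
        apply Real.rpow_le_one (le_max_right _ _) _ hγ.le
        have : 0 ≤ ssq q.2 / ssq q.1 := by positivity
        exact max_le (by linarith) zero_le_one
      calc _ ≤ 1 * Real.exp (-(ssq q.1)) := by gcongr
        _ ≤ _ := by rw [one_mul]; gcongr; linarith
    · have : 1 < ssq q.2 / ssq q.1 := by rwa [one_lt_div hz]
      rw [max_eq_right (by linarith), Real.zero_rpow hγ.ne', zero_mul]
      positivity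
  rw [h1, Measure.volume_eq_prod, integral_prod _ hgi, ← zmom, ← integral_mul_const]
  refine integral_congr_ae ?_
  filter_upwards [ae_ne_zero_pi (ι := {i // p i})] with z hz
  have hz : 0 < ssq z := lt_of_le_of_ne (ssq_nonneg _) fun h => hz (ssq_eq_zero h.symm)
  have := Measure.integral_comp_smul (volume : Measure ({i // ¬ p i} → ℝ))
    (fun y => g (z, y)) (Real.sqrt (ssq z))
  have hs : 0 < Real.sqrt (ssq z) := Real.sqrt_pos.2 hz
  have h3 : ∀ y, g (z, Real.sqrt (ssq z) • y) =
      (max (1 - ssq y) 0) ^ γ * Real.exp (-(ssq z)) := by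
    intro y
    simp only [g, ssq_smul, Real.sq_sqrt hz.le]
    rw [mul_div_cancel_left₀ _ hz.ne']
  simp only [h3, integral_mul_const, Module.finrank_fintype_fun_eq_card, smul_eq_mul] at this
  rw [abs_of_pos (by positivity)] at this
  field_simp at this
  rw [← this]
  ring

lemma mda_seq {T : ℝ → ℝ} (hT : Antitone T) (hT0 : ∀ x, 0 ≤ T x)
    (hTpos : ∀ t, 0 < t → 0 < T (1 - t)) {γ : ℝ} (hγ : 0 < γ)
    (hM : ∀ x : ℝ, 0 < x → Tendsto (fun t => T (1 - t * x) / T (1 - t)) (𝓝[>] 0) (𝓝 (x ^ γ)))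
    {ξ : ℝ → ℝ} {a : ℝ} (hξ : Tendsto ξ (𝓝[>] 0) (𝓝 a)) :
    Tendsto (fun t => T (1 - t * ξ t) / T (1 - t)) (𝓝[>] 0) (𝓝 ((max a 0) ^ γ)) := by
  have hpos : ∀ᶠ t : ℝ in 𝓝[>] 0, 0 < t := self_mem_nhdsWithin
  have hc := (mx_meas hγ)
  rw [tendsto_order]
  constructor
  · intro l hl
    rcases le_or_gt a 0 with ha | ha
    · rw [max_eq_right ha, Real.zero_rpow hγ.ne'] at hl
      filter_upwards [hpos] with t ht
      exact hl.trans_le (div_nonneg (hT0 _) (hT0 _))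
    · have h1 : ∀ᶠ x in 𝓝[<] a, l < (max x 0) ^ γ :=
        ((hc.tendsto a).mono_left nhdsWithin_le_nhds).eventually (lt_mem_nhds hl)
      have h2 : ∀ᶠ x in 𝓝[<] a, 0 < x :=
        nhdsWithin_le_nhds (lt_mem_nhds ha)
      have h3 : ∀ᶠ x in 𝓝[<] a, x < a := self_mem_nhdsWithin
      obtain ⟨x, hx1, hx2, hx3⟩ := (h1.and (h2.and h3)).exists
      rw [max_eq_left hx2.le] at hx1
      filter_upwards [hpos, (hM x hx2).eventually (lt_mem_nhds hx1),
        hξ.eventually (lt_mem_nhds hx3)] with t ht h4 h5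
      refine h4.trans_le ?_
      have := hTpos t ht
      gcongr
      apply hT
      nlinarith
  · intro l hl
    have h1 : ∀ᶠ x in 𝓝[>] (max a 0), (max x 0) ^ γ < l := by
      refine ((hc.tendsto (max a 0)).mono_left nhdsWithin_le_nhds).eventually (gt_mem_nhds ?_)
      simpa using hl
    have h3 : ∀ᶠ x in 𝓝[>] (max a 0), max a 0 < x := self_mem_nhdsWithin
    obtain ⟨x, hx1, hx3⟩ := (h1.and h3).exists
    have hx2 : 0 < x := (le_max_right _ _).trans_lt hx3
    have hx4 : a < x := (le_max_left _ _).trans_lt hx3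
    rw [max_eq_left hx2.le] at hx1
    filter_upwards [hpos, (hM x hx2).eventually (gt_mem_nhds hx1),
      hξ.eventually (gt_mem_nhds hx4)] with t ht h4 h5
    refine lt_of_le_of_lt ?_ h4
    have := hTpos t ht
    gcongr
    apply hT
    nlinarith

/-- Conditional exceedance probability given the value `q` of the quadratic form. -/
def hh (T : ℝ → ℝ) (u q : ℝ) : ℝ := if q < 1 then T ((1 - u) / Real.sqrt (1 - q)) else 0

lemma hh_meas {T : ℝ → ℝ} (hT : Antitone T) (u : ℝ) : Measurable (hh T u) := by
  unfold hh
  refine Measurable.ite measurableSet_Iio (hT.measurable.comp ?_) measurable_const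
  fun_prop

lemma hh_lim {T : ℝ → ℝ} (hT : Antitone T) (hT0 : ∀ x, 0 ≤ T x)
    (hTpos : ∀ t, 0 < t → 0 < T (1 - t)) {γ : ℝ} (hγ : 0 < γ)
    (hM : ∀ x : ℝ, 0 < x → Tendsto (fun t => T (1 - t * x) / T (1 - t)) (𝓝[>] 0) (𝓝 (x ^ γ)))
    {Y Z W : ℝ} (hZ : 0 < Z) :
    Tendsto (fun u => hh T u (2 * u * Y / (Z + 2 * u * W)) / T (1 - u)) (𝓝[>] 0)
      (𝓝 ((max (1 - Y / Z) 0) ^ γ)) := by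
  have hpos : ∀ᶠ t : ℝ in 𝓝[>] 0, 0 < t := self_mem_nhdsWithin
  let r : ℝ → ℝ := fun u => 2 * Y / (Z + 2 * u * W)
  have hr : Tendsto r (𝓝[>] 0) (𝓝 (2 * Y / Z)) := by
    have : ContinuousAt r 0 := by
      apply ContinuousAt.div <;> first | fun_prop | simp [hZ.ne']
    have := this.tendsto.mono_left (nhdsWithin_le_nhds (s := Set.Ioi 0))
    simpa [r] using this
  have hid : Tendsto (fun u : ℝ => u) (𝓝[>] 0) (𝓝 0) := tendsto_id.mono_left nhdsWithin_le_nhds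
  let q : ℝ → ℝ := fun u => u * r u
  have hq : Tendsto q (𝓝[>] 0) (𝓝 0) := by simpa using hid.mul hr
  have hsq : Tendsto (fun u => Real.sqrt (1 - q u)) (𝓝[>] 0) (𝓝 1) := by
    have := (hq.const_sub 1).sqrt
    simpa using this
  let ξ : ℝ → ℝ := fun u => (1 - r u / (1 + Real.sqrt (1 - q u))) / Real.sqrt (1 - q u)
  have hξ : Tendsto ξ (𝓝[>] 0) (𝓝 (1 - Y / Z)) := by
    have := ((hr.div (hsq.const_add 1) (by norm_num)).const_sub 1).div hsq (by norm_num)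
    have e : (1 - 2 * Y / Z / (1 + 1)) / 1 = 1 - Y / Z := by
      field_simp
      ring
    rw [e] at this
    exact this
  refine (mda_seq hT hT0 hTpos hγ hM hξ).congr' ?_
  filter_upwards [hpos, hq.eventually (gt_mem_nhds zero_lt_one)] with u hu hq1
  have e : 2 * u * Y / (Z + 2 * u * W) = q u := by simp only [q, r]; ring
  rw [e, hh, if_pos hq1]
  congr 2
  have hs : 0 < Real.sqrt (1 - q u) := Real.sqrt_pos.2 (by linarith)
  have hs2 : Real.sqrt (1 - q u) ^ 2 = 1 - q u := Real.sq_sqrt (by linarith)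
  have hqe : q u = u * r u := rfl
  simp only [ξ]
  set s := Real.sqrt (1 - q u)
  field_simp
  rw [hqe] at hs2
  linear_combination hs2

/-- Rescaled remainder of the squared norm. -/
def wf {ι : Type*} [Fintype ι] (p : ι → Prop) [DecidablePred p] (b : ι → ℝ) (x : ι → ℝ) : ℝ :=
  ∑ i, if p i then 0 else x i ^ 2 / b i

lemma exists_beta {ι : Type*} [Fintype ι] (p : ι → Prop) [DecidablePred p] (b : ι → ℝ)
    (hb : ∀ i, ¬ p i → 0 < b i) : ∃ β, 0 < β ∧ ∀ i, ¬ p i → β ≤ b i := by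
  by_cases h : (Finset.univ.filter fun i => ¬ p i).Nonempty
  · obtain ⟨j, hj, hj2⟩ := Finset.exists_min_image _ b h
    exact ⟨b j, hb j (by simpa using hj), fun i hi => hj2 i (by simpa using hi)⟩
  · refine ⟨1, one_pos, fun i hi => absurd ⟨i, by simpa using hi⟩ h⟩

lemma lim_integral {ι : Type*} [Fintype ι] (p : ι → Prop) [DecidablePred p]
    [Nonempty {i // p i}] (b : ι → ℝ) (hb : ∀ i, ¬ p i → 0 < b i)
    {T : ℝ → ℝ} (hT : Antitone T) (hT0 : ∀ x, 0 ≤ T x) (hT1 : ∀ x, 1 ≤ x → T x = 0)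
    (hTpos : ∀ t, 0 < t → 0 < T (1 - t)) {γ : ℝ} (hγ : 0 < γ)
    (hM : ∀ x : ℝ, 0 < x → Tendsto (fun t => T (1 - t * x) / T (1 - t)) (𝓝[>] 0) (𝓝 (x ^ γ))) :
    Tendsto (fun u => ∫ x : ι → ℝ, hh T u (2 * u * yf p x / (zf p x + 2 * u * wf p b x)) /
        T (1 - u) * Real.exp (-(zf p x + 2 * u * wf p b x))) (𝓝[>] 0)
      (𝓝 (∫ x : ι → ℝ, (max (1 - yf p x / zf p x) 0) ^ γ * Real.exp (-(zf p x)))) := by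
  obtain ⟨β, hβ, hβb⟩ := exists_beta p b hb
  have hwc : Continuous (wf p b) := by
    unfold wf
    refine continuous_finsetSum _ fun i _ => ?_
    split_ifs <;> fun_prop
  have hw0 : ∀ x, 0 ≤ wf p b x := fun x => Finset.sum_nonneg fun i _ => by
    split_ifs with h
    · exact le_rfl
    · have := hb i h; positivity
  have hwy : ∀ x, β * wf p b x ≤ yf p x := fun x => by
    unfold wf yf
    rw [Finset.mul_sum]
    refine Finset.sum_le_sum fun i _ => ?_
    split_ifs with h
    · simp
    · have := hb i h
      have h2 := hβb i h
      rw [mul_div_assoc', div_le_iff₀ this, mul_comm]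
      gcongr
  have hym := (yf_cont p).measurable
  have hzm := (zf_cont p).measurable
  have hwm := hwc.measurable
  have hpos : ∀ᶠ t : ℝ in 𝓝[>] 0, 0 < t := self_mem_nhdsWithin
  have hid : Tendsto (fun u : ℝ => u) (𝓝[>] 0) (𝓝 0) := tendsto_id.mono_left nhdsWithin_le_nhds
  refine tendsto_integral_filter_of_dominated_convergence
    (fun x => Real.exp (-(1 / 4 * ssq x))) ?_ ?_ (gauss_int (by norm_num)) ?_
  · refine Eventually.of_forall fun u => Measurable.aestronglyMeasurable ?_
    have hq : Measurable fun x : ι → ℝ => 2 * u * yf p x / (zf p x + 2 * u * wf p b x) := by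
      fun_prop
    have := (hh_meas hT u).comp hq
    exact (this.div_const _).mul (by fun_prop)
  · filter_upwards [hpos, hid.eventually (gt_mem_nhds zero_lt_one),
      hid.eventually (gt_mem_nhds (show 0 < β / 4 by positivity))] with u hu hu1 huβ
    filter_upwards [zf_pos_ae p] with x hz
    have hy := yf_nonneg p x
    have hw := hw0 x
    have hwy := hwy x
    have hS := zf_add_yf p x
    have hTu := hTpos u hu
    have hden : 0 < zf p x + 2 * u * wf p b x := by positivity
    set q := 2 * u * yf p x / (zf p x + 2 * u * wf p b x) with hq
    have hq0 : 0 ≤ q := by positivity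
    have hh0 : 0 ≤ hh T u q := by
      unfold hh; split_ifs
      · exact hT0 _
      · exact le_rfl
    rw [Real.norm_of_nonneg (by positivity)]
    by_cases hne : hh T u q = 0
    · rw [hne, zero_div, zero_mul]; positivity
    have hq1 : q < 1 := by
      by_contra h; exact hne (by rw [hh, if_neg h])
    have hs : 0 < Real.sqrt (1 - q) := Real.sqrt_pos.2 (by linarith)
    have hle : hh T u q ≤ T (1 - u) := by
      rw [hh, if_pos hq1]
      apply hT
      rw [le_div_iff₀ hs]
      have : Real.sqrt (1 - q) ≤ 1 := by
        rw [Real.sqrt_le_one]; linarith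
      nlinarith
    have hlt : 1 - u < Real.sqrt (1 - q) := by
      by_contra h
      push Not at h
      apply hne
      rw [hh, if_pos hq1]
      apply hT1
      rwa [one_le_div hs]
    have hlt2 : (1 - u) ^ 2 < 1 - q := by
      rwa [Real.lt_sqrt (by linarith)] at hlt
    have hq2 : q < 2 * u := by nlinarith
    rw [hq, div_lt_iff₀ hden] at hq2
    have h5 : yf p x < zf p x + 2 * u * wf p b x := by
      exact lt_of_mul_lt_mul_left (by linarith) (show 0 ≤ 2 * u by positivity)
    have h6 : u * wf p b x ≤ β / 4 * wf p b x := by gcongr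
    have h7 : yf p x ≤ 2 * zf p x := by linarith
    calc hh T u q / T (1 - u) * Real.exp (-(zf p x + 2 * u * wf p b x))
        ≤ 1 * Real.exp (-(1 / 4 * ssq x)) := by
          gcongr
          · rwa [div_le_one hTu]
          · have : 0 ≤ 2 * u * wf p b x := by positivity
            linarith
      _ = _ := one_mul _
  · filter_upwards [zf_pos_ae p] with x hz
    refine (hh_lim hT hT0 hTpos hγ hM hz).mul ?_
    have : Continuous fun u : ℝ => Real.exp (-(zf p x + 2 * u * wf p b x)) := by fun_prop
    have := (this.tendsto 0).mono_left (nhdsWithin_le_nhds (s := Set.Ioi 0))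
    simpa using this

lemma change_var {ι : Type*} [Fintype ι] [DecidableEq ι] (p : ι → Prop) [DecidablePred p]
    (b : ι → ℝ) (hb : ∀ i, ¬ p i → 0 < b i) (hb0 : ∀ i, p i → b i = 0)
    {T : ℝ → ℝ} (hT : Antitone T) {u : ℝ} (hu : 0 < u) :
    ∫ x : ι → ℝ, hh T u ((∑ i, b i * x i ^ 2) / ssq x) * Real.exp (-(ssq x)) =
      (2 * u) ^ ((Fintype.card {i // ¬ p i} : ℝ) / 2) *
        (∏ i ∈ Finset.univ.filter (fun i => ¬ p i), b i ^ (-(1 / 2 : ℝ))) *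
      ∫ x : ι → ℝ, hh T u (2 * u * yf p x / (zf p x + 2 * u * wf p b x)) *
        Real.exp (-(zf p x + 2 * u * wf p b x)) := by
  let δ : ι → ℝ := fun i => if p i then 1 else (2 * u) ^ (1 / 2 : ℝ) * b i ^ (-(1 / 2 : ℝ))
  have hδ : ∀ i, 0 < δ i := fun i => by
    simp only [δ]; split_ifs with h
    · exact one_pos
    · have := hb i h; positivity
  have hδ2 : ∀ i, ¬ p i → δ i ^ 2 = 2 * u / b i := fun i h => by
    have := hb i h
    simp only [δ, if_neg h]
    rw [mul_pow, ← Real.rpow_natCast, ← Real.rpow_mul (by positivity), ← Real.rpow_natCast,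
      ← Real.rpow_mul (by positivity)]
    norm_num
    rw [Real.rpow_neg_one]; rfl
  have hdet : (Matrix.diagonal δ).det = (2 * u) ^ ((Fintype.card {i // ¬ p i} : ℝ) / 2) *
        (∏ i ∈ Finset.univ.filter (fun i => ¬ p i), b i ^ (-(1 / 2 : ℝ))) := by
    rw [Matrix.det_diagonal]
    have : ∀ i, δ i = if ¬ p i then (2 * u) ^ (1 / 2 : ℝ) * b i ^ (-(1 / 2 : ℝ)) else 1 := by
      intro i; simp only [δ]; split_ifs <;> simp_all
    simp only [this]
    rw [← Finset.prod_filter, Finset.prod_mul_distrib, Finset.prod_const,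
      Fintype.card_subtype, ← Real.rpow_natCast, ← Real.rpow_mul (by positivity)]
    congr 2
    ring
  have hdp : 0 < (Matrix.diagonal δ).det := by
    rw [Matrix.det_diagonal]; exact Finset.prod_pos fun i _ => hδ i
  rw [← hdet]
  have hmap := Real.map_matrix_volume_pi_eq_smul_volume_pi hdp.ne'
  let f : (ι → ℝ) → ℝ := fun x =>
    hh T u ((∑ i, b i * x i ^ 2) / ssq x) * Real.exp (-(ssq x))
  have hsm : Measurable (ssq : (ι → ℝ) → ℝ) := ssq_cont.measurable
  have hf : Measurable f := by
    have : Measurable fun x : ι → ℝ => (∑ i, b i * x i ^ 2) / ssq x := by fun_prop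
    exact ((hh_meas hT u).comp this).mul (by fun_prop)
  have h1 : ∫ x, f (Matrix.toLin' (Matrix.diagonal δ) x) =
      |(Matrix.diagonal δ).det⁻¹| * ∫ x, f x := by
    rw [← integral_map (μ := volume) (φ := Matrix.toLin' (Matrix.diagonal δ))
      (LinearMap.continuous_of_finiteDimensional _).aemeasurable hf.aestronglyMeasurable, hmap,
      integral_smul_measure, ENNReal.toReal_ofReal (abs_nonneg _), smul_eq_mul]
  rw [abs_of_pos (by positivity)] at h1
  have h2 : ∀ x, f (Matrix.toLin' (Matrix.diagonal δ) x) =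
      hh T u (2 * u * yf p x / (zf p x + 2 * u * wf p b x)) *
        Real.exp (-(zf p x + 2 * u * wf p b x)) := by
    intro x
    have e1 : ∀ i, (Matrix.toLin' (Matrix.diagonal δ) x) i = δ i * x i := fun i => by
      simp [Matrix.toLin'_apply, Matrix.mulVec_diagonal]
    have e2 : ssq (Matrix.toLin' (Matrix.diagonal δ) x) = zf p x + 2 * u * wf p b x := by
      simp only [ssq, e1, zf, wf, Finset.mul_sum]
      rw [← Finset.sum_add_distrib]
      refine Finset.sum_congr rfl fun i _ => ?_
      rw [mul_pow]
      by_cases h : p i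
      · simp [δ, h]
      · rw [hδ2 i h]; simp [h]; ring
    have e3 : ∑ i, b i * (Matrix.toLin' (Matrix.diagonal δ) x) i ^ 2 = 2 * u * yf p x := by
      simp only [e1, yf, Finset.mul_sum]
      refine Finset.sum_congr rfl fun i _ => ?_
      rw [mul_pow]
      by_cases h : p i
      · simp [h, hb0 i h]
      · rw [hδ2 i h]; have := hb i h; simp [h]; field_simp
    simp only [f, e2, e3]
  simp only [h2] at h1
  rw [h1]
  field_simp
  rfl

lemma ssq_eq_dot {ι : Type*} [Fintype ι] (x : ι → ℝ) : ssq x = x ⬝ᵥ x := by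
  simp [ssq, dotProduct, sq]

lemma ssq_orth {ι : Type*} [Fintype ι] [DecidableEq ι] {D : Matrix ι ι ℝ} (hD : D * Dᵀ = 1)
    (x : ι → ℝ) : ssq (D.mulVec x) = ssq x := by
  have hD' : Dᵀ * D = 1 := mul_eq_one_comm.1 hD
  rw [ssq_eq_dot, ssq_eq_dot, Matrix.dotProduct_mulVec, ← Matrix.mulVec_transpose,
    Matrix.mulVec_mulVec, hD', Matrix.one_mulVec]

lemma householder {ι : Type*} [Fintype ι] [DecidableEq ι] (a b : ι → ℝ) (h : ssq a = ssq b) :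
    ∃ D : Matrix ι ι ℝ, D * Dᵀ = 1 ∧ Dᵀ.mulVec a = b := by
  by_cases hab : a = b
  · exact ⟨1, by simp, by simp [hab]⟩
  set n := a - b with hn
  have hn0 : n ⬝ᵥ n ≠ 0 := by
    rw [← ssq_eq_dot]
    intro h0
    exact hab (sub_eq_zero.1 (ssq_eq_zero h0))
  let D : Matrix ι ι ℝ := 1 - (2 / (n ⬝ᵥ n)) • Matrix.vecMulVec n n
  have hDt : Dᵀ = D := by
    simp only [D, Matrix.transpose_sub, Matrix.transpose_one, Matrix.transpose_smul,
      Matrix.transpose_vecMulVec]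
  refine ⟨D, ?_, ?_⟩
  · rw [hDt]
    have hV : Matrix.vecMulVec n n * Matrix.vecMulVec n n =
        (n ⬝ᵥ n) • Matrix.vecMulVec n n := by
      rw [Matrix.vecMulVec_mul_vecMulVec]
      ext i j
      simp [Matrix.vecMulVec_apply]
      ring
    simp only [D, sub_mul, mul_sub, one_mul, mul_one, smul_mul_assoc, mul_smul_comm, hV, smul_smul]
    rw [show 2 / (n ⬝ᵥ n) * (n ⬝ᵥ n) = 2 by field_simp]
    ext i j
    simp only [Matrix.sub_apply, Matrix.smul_apply, smul_eq_mul]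
    ring
  · rw [hDt]
    have hna : n ⬝ᵥ n = 2 * (n ⬝ᵥ a) := by
      rw [ssq_eq_dot, ssq_eq_dot] at h
      have hc := dotProduct_comm a b
      rw [hn]
      simp only [dotProduct_sub, sub_dotProduct]
      linarith
    simp only [D, Matrix.sub_mulVec, Matrix.one_mulVec, Matrix.smul_mulVec,
      Matrix.vecMulVec_mulVec]
    have hna' : n ⬝ᵥ a ≠ 0 := fun h0 => hn0 (by rw [hna, h0, mul_zero])
    ext i
    rw [hna]
    simp only [Pi.sub_apply, Pi.smul_apply, smul_eq_mul, hn, MulOpposite.smul_eq_mul_unop,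
      MulOpposite.unop_op]
    rw [← hn]
    field_simp
    ring

/-- The characteristic function in terms of the dot product. -/
def cf {d : ℕ} (μ : Measure (Fin d → ℝ)) (w : Fin d → ℝ) : ℂ :=
  ∫ v, (Real.probChar (v ⬝ᵥ w) : ℂ) ∂μ

lemma eNorm_one {d : ℕ} {x : Fin d → ℝ} (h : eNorm x = 1) : ssq x = 1 := by
  unfold eNorm at h
  rwa [Real.sqrt_eq_one] at h

lemma uniform_ae {Ω : Type*} [MeasurableSpace Ω] {P : Measure Ω}
    {d : ℕ} {U : Ω → Fin d → ℝ} (hU : IsUniformOnSphere P U) : ∀ᵐ v ∂(P.map U), ssq v = 1 := by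
  rw [ae_map_iff hU.1.aemeasurable
    (measurableSet_eq_fun ssq_cont.measurable measurable_const)]
  exact Eventually.of_forall fun ω => eNorm_one (hU.2.1 ω)

lemma pc_cont : Continuous fun t : ℝ => (Real.probChar t : ℂ) :=
  continuous_subtype_val.comp Real.continuous_probChar

lemma mulVec_cont {d : ℕ} (D : Matrix (Fin d) (Fin d) ℝ) : Continuous fun v => D.mulVec v :=
  Continuous.matrix_mulVec continuous_const continuous_id

lemma map_mulVec {Ω : Type*} [MeasurableSpace Ω] {P : Measure Ω}
    {d : ℕ} {U : Ω → Fin d → ℝ} (hU : IsUniformOnSphere P U)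
    {D : Matrix (Fin d) (Fin d) ℝ} (hD : D * Dᵀ = 1) :
    (P.map U).map (fun v => D.mulVec v) = P.map U := by
  rw [Measure.map_map (mulVec_cont D).measurable hU.1]
  exact hU.2.2 D hD

lemma cf_congr {Ω : Type*} [MeasurableSpace Ω] {P : Measure Ω}
    {d : ℕ} {U : Ω → Fin d → ℝ} (hU : IsUniformOnSphere P U) {a b : Fin d → ℝ}
    (h : ssq a = ssq b) : cf (P.map U) a = cf (P.map U) b := by
  obtain ⟨D, hD, rfl⟩ := householder a b h
  unfold cf
  conv_lhs => rw [← map_mulVec hU hD]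
  rw [integral_map (mulVec_cont D).aemeasurable]
  · congr 1
    ext v
    rw [Matrix.dotProduct_mulVec, Matrix.vecMul_transpose]
  · refine Continuous.aestronglyMeasurable ?_
    exact pc_cont.comp (by fun_prop)

lemma cf_aux {Ω Ω' : Type*} [MeasurableSpace Ω] [MeasurableSpace Ω'] {P : Measure Ω}
    {P' : Measure Ω'} [IsProbabilityMeasure P] [IsProbabilityMeasure P']
    {d : ℕ} {U : Ω → Fin d → ℝ} {U' : Ω' → Fin d → ℝ} (hU : IsUniformOnSphere P U)
    (hU' : IsUniformOnSphere P' U') (w : Fin d → ℝ) :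
    cf (P.map U) w = ∫ v', ∫ v, (Real.probChar (Real.sqrt (ssq w) * (v ⬝ᵥ v')) : ℂ) ∂(P.map U)
      ∂(P'.map U') := by
  have : IsProbabilityMeasure (P'.map U') := Measure.isProbabilityMeasure_map hU'.1.aemeasurable
  have : ∀ᵐ v' ∂(P'.map U'), ∫ v, (Real.probChar (Real.sqrt (ssq w) * (v ⬝ᵥ v')) : ℂ) ∂(P.map U) =
      cf (P.map U) w := by
    filter_upwards [uniform_ae hU'] with v' hv'
    rw [cf_congr hU (a := w) (b := Real.sqrt (ssq w) • v')
      (by rw [ssq_smul, hv', Real.sq_sqrt (ssq_nonneg _), mul_one])]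
    simp [cf, dotProduct_smul]
  rw [integral_congr_ae this]
  simp

lemma uniform_unique {Ω Ω' : Type*} [MeasurableSpace Ω] [MeasurableSpace Ω'] {P : Measure Ω}
    {P' : Measure Ω'} [IsProbabilityMeasure P] [IsProbabilityMeasure P']
    {d : ℕ} {U : Ω → Fin d → ℝ} {U' : Ω' → Fin d → ℝ} (hU : IsUniformOnSphere P U)
    (hU' : IsUniformOnSphere P' U') : P.map U = P'.map U' := by
  have : IsProbabilityMeasure (P'.map U') := Measure.isProbabilityMeasure_map hU'.1.aemeasurable
  have : IsProbabilityMeasure (P.map U) := Measure.isProbabilityMeasure_map hU.1.aemeasurable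
  have key : ∀ w, cf (P.map U) w = cf (P'.map U') w := by
    intro w
    rw [cf_aux hU hU' w, cf_aux hU' hU w]
    rw [integral_integral_swap]
    · congr 1; ext v; congr 1; ext v'; rw [dotProduct_comm]
    · refine Integrable.mono' (integrable_const (1 : ℝ)) (Continuous.aestronglyMeasurable ?_) ?_
      · exact pc_cont.comp (by unfold dotProduct; fun_prop)
      · exact Eventually.of_forall fun x => (Circle.norm_coe _).le
  let L : (Fin d → ℝ) →ₗ[ℝ] (Fin d → ℝ) →ₗ[ℝ] ℝ := dotProductBilin ℝ ℝ
  refine ext_of_integral_char_eq (L := L) Real.continuous_probChar Real.probChar_ne_one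
    ?_ ?_ ?_
  · intro v hv h0
    apply hv
    apply ssq_eq_zero
    rw [ssq_eq_dot]
    exact congrArg (fun f => f v) h0
  · change Continuous fun p : (Fin d → ℝ) × (Fin d → ℝ) => p.1 ⬝ᵥ p.2
    unfold dotProduct; fun_prop
  · exact key

/-- The Gaussian weight with total mass one. -/
def gw {d : ℕ} (x : Fin d → ℝ) : ℝ := Real.pi ^ (-((d : ℝ) / 2)) * Real.exp (-(ssq x))

/-- The measure with density `gw`. -/
def gm (d : ℕ) : Measure (Fin d → ℝ) := volume.withDensity fun x => ENNReal.ofReal (gw x)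

lemma gw_nonneg {d : ℕ} (x : Fin d → ℝ) : 0 ≤ gw x := by
  unfold gw; have := Real.pi_pos; positivity

lemma gw_meas {d : ℕ} : Measurable (gw : (Fin d → ℝ) → ℝ) := by
  have : Measurable (ssq : (Fin d → ℝ) → ℝ) := ssq_cont.measurable
  unfold gw; fun_prop

lemma gm_prob (d : ℕ) : IsProbabilityMeasure (gm d) := by
  constructor
  rw [gm, withDensity_apply _ MeasurableSet.univ, Measure.restrict_univ,
    ← ofReal_integral_eq_lintegral_ofReal _ (Eventually.of_forall gw_nonneg)]
  · unfold gw
    rw [integral_const_mul, gauss_val, ← Real.rpow_add Real.pi_pos]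
    simp
  · unfold gw
    have := gauss_int (ι := Fin d) one_pos
    simp only [one_mul] at this
    exact this.const_mul _

/-- Normalisation to the unit sphere. -/
def nv {d : ℕ} [NeZero d] (x : Fin d → ℝ) : Fin d → ℝ :=
  if ssq x = 0 then Pi.single 0 1 else (Real.sqrt (ssq x))⁻¹ • x

lemma nv_uniform (d : ℕ) [NeZero d] : IsUniformOnSphere (gm d) (nv : (Fin d → ℝ) → Fin d → ℝ) := by
  have hsm : Measurable (ssq : (Fin d → ℝ) → ℝ) := ssq_cont.measurable
  have hnv : Measurable (nv : (Fin d → ℝ) → Fin d → ℝ) := by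
    unfold nv
    exact Measurable.ite (measurableSet_eq_fun hsm measurable_const) measurable_const
      (by fun_prop)
  refine ⟨hnv, fun x => ?_, fun D hD => ?_⟩
  · change Real.sqrt (ssq (nv x)) = 1
    rw [Real.sqrt_eq_one]
    unfold nv
    split_ifs with h
    · simp [ssq, Pi.single_apply]
    · have : 0 < ssq x := lt_of_le_of_ne (ssq_nonneg _) (Ne.symm h)
      rw [ssq_smul, inv_pow, Real.sq_sqrt this.le, inv_mul_cancel₀ h]
  · have hdet : |D.det| = 1 := by
      have := congrArg Matrix.det hD
      rw [Matrix.det_mul, Matrix.det_transpose, Matrix.det_one] at this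
      rcases mul_self_eq_one_iff.1 this with h | h <;> simp [h]
    have hmp : MeasurePreserving (fun v => D.mulVec v) (volume : Measure (Fin d → ℝ)) volume := by
      refine ⟨(mulVec_cont D).measurable, ?_⟩
      have := Real.map_matrix_volume_pi_eq_smul_volume_pi (M := D)
        (fun h => by simp [h] at hdet)
      rw [abs_inv, hdet, inv_one, ENNReal.ofReal_one, one_smul] at this
      exact this
    have hmap : (gm d).map (fun v => D.mulVec v) = gm d := by
      ext s hs
      rw [Measure.map_apply hmp.measurable hs, gm, withDensity_apply _ hs,
        withDensity_apply _ (hmp.measurable hs),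
        ← hmp.setLIntegral_comp_preimage hs gw_meas.ennreal_ofReal]
      simp only [gw, ssq_orth hD]
    conv_rhs => rw [← hmap, Measure.map_map hnv hmp.measurable]
    refine Measure.map_congr ?_
    have hac : gm d ≪ volume := withDensity_absolutelyContinuous _ _
    filter_upwards [hac.ae_le (ae_ne_zero_pi (ι := Fin d))] with x hx
    have hx : ssq x ≠ 0 := fun h => hx (ssq_eq_zero h)
    simp only [Function.comp, nv, ssq_orth hD, if_neg hx, Matrix.mulVec_smul]

lemma integral_uniform {Ω : Type*} [MeasurableSpace Ω] {P : Measure Ω} [IsProbabilityMeasure P]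
    {d : ℕ} [NeZero d] {U : Ω → Fin d → ℝ} (hU : IsUniformOnSphere P U) (b : Fin d → ℝ)
    {f : ℝ → ℝ} (hf : Measurable f) :
    ∫ v, f (∑ i, b i * v i ^ 2) ∂(P.map U) = Real.pi ^ (-((d : ℝ) / 2)) *
      ∫ x : Fin d → ℝ, f ((∑ i, b i * x i ^ 2) / ssq x) * Real.exp (-(ssq x)) := by
  have := gm_prob d
  have hm : Measurable fun v : Fin d → ℝ => f (∑ i, b i * v i ^ 2) := hf.comp (by fun_prop)
  rw [uniform_unique hU (nv_uniform d), integral_map (nv_uniform d).1.aemeasurable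
    hm.aestronglyMeasurable, gm,
    integral_withDensity_eq_integral_toReal_smul gw_meas.ennreal_ofReal
      (Eventually.of_forall fun x => ENNReal.ofReal_lt_top), ← integral_const_mul]
  refine integral_congr_ae ?_
  filter_upwards [ae_ne_zero_pi (ι := Fin d)] with x hx
  have hx : ssq x ≠ 0 := fun h => hx (ssq_eq_zero h)
  have hx2 : 0 < ssq x := lt_of_le_of_ne (ssq_nonneg _) (Ne.symm hx)
  rw [ENNReal.toReal_ofReal (gw_nonneg _)]
  have : ∑ i, b i * nv x i ^ 2 = (∑ i, b i * x i ^ 2) / ssq x := by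
    rw [Finset.sum_div]
    refine Finset.sum_congr rfl fun i _ => ?_
    simp only [nv, if_neg hx, Pi.smul_apply, smul_eq_mul, mul_pow, inv_pow, Real.sq_sqrt hx2.le]
    field_simp
  simp only [gw, this, smul_eq_mul]
  ring

lemma spectral_aux {d : ℕ} (A : Matrix (Fin d) (Fin d) ℝ) (hH : (A * Aᵀ).IsHermitian) :
    ∃ O : Matrix (Fin d) (Fin d) ℝ, O * Oᵀ = 1 ∧
      ∀ v, ssq (A.mulVec (O.mulVec v)) = ∑ i, hH.eigenvalues i * v i ^ 2 := by
  have hH' : (Aᵀ * A).IsHermitian := by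
    simpa using Matrix.isHermitian_conjTranspose_mul_self A
  have he : hH.eigenvalues = hH'.eigenvalues :=
    (Matrix.IsHermitian.eigenvalues_eq_eigenvalues_iff hH hH').2 (Matrix.charpoly_mul_comm _ _)
  let O : Matrix (Fin d) (Fin d) ℝ := (hH'.eigenvectorUnitary : Matrix (Fin d) (Fin d) ℝ)
  have hstar : star O = Oᵀ := by
    rw [Matrix.star_eq_conjTranspose, Matrix.conjTranspose_eq_transpose_of_trivial]
  have hO : O * Oᵀ = 1 := by
    rw [← hstar]; exact Unitary.mul_star_self_of_mem hH'.eigenvectorUnitary.2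
  have hO' : Oᵀ * O = 1 := mul_eq_one_comm.1 hO
  refine ⟨O, hO, fun v => ?_⟩
  have hsp := hH'.spectral_theorem
  rw [Unitary.conjStarAlgAut_apply] at hsp
  have hsp2 : Aᵀ * A = O * Matrix.diagonal hH'.eigenvalues * Oᵀ := by
    rw [← hstar]; exact hsp
  have h3 : Oᵀ * (Aᵀ * A) * O = Matrix.diagonal hH'.eigenvalues := by
    calc _ = Oᵀ * (O * Matrix.diagonal hH'.eigenvalues * Oᵀ) * O :=
          congrArg (fun M => Oᵀ * M * O) hsp2
      _ = (Oᵀ * O) * Matrix.diagonal hH'.eigenvalues * (Oᵀ * O) := by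
          simp only [Matrix.mul_assoc]
      _ = _ := by rw [hO', one_mul, mul_one]
  rw [ssq_eq_dot, Matrix.mulVec_mulVec, Matrix.dotProduct_mulVec, ← Matrix.mulVec_transpose,
    Matrix.mulVec_mulVec, Matrix.transpose_mul,
    show Oᵀ * Aᵀ * (A * O) = Oᵀ * (Aᵀ * A) * O by simp only [Matrix.mul_assoc], h3, he]
  simp only [dotProduct, Matrix.mulVec_diagonal]
  refine Finset.sum_congr rfl fun i _ => ?_
  ring

lemma fiber {Ω : Type*} [MeasurableSpace Ω] (P : Measure Ω) [IsProbabilityMeasure P]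
    {R : Ω → ℝ} {T : ℝ → ℝ}
    (hT : ∀ x, T x = (P {ω | x < R ω}).toReal) {l u q : ℝ} (hl : 0 < l) (hu : u < 1) :
    P {ω | (1 - u) * l < R ω * (l * Real.sqrt (1 - q))} = ENNReal.ofReal (hh T u q) := by
  unfold hh
  split_ifs with h
  · rw [hT, ENNReal.ofReal_toReal (measure_ne_top _ _)]
    congr 1
    ext ω
    have hs : 0 < Real.sqrt (1 - q) := Real.sqrt_pos.2 (by linarith)
    simp only [Set.mem_ofPred_eq]
    rw [div_lt_iff₀ hs, show R ω * (l * Real.sqrt (1 - q)) = (R ω * Real.sqrt (1 - q)) * l by ring,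
      mul_lt_mul_iff_left₀ hl]
  · rw [Real.sqrt_eq_zero_of_nonpos (by linarith)]
    have : ¬ ((1 - u) * l < 0) := by
      have : 0 < 1 - u := by linarith
      have : 0 < (1 - u) * l := by positivity
      linarith
    simp [this]

lemma prob_rep {Ω : Type*} [MeasurableSpace Ω] (P : Measure Ω) [IsProbabilityMeasure P]
    {d : ℕ} [NeZero d] (A : Matrix (Fin d) (Fin d) ℝ) {R : Ω → ℝ} {U : Ω → Fin d → ℝ}
    (hRmeas : Measurable R) (hRpos : ∀ ω, 0 < R ω) (hU : IsUniformOnSphere P U)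
    (hInd : IndepFun R U P) (hH : (A * Aᵀ).IsHermitian) {l : ℝ} (hl : 0 < l)
    {T : ℝ → ℝ} (hT : ∀ x, T x = (P {ω | x < R ω}).toReal) (hTa : Antitone T)
    {u : ℝ} (hu1 : u < 1) :
    (P {ω | eNorm (A.mulVec (R ω • U ω)) > (1 - u) * Real.sqrt l}).toReal =
      ∫ v, hh T u (∑ i, (1 - hH.eigenvalues i / l) * v i ^ 2) ∂(P.map U) := by
  obtain ⟨O, hO, hOA⟩ := spectral_aux A hH
  have hprod := (indepFun_iff_map_prod_eq_prod_map_map hRmeas.aemeasurable hU.1.aemeasurable).1 hInd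
  have : IsProbabilityMeasure (P.map U) := Measure.isProbabilityMeasure_map hU.1.aemeasurable
  have : IsProbabilityMeasure (P.map R) := Measure.isProbabilityMeasure_map hRmeas.aemeasurable
  let s : Set (ℝ × (Fin d → ℝ)) := {z | (1 - u) * Real.sqrt l < eNorm (A.mulVec (z.1 • z.2))}
  have hs : MeasurableSet s := by
    refine measurableSet_lt measurable_const (Continuous.measurable ?_)
    have h1 : Continuous fun z : ℝ × (Fin d → ℝ) => A.mulVec (z.1 • z.2) :=
      (mulVec_cont A).comp (by fun_prop)
    exact Real.continuous_sqrt.comp (ssq_cont.comp h1)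
  have h1 : P {ω | eNorm (A.mulVec (R ω • U ω)) > (1 - u) * Real.sqrt l} =
      ∫⁻ v, (P.map R) ((fun r => (r, v)) ⁻¹' s) ∂(P.map U) := by
    rw [← Measure.prod_apply_symm hs, ← hprod, Measure.map_apply (hRmeas.prodMk hU.1) hs]
    rfl
  have hmeas : Measurable fun v => (P.map R) ((fun r => (r, v)) ⁻¹' s) :=
    measurable_measure_prodMk_right hs
  have h2 : ∫⁻ v, (P.map R) ((fun r => (r, v)) ⁻¹' s) ∂(P.map U) =
      ∫⁻ v, ENNReal.ofReal (hh T u (∑ i, (1 - hH.eigenvalues i / l) * v i ^ 2)) ∂(P.map U) := by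
    conv_lhs => rw [← map_mulVec hU hO]
    rw [lintegral_map hmeas (mulVec_cont O).measurable]
    refine lintegral_congr_ae ?_
    filter_upwards [uniform_ae hU] with v hv
    rw [Measure.map_apply hRmeas (hs.preimage (by fun_prop)),
      ← fiber P hT (Real.sqrt_pos.2 hl) hu1]
    congr 1
    ext ω
    have e1 : eNorm (A.mulVec (R ω • O.mulVec v)) = R ω * (Real.sqrt l *
        Real.sqrt (1 - ∑ i, (1 - hH.eigenvalues i / l) * v i ^ 2)) := by
      change Real.sqrt (ssq _) = _
      rw [Matrix.mulVec_smul, ssq_smul, Real.sqrt_mul (sq_nonneg _),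
        Real.sqrt_sq (hRpos ω).le, hOA, ← Real.sqrt_mul hl.le]
      congr 2
      have e2 : ∑ i, (1 - hH.eigenvalues i / l) * v i ^ 2 =
          ssq v - (∑ i, hH.eigenvalues i * v i ^ 2) / l := by
        rw [ssq, Finset.sum_div, ← Finset.sum_sub_distrib]
        refine Finset.sum_congr rfl fun i _ => ?_
        ring
      rw [e2, hv]
      field_simp
      ring
    simp only [Set.mem_preimage, s, Set.mem_ofPred_eq, e1]
  rw [h1, h2, integral_eq_lintegral_of_nonneg_ae]
  · refine Eventually.of_forall fun v => ?_
    simp only [hh, Pi.zero_apply]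
    split_ifs
    · rw [hT]; positivity
    · exact le_rfl
  · exact ((hh_meas hTa u).comp (by fun_prop :
      Measurable fun v : Fin d → ℝ => ∑ i, (1 - hH.eigenvalues i / l) * v i ^ 2)
      ).aestronglyMeasurable

/-- Theorem 3 (Weibull case): tail asymptotics of the norm of an elliptical random vector. -/
theorem norm_elliptical_tail_weibull
    {Ω : Type*} [MeasurableSpace Ω] (P : Measure Ω) [IsProbabilityMeasure P]
    (d : ℕ) [NeZero d] (hd : 2 ≤ d)
    (A : Matrix (Fin d) (Fin d) ℝ)
    (R : Ω → ℝ) (U : Ω → Fin d → ℝ)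
    (hRmeas : Measurable R) (hRpos : ∀ ω, 0 < R ω)
    (hU : IsUniformOnSphere P U)
    (hInd : IndepFun R U P)
    (X : Ω → Fin d → ℝ) (hX : ∀ ω, X ω = A.mulVec (R ω • U ω))
    -- `F` is the distribution function of `R`
    (F : ℝ → ℝ) (hF : ∀ u, F u = (P {ω | R ω ≤ u}).toReal) (hF0 : F 0 = 0)
    -- `lam` enumerates the eigenvalues of `Σ = A Aᵀ` in decreasing order
    (lam : Fin d → ℝ) (hmono : Antitone lam)
    (hlam : ∃ (hH : (A * Aᵀ).IsHermitian) (σ : Equiv.Perm (Fin d)),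
      ∀ i, lam i = hH.eigenvalues (σ i))
    (hlam0 : 0 < lam 0)
    -- `m` is the multiplicity of the largest eigenvalue `lam 0 = λ_(m)`
    (m : ℕ) (hm : m = (Finset.univ.filter fun j => lam j = lam 0).card)
    (Cstar : ℝ)
    (hC : Cstar = ∏ j ∈ Finset.univ.filter (fun j => lam j ≠ lam 0),
      ((1 : ℝ) - lam j / lam 0) ^ (-(1 / 2 : ℝ)))
    -- the upper endpoint of `F` is `1` and `F` is in the max-domain of attraction of `Ψ_γ`
    (hxF : IsLUB {u | F u < 1} 1)
    (γ : ℝ) (hγ : 0 < γ)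
    (hMDA : ∀ x : ℝ, 0 < x →
      Tendsto (fun u => (1 - F (1 - x / u)) / (1 - F (1 - 1 / u))) atTop (𝓝 (x ^ γ)))
 :
    Tendsto (fun u =>
        (P {ω | eNorm (X ω) > (1 - u) * Real.sqrt (lam 0)}).toReal /
          (Cstar * (Real.Gamma (γ + 1) / Real.Gamma (γ + ((d : ℝ) - (m : ℝ) + 2) / 2)) *
            (Real.Gamma ((d : ℝ) / 2) / Real.Gamma ((m : ℝ) / 2)) *
            (2 * u) ^ (((d : ℝ) - (m : ℝ)) / 2) * (1 - F (1 - u))))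
      (𝓝[>] (0 : ℝ)) (𝓝 1) := by
  obtain ⟨hH, σ, hσ⟩ := hlam
  set T : ℝ → ℝ := fun x => 1 - F x with hTdef
  have hT : ∀ x, T x = (P {ω | x < R ω}).toReal := by
    intro x
    have h1 : {ω | x < R ω} = {ω | R ω ≤ x}ᶜ := by ext ω; simp
    have hms : MeasurableSet {ω | R ω ≤ x} := measurableSet_le hRmeas measurable_const
    have h2 := prob_compl_eq_one_sub (μ := P) hms
    rw [h1, h2, ENNReal.toReal_sub_of_le prob_le_one ENNReal.one_ne_top]
    simp only [hTdef, hF, ENNReal.toReal_one]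
  have hTa : Antitone T := by
    intro x y hxy
    rw [hT, hT]
    refine ENNReal.toReal_mono (measure_ne_top _ _) (measure_mono fun ω hω => ?_)
    exact lt_of_le_of_lt hxy hω
  have hT0 : ∀ x, 0 ≤ T x := fun x => by rw [hT]; positivity
  have hTpos : ∀ t, 0 < t → 0 < T (1 - t) := by
    intro t ht
    obtain ⟨v, hv, hv1, _⟩ := hxF.exists_between (show 1 - t < 1 by linarith)
    have hv : F v < 1 := hv
    have h2 := hTa hv1.le
    simp only [hTdef] at h2 ⊢
    linarith
  have hTz : ∀ x, 1 ≤ x → T x = 0 := by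
    have h1 : P {ω | 1 < R ω} = 0 := by
      have hsub : {ω | 1 < R ω} ⊆ ⋃ n : ℕ, {ω | 1 + 1 / ((n : ℝ) + 1) < R ω} := by
        intro ω hω
        have hω : 1 < R ω := hω
        obtain ⟨n, hn⟩ := exists_nat_one_div_lt (sub_pos.2 hω)
        rw [Set.mem_iUnion]
        exact ⟨n, show 1 + 1 / ((n : ℝ) + 1) < R ω by linarith⟩
      refine measure_mono_null hsub (measure_iUnion_null fun n => ?_)
      have hn : 0 < 1 / ((n : ℝ) + 1) := by positivity
      have hF1 : ¬ F (1 + 1 / ((n : ℝ) + 1)) < 1 := fun h => by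
        have := hxF.1 h
        linarith
      have h3 := hT0 (1 + 1 / ((n : ℝ) + 1))
      have h4 : T (1 + 1 / ((n : ℝ) + 1)) = 0 := by
        simp only [hTdef] at h3 ⊢
        linarith
      rw [hT, ENNReal.toReal_eq_zero_iff] at h4
      exact h4.resolve_right (measure_ne_top _ _)
    intro x hx
    refine le_antisymm ?_ (hT0 x)
    refine (hTa hx).trans ?_
    rw [hT, h1]
    simp
  have hM : ∀ x : ℝ, 0 < x →
      Tendsto (fun t => T (1 - t * x) / T (1 - t)) (𝓝[>] 0) (𝓝 (x ^ γ)) := by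
    intro x hx
    refine ((hMDA x hx).comp tendsto_inv_nhdsGT_zero).congr fun t => ?_
    simp only [Function.comp, hTdef, div_inv_eq_mul, one_mul, mul_comm x t]
  -- eigenvalue bookkeeping
  have hle : ∀ i, hH.eigenvalues i ≤ lam 0 := by
    intro i
    have h := hσ (σ.symm i)
    rw [Equiv.apply_symm_apply] at h
    rw [← h]
    exact hmono (Fin.zero_le _)
  let p : Fin d → Prop := fun i => hH.eigenvalues i = lam 0
  classical
  let b : Fin d → ℝ := fun i => 1 - hH.eigenvalues i / lam 0
  have hb : ∀ i, ¬ p i → 0 < b i := by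
    intro i hi
    have h1 : hH.eigenvalues i < lam 0 := lt_of_le_of_ne (hle i) hi
    have h2 : hH.eigenvalues i / lam 0 < 1 := by rwa [div_lt_one hlam0]
    simp only [b]
    linarith
  have hb0 : ∀ i, p i → b i = 0 := by
    intro i hi
    have hi : hH.eigenvalues i = lam 0 := hi
    simp only [b, hi, div_self hlam0.ne', sub_self]
  have : Nonempty {i // p i} := ⟨⟨σ 0, (hσ 0).symm⟩⟩
  have hcm : Fintype.card {i // p i} = m := by
    rw [hm, ← Fintype.card_subtype]
    refine (Fintype.card_congr (σ.subtypeEquiv fun i => ?_)).symm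
    simp only [p, hσ i]
  have hsum : Fintype.card {i // p i} + Fintype.card {i // ¬ p i} = d := by
    have := Fintype.card_subtype_compl p
    have h2 := Fintype.card_subtype_le p
    rw [Fintype.card_fin] at this h2
    omega
  have hck : (Fintype.card {i // ¬ p i} : ℝ) = (d : ℝ) - (m : ℝ) := by
    rw [← hcm, eq_sub_iff_add_eq, add_comm]
    exact_mod_cast hsum
  have hCs : Cstar = ∏ i ∈ Finset.univ.filter (fun i => ¬ p i), b i ^ (-(1 / 2 : ℝ)) := by
    rw [hC, Finset.prod_filter, Finset.prod_filter]
    symm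
    rw [← Equiv.prod_comp σ]
    refine Finset.prod_congr rfl fun i _ => ?_
    simp only [p, b, ← hσ i, ne_eq]
  have hCpos : 0 < Cstar := by
    rw [hCs]
    refine Finset.prod_pos fun i hi => ?_
    have := hb i (by simpa using hi)
    positivity
  have hlim := (lim_integral p b hb hTa hT0 hTz hTpos hγ hM)
  rw [limit_int p hγ, hcm, hck] at hlim
  have hm1 : 0 < m := by rw [← hcm]; exact Fintype.card_pos
  have hmd : (m : ℝ) ≤ d := by
    have : m ≤ d := by omega
    exact_mod_cast this
  have hmR : (0 : ℝ) < m := by exact_mod_cast hm1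
  have hg1 : 0 < Real.Gamma (γ + 1) := Real.Gamma_pos_of_pos (by linarith)
  have hg2 : 0 < Real.Gamma (γ + ((d : ℝ) - (m : ℝ) + 2) / 2) :=
    Real.Gamma_pos_of_pos (by linarith)
  have hg3 : 0 < Real.Gamma ((d : ℝ) / 2) := Real.Gamma_pos_of_pos (by linarith)
  have hg4 : 0 < Real.Gamma ((m : ℝ) / 2) := Real.Gamma_pos_of_pos (by linarith)
  set G : ℝ := (Real.Gamma (γ + 1) / Real.Gamma (γ + ((d : ℝ) - (m : ℝ) + 2) / 2)) *
            (Real.Gamma ((d : ℝ) / 2) / Real.Gamma ((m : ℝ) / 2)) with hG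
  have hGpos : 0 < G := by positivity
  have hpi := Real.pi_pos
  have hlim2 := hlim.mul_const (Real.pi ^ (-((d : ℝ) / 2)) / G)
  have hval : Real.pi ^ ((m : ℝ) / 2) * Real.Gamma (((m : ℝ) + ((d : ℝ) - (m : ℝ))) / 2) /
        Real.Gamma ((m : ℝ) / 2) *
      (Real.Gamma (γ + 1) * Real.pi ^ (((d : ℝ) - (m : ℝ)) / 2) /
        Real.Gamma (γ + 1 + ((d : ℝ) - (m : ℝ)) / 2)) *
      (Real.pi ^ (-((d : ℝ) / 2)) / G) = 1 := by
    have e1 : Real.pi ^ ((m : ℝ) / 2) * Real.pi ^ (((d : ℝ) - (m : ℝ)) / 2) *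
        Real.pi ^ (-((d : ℝ) / 2)) = 1 := by
      rw [← Real.rpow_add hpi, ← Real.rpow_add hpi,
        show (m : ℝ) / 2 + ((d : ℝ) - m) / 2 + -((d : ℝ) / 2) = 0 by ring, Real.rpow_zero]
    rw [show (m : ℝ) + ((d : ℝ) - m) = d by ring,
      show γ + 1 + ((d : ℝ) - (m : ℝ)) / 2 = γ + ((d : ℝ) - (m : ℝ) + 2) / 2 by ring]
    calc _ = (Real.pi ^ ((m : ℝ) / 2) * Real.pi ^ (((d : ℝ) - (m : ℝ)) / 2) *
        Real.pi ^ (-((d : ℝ) / 2))) * (G / G) := by rw [hG]; ring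
      _ = 1 := by rw [e1, div_self hGpos.ne', one_mul]
  rw [hval] at hlim2
  refine hlim2.congr' ?_
  have hpos : ∀ᶠ t : ℝ in 𝓝[>] 0, 0 < t := self_mem_nhdsWithin
  have hid : Tendsto (fun u : ℝ => u) (𝓝[>] 0) (𝓝 0) := tendsto_id.mono_left nhdsWithin_le_nhds
  filter_upwards [hpos, hid.eventually (gt_mem_nhds zero_lt_one)] with u hu hu1
  have hrep := prob_rep P A hRmeas hRpos hU hInd hH hlam0 hT hTa hu1
  simp only [hX]
  rw [hrep, integral_uniform hU (fun i => 1 - hH.eigenvalues i / lam 0) (hh_meas hTa u)]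
  have hcv := change_var p b hb hb0 hTa hu
  rw [hck, ← hCs] at hcv
  rw [hcv]
  have hTu := hTpos u hu
  have hTe : 1 - F (1 - u) = T (1 - u) := rfl
  have hu2 : 0 < (2 * u) ^ (((d : ℝ) - (m : ℝ)) / 2) := by positivity
  have hI : ∫ x : Fin d → ℝ, hh T u (2 * u * yf p x / (zf p x + 2 * u * wf p b x)) /
        T (1 - u) * Real.exp (-(zf p x + 2 * u * wf p b x)) =
      (∫ x : Fin d → ℝ, hh T u (2 * u * yf p x / (zf p x + 2 * u * wf p b x)) *
        Real.exp (-(zf p x + 2 * u * wf p b x))) / T (1 - u) := by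
    rw [← integral_div]
    congr 1
    ext x
    ring
  rw [hI, hTe, mul_assoc Cstar, ← hG]
  field_simp
end
end

section
/- Let X ~ F and Z ~ Beta(a, b) (a, b > 0) be independent random variables with F(0) = 0 and upper endpoint x_F ∈ {1, ∞}, and let Y := X (1 − δZ)^τ with δ ∈ (0, 1] and τ ∈ (0, ∞). If F ∈ MDA(Λ, w) for a positive scaling function w, then P(Y > u) = (1+o(1)) (Γ(a+b)/Γ(b)) · (δτ u w(u))^{−a} · (1 − F(u)) as u ↑ x_F. -/
open MeasureTheory Filter Topology Matrix ProbabilityTheory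

noncomputable section

/-- Standing assumptions on the tail function `G = 1 - F`. -/
structure GumbelTail (G w : ℝ → ℝ) (l : Filter ℝ) : Prop where
  anti : Antitone G
  nonneg : ∀ x, 0 ≤ G x
  le_one : ∀ x, G x ≤ 1
  zero : G 0 = 1
  wpos : ∀ u, 0 < w u
  basis : l.HasBasis (fun U => 0 < G U) (fun U => {u | U < u ∧ 0 < G u})
  nebot : l.NeBot
  mda : ∀ x : ℝ, Tendsto (fun u => G (u + x / w u) / G u) l (𝓝 (Real.exp (-x)))

namespace GumbelTail

variable {G w : ℝ → ℝ} {l : Filter ℝ}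

lemma ev_pos (h : GumbelTail G w l) : ∀ᶠ u in l, 0 < u ∧ 0 < G u := by
  have := h.basis.mem_of_mem (i := 0) (by rw [h.zero]; norm_num)
  exact this

lemma mda' (h : GumbelTail G w l) (x : ℝ → ℝ) (s : ℝ) (hx : Tendsto x l (𝓝 s)) :
    Tendsto (fun u => G (u + x u / w u) / G u) l (𝓝 (Real.exp (-s))) := by
  have hc : Continuous (fun y : ℝ => Real.exp (-y)) := by fun_prop
  rw [tendsto_order]
  constructor
  · intro c hcs
    have h1 : ∀ᶠ y in 𝓝[>] s, c < Real.exp (-y) :=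
      ((hc.tendsto s).eventually (lt_mem_nhds hcs)).filter_mono nhdsWithin_le_nhds
    obtain ⟨y, hy, hys⟩ := (h1.and self_mem_nhdsWithin).exists
    filter_upwards [(h.mda y).eventually (lt_mem_nhds hy), hx.eventually (gt_mem_nhds hys)]
      with u hu1 hu2
    refine hu1.trans_le ?_
    have := h.wpos u
    apply div_le_div_of_nonneg_right _ (h.nonneg u)
    apply h.anti
    gcongr
  · intro c hcs
    have h1 : ∀ᶠ y in 𝓝[<] s, Real.exp (-y) < c :=
      ((hc.tendsto s).eventually (gt_mem_nhds hcs)).filter_mono nhdsWithin_le_nhds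
    obtain ⟨y, hy, hys⟩ := (h1.and self_mem_nhdsWithin).exists
    filter_upwards [(h.mda y).eventually (gt_mem_nhds hy), hx.eventually (lt_mem_nhds hys)]
      with u hu1 hu2
    refine lt_of_le_of_lt ?_ hu1
    have := h.wpos u
    apply div_le_div_of_nonneg_right _ (h.nonneg u)
    apply h.anti
    gcongr

lemma step (h : GumbelTail G w l) :
    ∀ᶠ u in l, 0 < G (u + 1 / w u) ∧ G (u + 1 / w u) ≤ (1/2) * G u := by
  have he : Real.exp (-1) < 1/2 := by
    have := Real.exp_neg_one_lt_half
    linarith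
  filter_upwards [(h.mda 1).eventually (gt_mem_nhds he),
    (h.mda 1).eventually (lt_mem_nhds (Real.exp_pos _)), h.ev_pos] with u h1 h2 h3
  refine ⟨?_, ?_⟩
  · by_contra hn
    have : G (u + 1 / w u) = 0 := le_antisymm (not_lt.1 hn) (h.nonneg _)
    rw [this, zero_div] at h2
    exact lt_irrefl _ h2
  · rw [div_lt_iff₀ h3.2] at h1
    exact h1.le

lemma shift (h : GumbelTail G w l) : Tendsto (fun u => u + 1 / w u) l l := by
  rw [h.basis.tendsto_right_iff]
  intro U hU
  filter_upwards [h.basis.mem_of_mem hU, h.step] with u h1 h2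
  have := h.wpos u
  have : 0 < 1 / w u := by positivity
  exact ⟨by linarith [h1.1], h2.1⟩

lemma wstep (h : GumbelTail G w l) (ε : ℝ) (hε : 0 < ε) :
    ∀ᶠ u in l, 1 / w (u + 1 / w u) ≤ (1 + ε) / w u := by
  have h1 := (h.mda 1).comp h.shift
  have h2 := (h.mda (2 + ε)).div (h.mda 1) (Real.exp_pos _).ne'
  have he : Real.exp (-(2+ε)) / Real.exp (-1) = Real.exp (-(1+ε)) := by
    rw [← Real.exp_sub]; ring_nf
  rw [he] at h2
  have hlt : Real.exp (-(1+ε)) < Real.exp (-1) := Real.exp_lt_exp.2 (by linarith)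
  obtain ⟨m, hm1, hm2⟩ := exists_between hlt
  filter_upwards [h1.eventually (lt_mem_nhds hm2), h2.eventually (gt_mem_nhds hm1), h.ev_pos,
    h.step] with u a1 a2 a3 a4
  by_contra hn
  push Not at hn
  simp only [Function.comp] at a1
  simp only [Pi.div_apply] at a2
  rw [div_div_div_cancel_right₀ a3.2.ne'] at a2
  have : G (u + 1 / w u + 1 / w (u + 1 / w u)) ≤ G (u + (2 + ε) / w u) := by
    apply h.anti
    have : (2 + ε) / w u = 1 / w u + (1 + ε) / w u := by ring
    linarith
  have := div_le_div_of_nonneg_right this a4.1.le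
  linarith

lemma iter (h : GumbelTail G w l) (ε : ℝ) (hε : 0 < ε) :
    ∀ᶠ u in l, ∀ n : ℕ, ∃ y, 0 < G y ∧ y ≤ u + ((1 + ε)^n - 1) / ε / w u ∧
      G y ≤ (1/2)^n * G u := by
  obtain ⟨U, hU, hU2⟩ := h.basis.eventually_iff.1 (h.step.and (h.wstep ε hε))
  filter_upwards [h.basis.mem_of_mem hU] with u hu n
  have : ∃ y, U < y ∧ 0 < G y ∧ y ≤ u + ((1 + ε)^n - 1) / ε / w u ∧
      1 / w y ≤ (1+ε)^n / w u ∧ G y ≤ (1/2)^n * G u := by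
    induction n with
    | zero => exact ⟨u, hu.1, hu.2, by simp, by simp, by simp⟩
    | succ n ih =>
      obtain ⟨y, y1, y2, y3, y4, y5⟩ := ih
      obtain ⟨⟨p1, p2⟩, p3⟩ := hU2 (x := y) ⟨y1, y2⟩
      have hwy := h.wpos y
      have hwy' : 0 < 1 / w y := by positivity
      refine ⟨y + 1 / w y, by linarith, p1, ?_, ?_, ?_⟩
      · have : ((1 + ε)^(n+1) - 1) / ε / w u
          = ((1 + ε)^n - 1) / ε / w u + (1+ε)^n / w u := by
          have := (h.wpos u).ne'
          field_simp
          ring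
        linarith
      · refine p3.trans ?_
        have : (1 + ε) / w y = (1 + ε) * (1 / w y) := by ring
        rw [this]
        have : (1 + ε)^(n+1) / w u = (1 + ε) * ((1+ε)^n / w u) := by ring
        rw [this]
        gcongr
      · refine p2.trans ?_
        rw [pow_succ]
        linarith
  obtain ⟨y, _, y2, y3, _, y5⟩ := this
  exact ⟨y, y2, y3, y5⟩

lemma tend_zero (h : GumbelTail G w l) (ε : ℝ) (hε : 0 < ε) : ∀ᶠ u in l, G u < ε := by
  have := h.nebot
  obtain ⟨u, hu⟩ := (h.iter 1 one_pos).exists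
  obtain ⟨n, hn⟩ := exists_pow_lt_of_lt_one hε (by norm_num : (1/2 : ℝ) < 1)
  obtain ⟨y, y1, _, y3⟩ := hu n
  filter_upwards [h.basis.mem_of_mem y1] with x hx
  have h1 : G x ≤ G y := h.anti hx.1.le
  have h2 : (1/2 : ℝ)^n * G u ≤ (1/2 : ℝ)^n * 1 := by
    gcongr
    exact h.le_one u
  linarith

lemma uw (h : GumbelTail G w l) : Tendsto (fun u => u * w u) l atTop := by
  rw [tendsto_atTop]
  intro M
  have h1 := (h.mda (-M)).eventually (gt_mem_nhds (lt_add_one (Real.exp (-(-M)))))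
  filter_upwards [h1, h.ev_pos, h.tend_zero (1 / (Real.exp (-(-M)) + 1)) (by positivity)]
    with u a1 a2 a3
  by_contra hn
  push Not at hn
  have hwu := h.wpos u
  have h0 : u + -M / w u ≤ 0 := by
    rw [neg_div]
    have : u ≤ M / w u := by rw [le_div_iff₀ hwu]; exact hn.le
    linarith
  have h2 : 1 ≤ G (u + -M / w u) := by
    rw [← h.zero]; exact h.anti h0
  rw [div_lt_iff₀ a2.2] at a1
  rw [lt_div_iff₀ (by positivity)] at a3
  nlinarith

lemma potter (h : GumbelTail G w l) (p : ℝ) (hp : 0 < p) :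
    ∃ ε : ℝ, 0 < ε ∧ ∀ᶠ u in l, ∀ s : ℝ, 0 ≤ s →
      G (u + s / w u) / G u ≤ 2 * (1 + ε * s) ^ (-p) := by
  have hc : Tendsto (fun e : ℝ => (1 + e) ^ p) (𝓝[>] 0) (𝓝 1) := by
    have : ContinuousAt (fun e : ℝ => (1 + e) ^ p) 0 := by
      apply ContinuousAt.rpow_const (by fun_prop)
      right; exact hp.le
    have := this.tendsto
    simp at this
    exact this.mono_left nhdsWithin_le_nhds
  obtain ⟨ε, hε2, hε⟩ := ((hc.eventually (gt_mem_nhds (by norm_num : (1:ℝ) < 2))).and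
    self_mem_nhdsWithin).exists
  have hε : 0 < ε := hε
  refine ⟨ε, hε, ?_⟩
  filter_upwards [h.iter ε hε, h.ev_pos] with u hu hu2 s hs
  obtain ⟨n, n1, n2⟩ := exists_nat_pow_near (x := 1 + ε * s) (y := 1 + ε)
    (by nlinarith) (by linarith)
  obtain ⟨y, y1, y2, y3⟩ := hu n
  have hwu := h.wpos u
  have hle : G (u + s / w u) ≤ G y := by
    apply h.anti
    refine y2.trans ?_
    gcongr
    rw [div_le_iff₀ hε]
    linarith
  rw [div_le_iff₀ hu2.2]
  refine (hle.trans y3).trans ?_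
  refine mul_le_mul_of_nonneg_right ?_ hu2.2.le
  have hpos : 0 < 1 + ε * s := by positivity
  rw [Real.rpow_neg hpos.le, ← div_eq_mul_inv, le_div_iff₀ (by positivity)]
  have e1 : (1 + ε * s) ^ p ≤ ((1 + ε)^(n+1)) ^ p := by
    apply Real.rpow_le_rpow hpos.le n2.le hp.le
  have e2 : ((1 + ε)^(n+1)) ^ p = ((1 + ε)^p)^(n+1) := by
    rw [← Real.rpow_natCast, ← Real.rpow_natCast, ← Real.rpow_mul (by positivity),
      ← Real.rpow_mul (by positivity), mul_comm]
  have e3 : ((1 + ε)^p)^(n+1) ≤ 2^(n+1) := by gcongr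
  calc (1/2 : ℝ)^n * (1 + ε * s) ^ p ≤ (1/2 : ℝ)^n * 2^(n+1) := by
        gcongr; rw [e2] at e1; exact e1.trans e3
    _ = 2 := by rw [pow_succ, ← mul_assoc, ← mul_pow]; norm_num

end GumbelTail
lemma one_add_le_rpow_neg {y τ : ℝ} (hy : y < 1) (hτ : 0 < τ) :
    1 + τ * y ≤ (1 - y) ^ (-τ) := by
  have h1 : 0 < 1 - y := by linarith
  rw [Real.rpow_def_of_pos h1]
  have h2 := Real.log_le_sub_one_of_pos h1
  have h3 := Real.add_one_le_exp (Real.log (1 - y) * -τ)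
  nlinarith

lemma integrable_bound (a ε : ℝ) (ha : 0 < a) (hε : 0 < ε) :
    IntegrableOn (fun s : ℝ => (1 + ε * s) ^ (-(a+1)) * s ^ (a - 1)) (Set.Ioi 0) := by
  have hm : Measurable (fun s : ℝ => (1 + ε * s) ^ (-(a+1)) * s ^ (a - 1)) := by fun_prop
  rw [← Set.Ioc_union_Ioi_eq_Ioi (zero_le_one (α := ℝ))]
  apply IntegrableOn.union
  · have h1 : IntegrableOn (fun s : ℝ => s ^ (a - 1)) (Set.Ioc 0 1) := by
      rw [← intervalIntegrable_iff_integrableOn_Ioc_of_le zero_le_one]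
      exact intervalIntegral.intervalIntegrable_rpow' (by linarith)
    refine Integrable.mono' h1 hm.aestronglyMeasurable ?_
    refine (ae_restrict_iff' measurableSet_Ioc).2 (ae_of_all _ fun s hs => ?_)
    have hs0 := hs.1
    have : (1 + ε * s) ^ (-(a+1)) ≤ 1 :=
      Real.rpow_le_one_of_one_le_of_nonpos (by nlinarith) (by linarith)
    rw [Real.norm_of_nonneg (by positivity)]
    have h2 : 0 ≤ s ^ (a - 1) := by positivity
    nlinarith
  · have h1 : IntegrableOn (fun s : ℝ => ε ^ (-(a+1)) * s ^ (-2 : ℝ)) (Set.Ioi 1) :=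
      (integrableOn_Ioi_rpow_of_lt (by norm_num) zero_lt_one).const_mul _
    refine Integrable.mono' h1 hm.aestronglyMeasurable ?_
    refine (ae_restrict_iff' measurableSet_Ioi).2 (ae_of_all _ fun s hs => ?_)
    have hs0 : 0 < s := lt_trans zero_lt_one hs
    have : (1 + ε * s) ^ (-(a+1)) ≤ (ε * s) ^ (-(a+1)) :=
      Real.rpow_le_rpow_of_nonpos (by positivity) (by linarith) (by linarith)
    rw [Real.norm_of_nonneg (by positivity)]
    have h2 : 0 ≤ s ^ (a - 1) := by positivity
    calc _ ≤ (ε * s) ^ (-(a+1)) * s ^ (a - 1) := by gcongr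
      _ = _ := by
        rw [Real.mul_rpow hε.le hs0.le, mul_assoc, ← Real.rpow_add hs0]
        ring_nf

lemma betaPDF_nonneg (a b : ℝ) (ha : 0 < a) (hb : 0 < b) (z : ℝ) : 0 ≤ _root_.betaPDF a b z := by
  unfold _root_.betaPDF
  split_ifs with h
  · have h1 := h.1
    have h2 : 0 < 1 - z := by linarith [h.2]
    have := Real.Gamma_pos_of_pos ha
    have := Real.Gamma_pos_of_pos hb
    have := Real.Gamma_pos_of_pos (add_pos ha hb)
    positivity
  · exact le_rfl

lemma betaPDF_meas (a b : ℝ) : Measurable (_root_.betaPDF a b) := by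
  unfold _root_.betaPDF
  apply Measurable.ite
  · exact (measurableSet_lt measurable_const measurable_id).inter
      (measurableSet_lt measurable_id measurable_const)
  · fun_prop
  · fun_prop

namespace GumbelTail

variable {G w : ℝ → ℝ} {l : Filter ℝ}

lemma integrable_phi (h : GumbelTail G w l) (a b δ τ : ℝ) (hB : Integrable (_root_.betaPDF a b)) (u : ℝ) :
    Integrable (fun z => _root_.betaPDF a b z * G (u * (1 - δ * z) ^ (-τ))) := by
  refine hB.mul_bdd (c := 1) ?_ (ae_of_all _ fun z => ?_)
  · exact (h.anti.measurable.comp (by fun_prop)).aestronglyMeasurable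
  · rw [Real.norm_of_nonneg (h.nonneg _)]
    exact h.le_one _

/-- rescaled integrand -/
def Phi (G w : ℝ → ℝ) (a b δ τ u s : ℝ) : ℝ :=
  (δ * τ * u * w u) ^ (a - 1) *
    (Set.Iio (1/2)).indicator (fun z => _root_.betaPDF a b z * G (u * (1 - δ * z) ^ (-τ)))
      ((δ * τ * u * w u)⁻¹ * s) / G u

lemma Phi_eq (G w : ℝ → ℝ) (a b δ τ u s : ℝ) (hs : 0 < s) (hv : 0 < δ * τ * u * w u)
    (hsv : (δ * τ * u * w u)⁻¹ * s < 1/2) :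
    Phi G w a b δ τ u s = (Real.Gamma (a + b) / (Real.Gamma a * Real.Gamma b)) * s ^ (a - 1) *
      (1 - (δ * τ * u * w u)⁻¹ * s) ^ (b - 1) *
      (G (u * (1 - δ * ((δ * τ * u * w u)⁻¹ * s)) ^ (-τ)) / G u) := by
  unfold Phi
  set v := δ * τ * u * w u
  rw [Set.indicator_of_mem (by exact hsv)]
  unfold _root_.betaPDF
  rw [if_pos ⟨by positivity, by linarith⟩, Real.mul_rpow (by positivity) hs.le,
    Real.inv_rpow hv.le]
  have : v ^ (a - 1) ≠ 0 := by positivity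
  field_simp

lemma Phi_of_nonpos (G w : ℝ → ℝ) (a b δ τ u s : ℝ) (hs : s ≤ 0) (hv : 0 < δ * τ * u * w u) :
    Phi G w a b δ τ u s = 0 := by
  unfold Phi
  have h0 : (δ * τ * u * w u)⁻¹ * s ≤ 0 := mul_nonpos_of_nonneg_of_nonpos (by positivity) hs
  rw [Set.indicator_of_mem (by simp only [Set.mem_Iio]; linarith)]
  unfold _root_.betaPDF
  rw [if_neg (by intro h; linarith [h.1])]
  simp

lemma Phi_of_large (G w : ℝ → ℝ) (a b δ τ u s : ℝ)
    (hsv : ¬ (δ * τ * u * w u)⁻¹ * s < 1/2) :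
    Phi G w a b δ τ u s = 0 := by
  unfold Phi
  rw [Set.indicator_of_notMem (by exact hsv)]
  simp

lemma v_atTop (h : GumbelTail G w l) (δ τ : ℝ) (hδ0 : 0 < δ) (hτ : 0 < τ) :
    Tendsto (fun u => δ * τ * u * w u) l atTop := by
  have := h.uw.const_mul_atTop (mul_pos hδ0 hτ)
  refine this.congr fun u => by ring

/-- monotone comparison -/
lemma G_le (h : GumbelTail G w l) (δ τ : ℝ) (hδ0 : 0 < δ) (hδ1 : δ ≤ 1) (hτ : 0 < τ)
    (u z : ℝ) (hu : 0 < u) (hz : z < 1) (hz0 : 0 < z) :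
    G (u * (1 - δ * z) ^ (-τ)) ≤ G (u + (δ * τ * u * w u * z) / w u) := by
  apply h.anti
  have hwu := h.wpos u
  have h1 := one_add_le_rpow_neg (y := δ * z) (by nlinarith) hτ
  have : δ * τ * u * w u * z / w u = u * (τ * (δ * z)) := by field_simp
  rw [this]
  nlinarith

lemma lim_Phi (h : GumbelTail G w l) (a b δ τ : ℝ) (hδ0 : 0 < δ)
    (hτ : 0 < τ) (s : ℝ) (hs : 0 < s) :
    Tendsto (fun u => Phi G w a b δ τ u s) l
      (𝓝 ((Real.Gamma (a + b) / (Real.Gamma a * Real.Gamma b)) * s ^ (a - 1) *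
        Real.exp (-s))) := by
  have hv := h.v_atTop δ τ hδ0 hτ
  have ht : Tendsto (fun u => (δ * τ * u * w u)⁻¹ * s) l (𝓝 0) := by
    have := (tendsto_inv_atTop_zero.comp hv).mul_const s
    simpa using this
  have e1 : Tendsto (fun u => (1 - (δ * τ * u * w u)⁻¹ * s) ^ (b - 1)) l (𝓝 1) := by
    have := ((tendsto_const_nhds (x := (1:ℝ))).sub ht).rpow_const (p := b - 1) (Or.inl (by simp))
    simpa using this
  have e2 : Tendsto (fun u => w u * (u * (1 - δ * ((δ * τ * u * w u)⁻¹ * s)) ^ (-τ) - u)) l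
      (𝓝 s) := by
    have hd : HasDerivAt (fun t : ℝ => (1 - δ * t) ^ (-τ)) (δ * τ) 0 := by
      have h1 : HasDerivAt (fun t : ℝ => 1 - δ * t) (-δ) 0 := by
        simpa using ((hasDerivAt_id (0:ℝ)).const_mul δ).const_sub 1
      have h2 := h1.rpow_const (p := -τ) (by simp)
      simpa using h2
    have h3 := hd.tendsto_slope
    have h4 : Tendsto (fun u => (δ * τ * u * w u)⁻¹ * s) l (𝓝[≠] 0) := by
      rw [tendsto_nhdsWithin_iff]
      refine ⟨ht, ?_⟩
      filter_upwards [hv.eventually_gt_atTop 0] with u hu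
      have : 0 < (δ * τ * u * w u)⁻¹ * s := by positivity
      exact this.ne'
    have h5 := ((h3.comp h4).mul_const s).mul_const (δ * τ)⁻¹
    have : δ * τ * s * (δ * τ)⁻¹ = s := by field_simp
    rw [this] at h5
    refine h5.congr' ?_
    filter_upwards [h.ev_pos] with u hu
    have hu0 := hu.1
    have hwu := h.wpos u
    simp only [Function.comp, slope_def_field]
    simp only [mul_zero, sub_zero, Real.one_rpow]
    field_simp
  have e3 := h.mda' _ s e2
  have e4 := ((e1.const_mul
    ((Real.Gamma (a + b) / (Real.Gamma a * Real.Gamma b)) * s ^ (a - 1))).mul e3)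
  rw [mul_one] at e4
  refine e4.congr' ?_
  filter_upwards [hv.eventually_gt_atTop 0, ht.eventually (gt_mem_nhds
    (by norm_num : (0:ℝ) < 1/2))] with u h1 h2
  rw [Phi_eq G w a b δ τ u s hs h1 h2]
  congr 4
  have := (h.wpos u).ne'
  field_simp
  ring

lemma bound_Phi (h : GumbelTail G w l) (a b δ τ : ℝ) (ha : 0 < a) (hb : 0 < b) (hδ0 : 0 < δ)
    (hδ1 : δ ≤ 1) (hτ : 0 < τ) :
    ∃ ε K : ℝ, 0 < ε ∧ ∀ᶠ u in l, ∀ s, ‖Phi G w a b δ τ u s‖ ≤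
      (Set.Ioi 0).indicator (fun s : ℝ => K * ((1 + ε * s) ^ (-(a+1)) * s ^ (a - 1))) s := by
  obtain ⟨ε, hε, hP⟩ := h.potter (a + 1) (by linarith)
  set c := Real.Gamma (a + b) / (Real.Gamma a * Real.Gamma b) with hc
  have hc0 : 0 < c := by
    have := Real.Gamma_pos_of_pos ha
    have := Real.Gamma_pos_of_pos hb
    have := Real.Gamma_pos_of_pos (add_pos ha hb)
    positivity
  refine ⟨ε, c * (1 + (1/2)^(b-1)) * 2, hε, ?_⟩
  filter_upwards [hP, h.ev_pos] with u hu hu2 s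
  have hu0 := hu2.1
  have hwu := h.wpos u
  have hv : 0 < δ * τ * u * w u := by positivity
  by_cases hs : 0 < s
  · rw [Set.indicator_of_mem (by exact hs)]
    by_cases hsv : (δ * τ * u * w u)⁻¹ * s < 1/2
    · rw [Phi_eq G w a b δ τ u s hs hv hsv, ← hc]
      have hx0 : 0 < (δ * τ * u * w u)⁻¹ * s := by positivity
      have g1 := h.G_le δ τ hδ0 hδ1 hτ u ((δ * τ * u * w u)⁻¹ * s) hu0 (by linarith) hx0
      rw [mul_inv_cancel_left₀ hv.ne'] at g1
      have g2 := (div_le_div_of_nonneg_right g1 hu2.2.le).trans (hu s hs.le)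
      have g3 : (1 - (δ * τ * u * w u)⁻¹ * s) ^ (b - 1) ≤ 1 + (1/2)^(b-1) := by
        rcases le_total 1 b with hb1 | hb1
        · have : (1 - (δ * τ * u * w u)⁻¹ * s) ^ (b - 1) ≤ 1 :=
            Real.rpow_le_one (by linarith) (by linarith) (by linarith)
          have : (0:ℝ) ≤ (1/2)^(b-1) := by positivity
          linarith
        · have : (1 - (δ * τ * u * w u)⁻¹ * s) ^ (b - 1) ≤ (1/2)^(b-1) :=
            Real.rpow_le_rpow_of_nonpos (by norm_num) (by linarith) (by linarith)
          linarith
      have hn1 : 0 ≤ (1 - (δ * τ * u * w u)⁻¹ * s) ^ (b - 1) :=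
        Real.rpow_nonneg (by linarith) _
      have hn2 := div_nonneg (h.nonneg (u * (1 - δ * ((δ * τ * u * w u)⁻¹ * s)) ^ (-τ))) hu2.2.le
      rw [Real.norm_of_nonneg (by positivity)]
      calc _ ≤ c * s ^ (a - 1) * (1 + (1/2)^(b-1)) * (2 * (1 + ε * s) ^ (-(a+1))) := by
            gcongr
        _ = _ := by ring
    · rw [Phi_of_large G w a b δ τ u s hsv, norm_zero]
      positivity
  · rw [Phi_of_nonpos G w a b δ τ u s (not_lt.1 hs) hv, norm_zero,
      Set.indicator_of_notMem (by exact hs)]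

lemma lim_int_Phi (h : GumbelTail G w l) [l.IsCountablyGenerated] (a b δ τ : ℝ) (ha : 0 < a)
    (hb : 0 < b) (hδ0 : 0 < δ) (hδ1 : δ ≤ 1) (hτ : 0 < τ) :
    Tendsto (fun u => ∫ s, Phi G w a b δ τ u s) l
      (𝓝 (Real.Gamma (a + b) / Real.Gamma b)) := by
  obtain ⟨ε, K, hε, hK⟩ := h.bound_Phi a b δ τ ha hb hδ0 hδ1 hτ
  have key := tendsto_integral_filter_of_dominated_convergence (μ := volume) (l := l)
    (F := fun u s => Phi G w a b δ τ u s)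
    (f := (Set.Ioi 0).indicator (fun s => (Real.Gamma (a + b) / (Real.Gamma a * Real.Gamma b))
      * s ^ (a - 1) * Real.exp (-s))) _ ?_ (hK.mono fun u hu => ae_of_all _ hu) ?_ ?_
  · convert key using 2
    rw [integral_indicator measurableSet_Ioi]
    simp_rw [mul_assoc]
    rw [integral_const_mul]
    simp_rw [mul_comm _ (Real.exp _)]
    rw [← Real.Gamma_eq_integral ha]
    have := Real.Gamma_pos_of_pos ha
    have := Real.Gamma_pos_of_pos hb
    field_simp
  · refine Eventually.of_forall fun u => Measurable.aestronglyMeasurable ?_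
    unfold Phi
    have h1 : Measurable (fun z => _root_.betaPDF a b z * G (u * (1 - δ * z) ^ (-τ))) :=
      (betaPDF_meas a b).mul (h.anti.measurable.comp (by fun_prop))
    have h2 := (h1.indicator (measurableSet_Iio (a := (1/2:ℝ)))).comp
      (measurable_const_mul ((δ * τ * u * w u)⁻¹))
    exact (h2.const_mul _).div_const _
  · rw [integrable_indicator_iff measurableSet_Ioi]
    exact (integrable_bound a ε ha hε).const_mul K
  · refine ae_of_all _ fun s => ?_
    by_cases hs : 0 < s
    · rw [Set.indicator_of_mem (by exact hs)]
      exact h.lim_Phi a b δ τ hδ0 hτ s hs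
    · rw [Set.indicator_of_notMem (by exact hs)]
      refine tendsto_const_nhds.congr' ?_
      filter_upwards [(h.v_atTop δ τ hδ0 hτ).eventually_gt_atTop 0] with u hu
      rw [Phi_of_nonpos G w a b δ τ u s (not_lt.1 hs) hu]

lemma int_Phi (a b δ τ u : ℝ) (hv : 0 < δ * τ * u * w u) :
    ∫ s, Phi G w a b δ τ u s = (∫ z in Set.Iio (1/2),
      _root_.betaPDF a b z * G (u * (1 - δ * z) ^ (-τ))) * (δ * τ * u * w u) ^ a / G u := by
  unfold Phi
  rw [integral_div, integral_const_mul, Measure.integral_comp_mul_left,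
    integral_indicator measurableSet_Iio, inv_inv, abs_of_pos hv, smul_eq_mul, ← mul_assoc,
    Real.rpow_sub_one hv.ne', div_mul_cancel₀ _ hv.ne', mul_comm ((δ * τ * u * w u) ^ a)]

lemma tail_part (h : GumbelTail G w l) (a b δ τ : ℝ) (ha : 0 < a) (hb : 0 < b) (hδ0 : 0 < δ)
    (hδ1 : δ ≤ 1) (hτ : 0 < τ) (hB : Integrable (_root_.betaPDF a b)) (hB1 : ∫ z, _root_.betaPDF a b z = 1) :
    Tendsto (fun u => (∫ z in (Set.Iio (1/2))ᶜ,
      _root_.betaPDF a b z * G (u * (1 - δ * z) ^ (-τ))) * (δ * τ * u * w u) ^ a / G u) l (𝓝 0) := by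
  obtain ⟨ε, hε, hP⟩ := h.potter (a + 1) (by linarith)
  have hv := h.v_atTop δ τ hδ0 hτ
  have hlim : Tendsto (fun u => 2 * (ε * (1/2)) ^ (-(a+1)) * (δ * τ * u * w u)⁻¹) l (𝓝 0) := by
    have := (tendsto_inv_atTop_zero.comp hv).const_mul (2 * (ε * (1/2)) ^ (-(a+1)))
    simpa using this
  refine squeeze_zero' ?_ ?_ hlim
  · filter_upwards [hv.eventually_gt_atTop 0] with u hu
    have h1 := h.nonneg u
    have : 0 ≤ ∫ z in (Set.Iio (1/2))ᶜ, _root_.betaPDF a b z * G (u * (1 - δ * z) ^ (-τ)) :=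
      integral_nonneg fun z => mul_nonneg (betaPDF_nonneg a b ha hb z) (h.nonneg _)
    positivity
  · filter_upwards [hv.eventually_gt_atTop 0, hP, h.ev_pos] with u hu hu2 hu3
    set v := δ * τ * u * w u with hvdef
    have hwu := h.wpos u
    have h1 : ∫ z in (Set.Iio (1/2))ᶜ, _root_.betaPDF a b z * G (u * (1 - δ * z) ^ (-τ))
        ≤ G (u + (v * (1/2)) / w u) := by
      have : ∫ z in (Set.Iio (1/2))ᶜ, _root_.betaPDF a b z * G (u * (1 - δ * z) ^ (-τ))
        ≤ ∫ z in (Set.Iio (1/2))ᶜ, _root_.betaPDF a b z * G (u + (v * (1/2)) / w u) := by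
        refine setIntegral_mono_on (h.integrable_phi a b δ τ hB u).integrableOn
          (hB.mul_const _).integrableOn measurableSet_Iio.compl ?_
        intro z hz
        have hz : 1/2 ≤ z := by simpa using hz
        by_cases hz1 : z < 1
        · have := betaPDF_nonneg a b ha hb z
          have g1 := h.G_le δ τ hδ0 hδ1 hτ u z hu3.1 hz1 (by linarith)
          refine mul_le_mul_of_nonneg_left (g1.trans (h.anti ?_)) this
          gcongr
        · unfold _root_.betaPDF
          rw [if_neg (by intro h; exact hz1 h.2)]
          simp
      refine this.trans ?_
      rw [integral_mul_const]
      have h2 : ∫ z in (Set.Iio (1/2))ᶜ, _root_.betaPDF a b z ≤ 1 := by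
        rw [← hB1]
        exact setIntegral_le_integral hB (ae_of_all _ (betaPDF_nonneg a b ha hb))
      exact mul_le_of_le_one_left (h.nonneg _) h2
    have h2 := hu2 (v * (1/2)) (by positivity)
    have h3 : (1 + ε * (v * (1/2))) ^ (-(a+1)) ≤ (ε * (1/2)) ^ (-(a+1)) * v ^ (-(a+1)) := by
      rw [← Real.mul_rpow (by positivity) hu.le]
      exact Real.rpow_le_rpow_of_nonpos (by positivity) (by nlinarith) (by linarith)
    have h4 : v ^ (-(a+1)) * v ^ a = v⁻¹ := by
      rw [← Real.rpow_add hu, ← Real.rpow_neg_one]; ring_nf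
    have hva : 0 < v ^ a := by positivity
    calc _ ≤ G (u + (v * (1/2)) / w u) * v ^ a / G u := by
          have := hu3.2
          gcongr
      _ = G (u + (v * (1/2)) / w u) / G u * v ^ a := by ring
      _ ≤ 2 * ((ε * (1/2)) ^ (-(a+1)) * v ^ (-(a+1))) * v ^ a := by
          gcongr
          exact h2.trans (by gcongr)
      _ = 2 * (ε * (1/2)) ^ (-(a+1)) * (v ^ (-(a+1)) * v ^ a) := by ring
      _ = _ := by rw [h4]

lemma main_lim (h : GumbelTail G w l) [l.IsCountablyGenerated] (a b δ τ : ℝ) (ha : 0 < a)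
    (hb : 0 < b) (hδ0 : 0 < δ)
    (hδ1 : δ ≤ 1) (hτ : 0 < τ) (hB : Integrable (_root_.betaPDF a b)) (hB1 : ∫ z, _root_.betaPDF a b z = 1) :
    Tendsto (fun u => (∫ z, _root_.betaPDF a b z * G (u * (1 - δ * z) ^ (-τ)))
      * (δ * τ * u * w u) ^ a / G u) l (𝓝 (Real.Gamma (a + b) / Real.Gamma b)) := by
  have h1 := (h.lim_int_Phi a b δ τ ha hb hδ0 hδ1 hτ).add
    (h.tail_part a b δ τ ha hb hδ0 hδ1 hτ hB hB1)
  rw [add_zero] at h1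
  refine h1.congr' ?_
  filter_upwards [(h.v_atTop δ τ hδ0 hτ).eventually_gt_atTop 0] with u hu
  rw [int_Phi a b δ τ u hu, ← integral_add_compl (measurableSet_Iio (a := (1/2:ℝ)))
    (h.integrable_phi a b δ τ hB u)]
  ring

end GumbelTail

lemma prob_eq_integral
    {Ω : Type*} [MeasurableSpace Ω] (P : Measure Ω) [IsProbabilityMeasure P]
    (X Z : Ω → ℝ) (hXmeas : Measurable X) (hZmeas : Measurable Z)
    (hInd : IndepFun X Z P) (G : ℝ → ℝ) (hG : ∀ u, G u = (P {ω | u < X ω}).toReal)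
    (hGa : Antitone G)
    (a b : ℝ) (ha : 0 < a) (hb : 0 < b)
    (hZ : P.map Z = volume.withDensity (fun x => ENNReal.ofReal (_root_.betaPDF a b x)))
    (δ τ : ℝ) (hδ0 : 0 < δ) (hδ1 : δ ≤ 1)
    (Y : Ω → ℝ) (hY : ∀ ω, Y ω = X ω * (1 - δ * Z ω) ^ τ) (u : ℝ) :
    (P {ω | Y ω > u}).toReal =
      ∫ z, _root_.betaPDF a b z * G (u * (1 - δ * z) ^ (-τ)) := by
  have hnn := betaPDF_nonneg a b ha hb
  have hGm : Measurable (fun z => G (u * (1 - δ * z) ^ (-τ))) :=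
    hGa.measurable.comp (by fun_prop)
  rw [integral_eq_lintegral_of_nonneg_ae (ae_of_all _ fun z => mul_nonneg (hnn z)
    (by rw [hG]; exact ENNReal.toReal_nonneg))
    ((betaPDF_meas a b).mul hGm).aestronglyMeasurable]
  congr 1
  have hS : MeasurableSet {q : ℝ × ℝ | u < q.1 * (1 - δ * q.2) ^ τ} :=
    measurableSet_lt measurable_const (by fun_prop)
  have h1 : P {ω | Y ω > u} = (P.map (fun ω => (X ω, Z ω))) {q | u < q.1 * (1 - δ * q.2) ^ τ} := by
    rw [Measure.map_apply (hXmeas.prodMk hZmeas) hS]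
    congr 1
    ext ω
    simp [hY]
  haveI := Measure.isProbabilityMeasure_map (μ := P) hXmeas.aemeasurable
  haveI := Measure.isProbabilityMeasure_map (μ := P) hZmeas.aemeasurable
  rw [h1, (indepFun_iff_map_prod_eq_prod_map_map hXmeas.aemeasurable hZmeas.aemeasurable).1 hInd,
    Measure.prod_apply_symm hS, hZ, lintegral_withDensity_eq_lintegral_mul _
      (betaPDF_meas a b).ennreal_ofReal (measurable_measure_prodMk_right hS)]
  refine lintegral_congr fun z => ?_
  rw [Pi.mul_apply, ENNReal.ofReal_mul (hnn z)]
  by_cases hz : 0 < z ∧ z < 1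
  · congr 1
    rw [hG, ENNReal.ofReal_toReal (measure_ne_top _ _),
      Measure.map_apply hXmeas (measurable_prodMk_right hS)]
    congr 1
    ext ω
    have hpos : 0 < 1 - δ * z := by nlinarith [hz.1, hz.2]
    have hp2 : 0 < (1 - δ * z) ^ τ := by positivity
    simp only [Set.mem_preimage, Set.mem_setOf_eq]
    rw [Real.rpow_neg hpos.le, ← div_eq_mul_inv, div_lt_iff₀ hp2]
  · have : _root_.betaPDF a b z = 0 := by
      unfold _root_.betaPDF
      rw [if_neg hz]
    simp [this]

/-- Theorem 5 a), tail part: asymptotics of `P(Y > u)` for `Y = X(1 - δZ)^τ` with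
`F ∈ MDA(Λ, w)`. -/
theorem product_beta_tail_gumbel
    {Ω : Type*} [MeasurableSpace Ω] (P : Measure Ω) [IsProbabilityMeasure P]
    (X Z : Ω → ℝ)
    (hXmeas : Measurable X) (hZmeas : Measurable Z)
    (hInd : IndepFun X Z P)
    -- `F` is the distribution function of `X`, with `F(0) = 0`
    (F : ℝ → ℝ) (hF : ∀ u, F u = (P {ω | X ω ≤ u}).toReal) (hF0 : F 0 = 0)
    -- `Z ~ Beta(a, b)`
    (a b : ℝ) (ha : 0 < a) (hb : 0 < b)
    (hZ : P.map Z = volume.withDensity (fun x => ENNReal.ofReal (betaPDF a b x)))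
    (δ τ : ℝ) (hδ0 : 0 < δ) (hδ1 : δ ≤ 1) (hτ : 0 < τ)
    (Y : Ω → ℝ) (hY : ∀ ω, Y ω = X ω * (1 - δ * Z ω) ^ τ)
    -- `l` is the filter `u ↑ x_F`, where the upper endpoint `x_F` of `F` is `∞` or `1`
    (l : Filter ℝ)
    (hxF : (l = atTop ∧ ∀ u, F u < 1) ∨ (l = 𝓝[<] (1 : ℝ) ∧ IsLUB {u | F u < 1} 1))
    -- `F ∈ MDA(Λ, w)` with positive scaling function `w`
    (w : ℝ → ℝ) (hw : ∀ u, 0 < w u)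
    (hMDA : ∀ x : ℝ,
      Tendsto (fun u => (1 - F (u + x / w u)) / (1 - F u)) l (𝓝 (Real.exp (-x))))
 :
    Tendsto (fun u =>
        (P {ω | Y ω > u}).toReal /
          ((Real.Gamma (a + b) / Real.Gamma b) * (δ * τ * u * w u) ^ (-a) * (1 - F u)))
      l (𝓝 1) := by
  have hFm : Monotone F := by
    intro x y hxy
    rw [hF, hF]
    apply ENNReal.toReal_mono (measure_ne_top _ _)
    exact measure_mono fun ω (h : X ω ≤ x) => h.trans hxy
  have hF1 : ∀ x, F x ≤ 1 := by
    intro x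
    rw [hF]
    exact ENNReal.toReal_le_of_le_ofReal zero_le_one (by simpa using prob_le_one)
  have hFn : ∀ x, 0 ≤ F x := by
    intro x
    rw [hF]
    exact ENNReal.toReal_nonneg
  set G : ℝ → ℝ := fun x => 1 - F x with hGdef
  have hGP : ∀ u, G u = (P {ω | u < X ω}).toReal := by
    intro u
    have hms : MeasurableSet {ω | X ω ≤ u} := measurableSet_le hXmeas measurable_const
    have : {ω | u < X ω} = {ω | X ω ≤ u}ᶜ := by ext ω; simp
    rw [this, prob_compl_eq_one_sub hms, ENNReal.toReal_sub_of_le prob_le_one (by simp)]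
    simp [hGdef, hF]
  have hcg : l.IsCountablyGenerated := by
    rcases hxF with ⟨rfl, _⟩ | ⟨rfl, _⟩ <;> infer_instance
  have hnb : l.NeBot := by
    rcases hxF with ⟨rfl, _⟩ | ⟨rfl, _⟩ <;> infer_instance
  have hbasis : l.HasBasis (fun U => 0 < G U) (fun U => {u | U < u ∧ 0 < G u}) := by
    rcases hxF with ⟨rfl, h⟩ | ⟨rfl, h⟩
    · have h' : ∀ u, 0 < G u := fun u => by simp only [hGdef]; linarith [h u]
      refine (atTop_basis_Ioi (α := ℝ)).congr (fun u => by simp [h']) fun u _ => ?_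
      ext x
      simp [h']
    · have hlt : ∀ u, u < 1 → F u < 1 := by
        intro u hu
        obtain ⟨y, hy, hy2, _⟩ := h.exists_between hu
        exact (hFm hy2.le).trans_lt hy
      have hX1 : ∀ᵐ ω ∂P, X ω ≤ 1 := by
        have : ∀ᵐ ω ∂P, ∀ n : ℕ, X ω ≤ 1 + 1 / ((n:ℝ) + 1) := by
          rw [ae_all_iff]
          intro n
          have hnp : (0:ℝ) < 1 / ((n:ℝ) + 1) := by positivity
          have h1 : F (1 + 1 / ((n:ℝ) + 1)) = 1 := by
            by_contra hne
            have := h.1 (lt_of_le_of_ne (hF1 _) hne)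
            linarith
          have h2 := hGP (1 + 1 / ((n:ℝ) + 1))
          simp only [hGdef, h1, sub_self] at h2
          have h3 := (ENNReal.toReal_eq_zero_iff _).1 h2.symm
          have h4 : P {ω | 1 + 1 / ((n:ℝ) + 1) < X ω} = 0 :=
            h3.resolve_right (measure_ne_top _ _)
          rw [ae_iff]
          simpa using h4
        filter_upwards [this] with ω hω
        refine ge_of_tendsto' (x := atTop) ?_ hω
        have := (tendsto_one_div_add_atTop_nhds_zero_nat (𝕜 := ℝ)).const_add 1
        simpa using this
      have hG1 : G 1 = 0 := by
        rw [hGP]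
        rw [ae_iff] at hX1
        simp only [not_le] at hX1
        rw [hX1]; rfl
      have hiff : ∀ u, 0 < G u ↔ u < 1 := by
        intro u
        constructor
        · intro hu
          by_contra hn
          have := hFm (not_lt.1 hn)
          simp only [hGdef] at hu hG1
          linarith
        · intro hu
          have := hlt u hu
          simp only [hGdef]; linarith
      refine (nhdsLT_basis (1:ℝ)).congr (fun u => (hiff u).symm) fun u _ => ?_
      ext x
      simp [hiff]
  have hT : GumbelTail G w l :=
    { anti := fun x y hxy => by simp only [hGdef]; linarith [hFm hxy]
      nonneg := fun x => by simp only [hGdef]; linarith [hF1 x]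
      le_one := fun x => by simp only [hGdef]; linarith [hFn x]
      zero := by simp [hGdef, hF0]
      wpos := hw
      basis := hbasis
      nebot := hnb
      mda := hMDA }
  have hl1 : ∫⁻ z, ENNReal.ofReal (_root_.betaPDF a b z) = 1 := by
    haveI := Measure.isProbabilityMeasure_map (μ := P) hZmeas.aemeasurable
    have h1 : (P.map Z) Set.univ = 1 := measure_univ
    rw [hZ, withDensity_apply _ MeasurableSet.univ, Measure.restrict_univ] at h1
    exact h1
  have hnn := betaPDF_nonneg a b ha hb
  have hB : Integrable (_root_.betaPDF a b) := by
    refine ⟨(betaPDF_meas a b).aestronglyMeasurable, ?_⟩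
    rw [hasFiniteIntegral_iff_ofReal (ae_of_all _ hnn), hl1]
    exact ENNReal.one_lt_top
  have hB1 : ∫ z, _root_.betaPDF a b z = 1 := by
    rw [integral_eq_lintegral_of_nonneg_ae (ae_of_all _ hnn)
      (betaPDF_meas a b).aestronglyMeasurable, hl1]
    rfl
  have hC : 0 < Real.Gamma (a + b) / Real.Gamma b :=
    div_pos (Real.Gamma_pos_of_pos (add_pos ha hb)) (Real.Gamma_pos_of_pos hb)
  have key := (hT.main_lim a b δ τ ha hb hδ0 hδ1 hτ hB hB1).div_const
    (Real.Gamma (a + b) / Real.Gamma b)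
  rw [div_self hC.ne'] at key
  refine key.congr' ?_
  filter_upwards [(hT.v_atTop δ τ hδ0 hτ).eventually_gt_atTop 0, hT.ev_pos] with u hu hu2
  rw [prob_eq_integral P X Z hXmeas hZmeas hInd G hGP hT.anti a b ha hb hZ δ τ hδ0 hδ1 Y hY u,
    Real.rpow_neg hu.le]
  have h1 : 0 < (δ * τ * u * w u) ^ a := by positivity
  have h2 : 0 < 1 - F u := hu2.2
  simp only [hGdef]
  generalize (δ * τ * u * w u) ^ a = V at *
  generalize 1 - F u = g at *
  generalize Real.Gamma (a + b) / Real.Gamma b = C at *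
  field_simp
end
end
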